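/- arXiv:0807.3233 — 5 statements merged into one kernel-verified Lean document; each statement's English description precedes it below -/
import Mathlib

section
/- For every real ε > 0 there exists Δ_ε such that the following holds for every integer Δ ≥ Δ_ε. Let H be a finite simple graph with vertex set V and maximum degree at most Δ, in which every edge e with endpoints v and w is assigned a finite list L(e) ⊆ ℤ of colours with |L(e)| = ⌈(3/2 + ε)Δ − (Δ − d(v)) − (Δ − d(w)) − 3Δ^{1/2}⌉. Let J₁ be a graph on the edge set of H with maximum degree at most Δ^{1/2}, and let J₂ be a graph on the edge set of H with maximum degree at most Δ^{1/4}. Suppose that for every set X ⊆ V with |X| odd, ∑_{v∈X}(Δ − d(v)) − e(X, V∖X) ≤ εΔ|X|/10. Then there is a map c assigning to each edge e of H a colour c(e) ∈ L(e) such that any two distinct edges of H sharing an endpoint receive different colours, any two edges joined by an edge of J₁ receive different colours, and any two edges joined by an edge of J₂ receive colours differing by at least Δ^{1/4}. -/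
/-!
The proof is Kahn's semi-random method, in terms of `h = Δ ^ (1 / 8)`. The odd-set condition at
`X = {w}` gives `d(w) ≥ Δ / 2 - ε Δ / 20`, hence the list of an edge `vw` has at least
`d(v) + ε Δ / 2` colours for large `Δ`, and symmetrically for `w`. The uniform weights on the
lists are then a fractional colouring in which every colour has total weight at most `1 - η` at
each vertex, with `η > 0` depending only on `ε`.

In one round every pair `(e, c)` is activated independently with probability `p * x(e, c)`, and an
edge is coloured by an active colour of its own that clashes with no other active pair. A colour
survives at an uncoloured edge if no active pair clashes with it, and the surviving weights are
divided by the probability of survival. Conflicts from `J₁` and `J₂` only contribute terms of order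
`1 / h ^ 4`. Concentration and the local lemma yield an outcome in which the bound on the total
weight of a colour at a vertex has dropped by a constant, while the bound on the single weights has
grown by a factor of at most four. After boundedly many rounds the total weights are at most
`1 / 100`, and one more application of the local lemma colours all remaining edges at once.
-/

namespace Nibble

open Finset
open scoped Classical

/-! ### Finite product probability spaces -/

section ProductProbability

variable {ι α κ : Type*} [Fintype ι]

/-- The mass of the point `ω` when the coordinates `ω i` are independent with laws `μ i`. -/
noncomputable def weight (μ : ι → α → ℝ) (ω : ι → α) : ℝ := ∏ i, μ i (ω i)

variable [Fintype α]

/-- The expectation of `f` under the product of the laws `μ i`. -/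
noncomputable def expect (μ : ι → α → ℝ) (f : (ι → α) → ℝ) : ℝ := ∑ ω, weight μ ω * f ω

/-- The conditional expectation of `f` given the coordinates outside `B`: those in `B` are
resampled. -/
noncomputable def average (μ : ι → α → ℝ) (B : Set ι) (f : (ι → α) → ℝ) (ω : ι → α) : ℝ :=
  expect μ fun ω' => f (B.piecewise ω' ω)

/-- The probability of the event `A` under the product of the laws `μ i`. -/
noncomputable def prob (μ : ι → α → ℝ) (A : (ι → α) → Prop) : ℝ :=
  expect μ fun ω => if A ω then 1 else 0

/-- Every `μ i` is a probability law on `α`. -/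
structure IsProbFamily (μ : ι → α → ℝ) : Prop where
  nonneg : ∀ i a, 0 ≤ μ i a
  sum_eq_one : ∀ i, ∑ a, μ i a = 1

variable {μ : ι → α → ℝ} {f g : (ι → α) → ℝ} {A B : (ι → α) → Prop}

lemma expect_prod (μ g : ι → α → ℝ) :
    expect μ (fun ω => ∏ i, g i (ω i)) = ∏ i, ∑ a, μ i a * g i a := by
  rw [prod_univ_sum]
  simp only [expect, weight, Fintype.piFinset_univ, prod_mul_distrib]

lemma expect_add (f g : (ι → α) → ℝ) :
    expect μ (fun ω => f ω + g ω) = expect μ f + expect μ g := by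
  simp only [expect, mul_add, sum_add_distrib]

lemma expect_sub (f g : (ι → α) → ℝ) :
    expect μ (fun ω => f ω - g ω) = expect μ f - expect μ g := by
  simp only [expect, mul_sub, sum_sub_distrib]

lemma expect_neg (f : (ι → α) → ℝ) : expect μ (fun ω => -f ω) = -expect μ f := by
  simp only [expect, mul_neg, sum_neg_distrib]

lemma expect_const_mul (c : ℝ) (f : (ι → α) → ℝ) :
    expect μ (fun ω => c * f ω) = c * expect μ f := by
  simp only [expect, mul_sum, mul_left_comm]

lemma expect_mul_const (f : (ι → α) → ℝ) (c : ℝ) :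
    expect μ (fun ω => f ω * c) = expect μ f * c := by
  simp only [expect, sum_mul, mul_assoc]

lemma expect_sum (s : Finset κ) (f : κ → (ι → α) → ℝ) :
    expect μ (fun ω => ∑ k ∈ s, f k ω) = ∑ k ∈ s, expect μ (f k) := by
  simp only [expect, mul_sum]
  exact sum_comm

lemma average_univ (f : (ι → α) → ℝ) (ω : ι → α) : average μ Set.univ f ω = expect μ f := by
  simp [average]

namespace IsProbFamily

variable (hμ : IsProbFamily μ)

include hμ

lemma weight_nonneg (ω : ι → α) : 0 ≤ weight μ ω :=
  prod_nonneg fun i _ => hμ.nonneg i _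

lemma sum_weight : ∑ ω, weight μ ω = 1 := by
  simpa [expect, hμ.sum_eq_one] using expect_prod μ fun _ _ => 1

lemma expect_const (c : ℝ) : expect μ (fun _ => c) = c := by
  rw [expect, ← sum_mul, hμ.sum_weight, one_mul]

lemma expect_mono (hfg : ∀ ω, f ω ≤ g ω) : expect μ f ≤ expect μ g :=
  sum_le_sum fun ω _ => mul_le_mul_of_nonneg_left (hfg ω) (hμ.weight_nonneg ω)

lemma expect_nonneg (hf : ∀ ω, 0 ≤ f ω) : 0 ≤ expect μ f :=
  sum_nonneg fun ω _ => mul_nonneg (hμ.weight_nonneg ω) (hf ω)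

lemma abs_expect_le {a : ℝ} (hf : ∀ ω, |f ω| ≤ a) : |expect μ f| ≤ a := by
  refine abs_le.mpr ⟨?_, ?_⟩
  · rw [← hμ.expect_const (-a)]
    exact hμ.expect_mono fun ω => (abs_le.mp (hf ω)).1
  · rw [← hμ.expect_const a]
    exact hμ.expect_mono fun ω => (abs_le.mp (hf ω)).2

lemma prob_nonneg (A : (ι → α) → Prop) : 0 ≤ prob μ A :=
  hμ.expect_nonneg fun ω => by split_ifs <;> norm_num

lemma prob_mono (hAB : ∀ ω, A ω → B ω) : prob μ A ≤ prob μ B :=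
  hμ.expect_mono fun ω => by
    have := hAB ω
    split_ifs <;> simp_all

lemma prob_of_forall (hA : ∀ ω, A ω) : prob μ A = 1 := by
  simp only [prob, hA, if_true, hμ.expect_const]

lemma prob_or_le (A B : (ι → α) → Prop) :
    prob μ (fun ω => A ω ∨ B ω) ≤ prob μ A + prob μ B := by
  simp only [prob, ← expect_add]
  refine hμ.expect_mono fun ω => ?_
  by_cases hA : A ω <;> by_cases hB : B ω <;> simp [hA, hB]

lemma prob_exists_le (s : Finset κ) (A : κ → (ι → α) → Prop) :
    prob μ (fun ω => ∃ k ∈ s, A k ω) ≤ ∑ k ∈ s, prob μ (A k) := by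
  simp only [prob, ← expect_sum]
  refine hμ.expect_mono fun ω => ?_
  have hnonneg : ∀ k ∈ s, (0 : ℝ) ≤ if A k ω then 1 else 0 := fun k _ => by
    split_ifs <;> norm_num
  split_ifs with hex
  · obtain ⟨k, hk, hA⟩ := hex
    simpa only [hA, if_true] using single_le_sum hnonneg hk
  · exact sum_nonneg hnonneg

/-- Exchanging the coordinates in `B` preserves the law of two independent samples. -/
lemma expect_expect_piecewise (B : Set ι) (F : (ι → α) → ℝ) :
    expect μ (fun ω => expect μ fun ω' => F (B.piecewise ω' ω)) = expect μ F := by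
  have weight_exchange : ∀ ω ω' : ι → α,
      weight μ (B.piecewise ω' ω) * weight μ (B.piecewise ω ω') = weight μ ω * weight μ ω' := by
    intro ω ω'
    simp only [weight, ← prod_mul_distrib]
    refine prod_congr rfl fun i _ => ?_
    by_cases hi : i ∈ B <;> simp [hi, mul_comm]
  have exchange_exchange : ∀ ω ω' : ι → α,
      B.piecewise (B.piecewise ω ω') (B.piecewise ω' ω) = ω := by
    intro ω ω'
    ext i
    by_cases hi : i ∈ B <;> simp [hi]
  have involutive : Function.Involutive fun q : (ι → α) × (ι → α) =>
      (B.piecewise q.2 q.1, B.piecewise q.1 q.2) := fun q => by simp only [exchange_exchange]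
  calc expect μ (fun ω => expect μ fun ω' => F (B.piecewise ω' ω))
      = ∑ ω, ∑ ω', weight μ ω * weight μ ω' * F (B.piecewise ω' ω) := by
        simp only [expect, mul_sum, mul_assoc]
    _ = ∑ ω, ∑ ω', weight μ ω * weight μ ω' * F ω := by
        rw [← Fintype.sum_prod_type', ← Equiv.sum_comp involutive.toPerm, ← Fintype.sum_prod_type']
        simp only [Function.Involutive.coe_toPerm, weight_exchange, exchange_exchange]
    _ = expect μ F := by
        simp only [← sum_mul, ← mul_sum, hμ.sum_weight, mul_one, expect]

lemma expect_average (B : Set ι) (f : (ι → α) → ℝ) : expect μ (average μ B f) = expect μ f :=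
  hμ.expect_expect_piecewise B f

lemma average_average (B B' : Set ι) (f : (ι → α) → ℝ) :
    average μ B (average μ B' f) = average μ (B ∪ B') f := by
  funext ω
  refine Eq.trans ?_ (hμ.expect_expect_piecewise B' _)
  simp only [average]
  congr! 5 with ω₁ ω₂
  ext i
  by_cases hB : i ∈ B <;> by_cases hB' : i ∈ B' <;> simp [hB, hB']

lemma average_empty (f : (ι → α) → ℝ) : average μ ∅ f = f := by
  funext ω
  simp only [average, Set.piecewise_empty, hμ.expect_const]

lemma expect_mul_of_dependsOn {S T : Set ι} (hST : Disjoint S T) (hf : DependsOn f S)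
    (hg : DependsOn g T) : expect μ (fun ω => f ω * g ω) = expect μ f * expect μ g := by
  have decouple : ∀ ω ω', f (T.piecewise ω' ω) * g (T.piecewise ω' ω) = f ω * g ω' := by
    intro ω ω'
    congr 1
    · exact hf fun i hi => Set.piecewise_eq_of_notMem _ _ _ (Set.disjoint_left.mp hST hi)
    · exact hg fun i hi => Set.piecewise_eq_of_mem _ _ _ hi
  rw [← hμ.expect_expect_piecewise T]
  simp only [decouple, expect_const_mul, expect_mul_const]

lemma prob_and_of_dependsOn {S T : Set ι} (hST : Disjoint S T) (hA : DependsOn A S)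
    (hB : DependsOn B T) : prob μ (fun ω => A ω ∧ B ω) = prob μ A * prob μ B := by
  rw [prob, prob, prob, ← hμ.expect_mul_of_dependsOn hST
    (fun ω ω' hω => by simp only [hA hω]) (fun ω ω' hω => by simp only [hB hω])]
  refine congrArg _ (funext fun ω => ?_)
  by_cases hAω : A ω <;> simp [hAω]

lemma expect_prod_of_dependsOn (l : ι → κ) (T : Finset κ) (g : κ → (ι → α) → ℝ)
    (hg : ∀ k ∈ T, DependsOn (g k) (l ⁻¹' {k})) :
    expect μ (fun ω => ∏ k ∈ T, g k ω) = ∏ k ∈ T, expect μ (g k) := by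
  induction T using Finset.induction_on with
  | empty => simp only [prod_empty, hμ.expect_const]
  | insert k T hk ih =>
    have hT : DependsOn (fun ω => ∏ k ∈ T, g k ω) (l ⁻¹' T) := fun ω ω' hω =>
      prod_congr rfl fun j hj => hg j (mem_insert_of_mem hj) fun i hi =>
        hω i (by simpa [Set.mem_singleton_iff.mp hi] using hj)
    have hdisj : Disjoint (l ⁻¹' {k}) (l ⁻¹' T) :=
      Disjoint.preimage l (Set.disjoint_singleton_left.mpr (by simpa using hk))
    simp only [prod_insert hk]
    rw [hμ.expect_mul_of_dependsOn hdisj (hg k (mem_insert_self k T)) hT,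
      ih fun j hj => hg j (mem_insert_of_mem hj)]

lemma expect_of_coordinate (i : ι) (g : α → ℝ) :
    expect μ (fun ω => g (ω i)) = ∑ a, μ i a * g a := by
  have hprod := expect_prod μ fun j a => if j = i then g a else 1
  have hfactor : ∀ j, (∑ a, μ j a * if j = i then g a else 1) =
      if j = i then ∑ a, μ i a * g a else 1 := by
    intro j
    split_ifs with hj
    · rw [hj]
    · simp only [mul_one, hμ.sum_eq_one]
  simpa only [hfactor, prod_ite_eq', mem_univ, if_true] using hprod

end IsProbFamily

end ProductProbability

/-! ### Concentration -/

section Concentration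

variable {ι α κ : Type*} [Fintype ι] [Fintype α] {μ : ι → α → ℝ} {f G : (ι → α) → ℝ} {a q t : ℝ}

namespace IsProbFamily

variable (hμ : IsProbFamily μ)

include hμ

lemma abs_sub_expect_le (hG : ∀ ω ω', |G ω - G ω'| ≤ a) (ω : ι → α) : |G ω - expect μ G| ≤ a := by
  rw [← hμ.expect_const (G ω), ← expect_sub]
  exact hμ.abs_expect_le fun ω' => hG ω ω'

lemma expect_sq_sub_expect_le (G : (ι → α) → ℝ) (c : ℝ) :
    expect μ (fun ω => (G ω - expect μ G) ^ 2) ≤ expect μ (fun ω => (G ω - c) ^ 2) := by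
  set m := expect μ G with hm
  have hexpand : ∀ ω, (G ω - c) ^ 2 =
      (G ω - m) ^ 2 + (2 * (m - c) * (G ω - m) + (m - c) ^ 2) := fun ω => by ring
  have hsplit : expect μ (fun ω => (G ω - c) ^ 2) =
      expect μ (fun ω => (G ω - m) ^ 2) + (m - c) ^ 2 := by
    simp only [hexpand]
    rw [expect_add, expect_add, expect_const_mul, expect_sub, hμ.expect_const, hμ.expect_const,
      ← hm]
    ring
  rw [hsplit]
  exact le_add_of_nonneg_right (sq_nonneg _)

lemma variance_le_of_eq_off_event {T : (ι → α) → Prop} (hG : ∀ ω ω', |G ω - G ω'| ≤ a)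
    (hT : ∀ ω ω', ¬T ω → ¬T ω' → G ω = G ω') (hq : prob μ T ≤ q) :
    expect μ (fun ω => (G ω - expect μ G) ^ 2) ≤ a ^ 2 * q := by
  have hsq : ∀ {x : ℝ}, |x| ≤ a → x ^ 2 ≤ a ^ 2 := fun hx =>
    sq_le_sq' (abs_le.mp hx).1 (abs_le.mp hx).2
  by_cases hquiet : ∃ ω₀, ¬T ω₀
  · obtain ⟨ω₀, hω₀⟩ := hquiet
    calc expect μ (fun ω => (G ω - expect μ G) ^ 2)
        ≤ expect μ (fun ω => (G ω - G ω₀) ^ 2) := hμ.expect_sq_sub_expect_le G _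
      _ ≤ expect μ (fun ω => a ^ 2 * if T ω then 1 else 0) := by
          refine hμ.expect_mono fun ω => ?_
          by_cases hω : T ω
          · simpa only [hω, if_true, mul_one] using hsq (hG ω ω₀)
          · simp [hT ω ω₀ hω hω₀, hω]
      _ = a ^ 2 * prob μ T := expect_const_mul _ _
      _ ≤ a ^ 2 * q := by gcongr
  · push Not at hquiet
    calc expect μ (fun ω => (G ω - expect μ G) ^ 2)
        ≤ expect μ (fun _ => a ^ 2) :=
          hμ.expect_mono fun ω => hsq (hμ.abs_sub_expect_le hG ω)
      _ = a ^ 2 * 1 := by rw [hμ.expect_const, mul_one]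
      _ ≤ a ^ 2 * q := by
          gcongr
          exact (hμ.prob_of_forall hquiet).symm.trans_le hq

/-- Uses `exp x ≤ 1 + x + x²` for `|x| ≤ 1`. -/
lemma expect_exp_le {v : ℝ} (ht : 0 ≤ t) (hta : t * a ≤ 1) (hG : ∀ ω, |G ω - expect μ G| ≤ a)
    (hvar : expect μ (fun ω => (G ω - expect μ G) ^ 2) ≤ v) :
    expect μ (fun ω => Real.exp (t * G ω)) ≤ Real.exp (t ^ 2 * v + t * expect μ G) := by
  set m := expect μ G with hm
  have hpoint : ∀ ω, Real.exp (t * G ω) ≤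
      Real.exp (t * m) * (1 + t * (G ω - m) + t ^ 2 * (G ω - m) ^ 2) := by
    intro ω
    have hsmall : |t * (G ω - m)| ≤ 1 := by
      rw [abs_mul, abs_of_nonneg ht]
      exact (mul_le_mul_of_nonneg_left (hG ω) ht).trans hta
    have htaylor := (abs_le.mp (Real.abs_exp_sub_one_sub_id_le hsmall)).2
    rw [show t * G ω = t * m + t * (G ω - m) by ring, Real.exp_add, ← mul_pow]
    gcongr
    linarith
  calc expect μ (fun ω => Real.exp (t * G ω))
      ≤ expect μ (fun ω => Real.exp (t * m) *
          (1 + t * (G ω - m) + t ^ 2 * (G ω - m) ^ 2)) := hμ.expect_mono hpoint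
    _ = Real.exp (t * m) * (1 + t ^ 2 * expect μ (fun ω => (G ω - m) ^ 2)) := by
        rw [expect_const_mul, expect_add, expect_add, hμ.expect_const, expect_const_mul,
          expect_const_mul, expect_sub, hμ.expect_const, ← hm]
        ring
    _ ≤ Real.exp (t * m) * (t ^ 2 * v + 1) := by
        rw [add_comm 1]
        gcongr
    _ ≤ Real.exp (t * m) * Real.exp (t ^ 2 * v) := by
        gcongr
        exact Real.add_one_le_exp _
    _ = Real.exp (t ^ 2 * v + t * m) := by rw [← Real.exp_add, add_comm]

lemma average_exp_le {B : Set ι} {T : (ι → α) → Prop} (ht : 0 ≤ t) (hta : t * a ≤ 1)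
    (hf : ∀ ω ω' : ι → α, (∀ i ∉ B, ω i = ω' i) → |f ω - f ω'| ≤ a)
    (hT : ∀ ω ω' : ι → α, (∀ i ∉ B, ω i = ω' i) → ¬T ω → ¬T ω' → f ω = f ω')
    (hTB : DependsOn T B) (hq : prob μ T ≤ q) (ω : ι → α) :
    average μ B (fun ω => Real.exp (t * f ω)) ω ≤
      Real.exp (t ^ 2 * (a ^ 2 * q) + t * average μ B f ω) := by
  have hagree : ∀ ω₁ ω₂ : ι → α, ∀ i ∉ B, B.piecewise ω₁ ω i = B.piecewise ω₂ ω i := by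
    intro ω₁ ω₂ i hi
    simp [hi]
  have hTω : ∀ ω', T (B.piecewise ω' ω) = T ω' := fun ω' =>
    hTB fun i hi => Set.piecewise_eq_of_mem _ _ _ hi
  have hosc : ∀ ω₁ ω₂, |f (B.piecewise ω₁ ω) - f (B.piecewise ω₂ ω)| ≤ a := fun ω₁ ω₂ =>
    hf _ _ (hagree ω₁ ω₂)
  refine hμ.expect_exp_le ht hta (hμ.abs_sub_expect_le hosc)
    (hμ.variance_le_of_eq_off_event hosc (fun ω₁ ω₂ h₁ h₂ => ?_) hq)
  exact hT _ _ (hagree ω₁ ω₂) (by rwa [hTω]) (by rwa [hTω])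

end IsProbFamily

/-- The coordinates are grouped into blocks by `l`; resampling block `k` changes `f` by at most
`a k`, and not at all unless the event `T k`, which is determined by block `k` and has
probability at most `q k`, occurs before or after. The variance of `f` is then of order
`∑ k, a k ^ 2 * q k`. -/
structure BlockBounded (μ : ι → α → ℝ) (l : ι → κ) (f : (ι → α) → ℝ)
    (T : κ → (ι → α) → Prop) (a q : κ → ℝ) : Prop where
  abs_sub_le : ∀ k, ∀ ω ω' : ι → α, (∀ i, l i ≠ k → ω i = ω' i) → |f ω - f ω'| ≤ a k
  eq_of_not : ∀ k, ∀ ω ω' : ι → α, (∀ i, l i ≠ k → ω i = ω' i) → ¬T k ω → ¬T k ω' → f ω = f ω'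
  dependsOn : ∀ k, DependsOn (T k) (l ⁻¹' {k})
  prob_le : ∀ k, prob μ (T k) ≤ q k

namespace BlockBounded

variable {l : ι → κ} {T : κ → (ι → α) → Prop} {a q : κ → ℝ}

lemma neg (hf : BlockBounded μ l f T a q) : BlockBounded μ l (fun ω => -f ω) T a q where
  abs_sub_le k ω ω' h := by simpa only [neg_sub_neg, abs_sub_comm] using hf.abs_sub_le k ω ω' h
  eq_of_not k ω ω' h h₁ h₂ := congrArg Neg.neg (hf.eq_of_not k ω ω' h h₁ h₂)
  dependsOn := hf.dependsOn
  prob_le := hf.prob_le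

lemma average_exp_average_le (hf : BlockBounded μ l f T a q) (hμ : IsProbFamily μ) (ht : 0 ≤ t)
    {k : κ} (hta : t * a k ≤ 1) {S : Set κ} (hk : k ∉ S) (ω : ι → α) :
    average μ (l ⁻¹' {k}) (fun ω => Real.exp (t * average μ (l ⁻¹' S) f ω)) ω ≤
      Real.exp (t ^ 2 * (a k ^ 2 * q k) +
        t * average μ (l ⁻¹' {k}) (average μ (l ⁻¹' S) f) ω) := by
  have hagree : ∀ ω₁ ω₂ ω' : ι → α, (∀ i ∉ l ⁻¹' {k}, ω₁ i = ω₂ i) → ∀ i, l i ≠ k →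
      (l ⁻¹' S).piecewise ω' ω₁ i = (l ⁻¹' S).piecewise ω' ω₂ i := by
    intro ω₁ ω₂ ω' h i hi
    by_cases hS : i ∈ l ⁻¹' S
    · simp only [Set.piecewise_eq_of_mem _ _ _ hS]
    · simp only [Set.piecewise_eq_of_notMem _ _ _ hS, h i hi]
  have hT : ∀ ω₁ ω' : ι → α, T k ((l ⁻¹' S).piecewise ω' ω₁) = T k ω₁ := fun ω₁ ω' =>
    hf.dependsOn k fun i hi => Set.piecewise_eq_of_notMem _ _ _ fun hS =>
      hk (Set.mem_singleton_iff.mp hi ▸ hS)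
  refine hμ.average_exp_le ht hta (fun ω₁ ω₂ h => ?_) (fun ω₁ ω₂ h h₁ h₂ => ?_)
    (hf.dependsOn k) (hf.prob_le k) ω
  · rw [average, average, ← expect_sub]
    exact hμ.abs_expect_le fun ω' => by
      convert hf.abs_sub_le k _ _ (hagree ω₁ ω₂ ω' h)
  · simp only [average]
    congr! 2 with ω'
    convert hf.eq_of_not k _ _ (hagree ω₁ ω₂ ω' h) (by rwa [hT]) (by rwa [hT])

/-- The blocks are averaged out one at a time. -/
lemma expect_exp_le_mul_expect_exp_average (hf : BlockBounded μ l f T a q) (hμ : IsProbFamily μ)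
    (ht : 0 ≤ t) (hta : ∀ k, t * a k ≤ 1) (S : Finset κ) :
    expect μ (fun ω => Real.exp (t * f ω)) ≤
      Real.exp (t ^ 2 * ∑ k ∈ S, a k ^ 2 * q k) *
        expect μ fun ω => Real.exp (t * average μ (l ⁻¹' S) f ω) := by
  induction S using Finset.induction_on with
  | empty => simp [hμ.average_empty]
  | insert k S hk ih =>
    have hstep : expect μ (fun ω => Real.exp (t * average μ (l ⁻¹' S) f ω)) ≤
        Real.exp (t ^ 2 * (a k ^ 2 * q k)) *
          expect μ fun ω => Real.exp (t * average μ (l ⁻¹' ↑(insert k S)) f ω) := by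
      rw [coe_insert, Set.insert_eq, Set.preimage_union, ← hμ.average_average,
        ← hμ.expect_average (l ⁻¹' {k}), ← expect_const_mul]
      refine hμ.expect_mono fun ω => ?_
      rw [← Real.exp_add]
      exact hf.average_exp_average_le hμ ht (hta k) (by simpa using hk) ω
    calc expect μ (fun ω => Real.exp (t * f ω))
        ≤ Real.exp (t ^ 2 * ∑ k ∈ S, a k ^ 2 * q k) *
            (Real.exp (t ^ 2 * (a k ^ 2 * q k)) *
              expect μ fun ω => Real.exp (t * average μ (l ⁻¹' ↑(insert k S)) f ω)) := by
          refine ih.trans ?_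
          gcongr
      _ = _ := by
          rw [← mul_assoc, ← Real.exp_add, ← mul_add, sum_insert hk, add_comm (∑ _ ∈ S, _)]

variable [Fintype κ]

lemma expect_exp_le (hf : BlockBounded μ l f T a q) (hμ : IsProbFamily μ) (ht : 0 ≤ t)
    (hta : ∀ k, t * a k ≤ 1) :
    expect μ (fun ω => Real.exp (t * f ω)) ≤
      Real.exp (t ^ 2 * (∑ k, a k ^ 2 * q k) + t * expect μ f) := by
  simpa only [coe_univ, Set.preimage_univ, average_univ, hμ.expect_const, ← Real.exp_add]
    using hf.expect_exp_le_mul_expect_exp_average hμ ht hta univ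

lemma prob_expect_add_lt_le (hf : BlockBounded μ l f T a q) (hμ : IsProbFamily μ) {lam K : ℝ}
    (ht : 0 ≤ t) (hta : ∀ k, t * a k ≤ 1) (hK : t ^ 2 * ∑ k, a k ^ 2 * q k ≤ K) :
    prob μ (fun ω => expect μ f + lam < f ω) ≤ Real.exp (K - t * lam) := by
  have hmarkov : ∀ ω, (if expect μ f + lam < f ω then (1 : ℝ) else 0) ≤
      Real.exp (-(t * (expect μ f + lam))) * Real.exp (t * f ω) := by
    intro ω
    rw [← Real.exp_add]
    split_ifs with hω
    · exact Real.one_le_exp (by nlinarith)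
    · exact (Real.exp_pos _).le
  calc prob μ (fun ω => expect μ f + lam < f ω)
      ≤ Real.exp (-(t * (expect μ f + lam))) * expect μ (fun ω => Real.exp (t * f ω)) := by
        rw [← expect_const_mul]
        exact hμ.expect_mono hmarkov
    _ ≤ Real.exp (-(t * (expect μ f + lam))) *
          Real.exp (t ^ 2 * (∑ k, a k ^ 2 * q k) + t * expect μ f) := by
        gcongr
        exact hf.expect_exp_le hμ ht hta
    _ ≤ Real.exp (K - t * lam) := by
        rw [← Real.exp_add]
        gcongr
        linarith

end BlockBounded

end Concentration

/-! ### The Lovász local lemma -/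

section LocalLemma

variable {ι α I : Type*} [Fintype ι] [Fintype α] {μ : ι → α → ℝ} {A : I → (ι → α) → Prop}

/-- None of the events `A j` with `j ∈ T` occurs. -/
def Avoids (A : I → (ι → α) → Prop) (T : Finset I) (ω : ι → α) : Prop := ∀ j ∈ T, ¬A j ω

lemma prob_avoids_eq_add (T : Finset I) (i : I) :
    prob μ (Avoids A T) =
      prob μ (Avoids A (insert i T)) + prob μ (fun ω => A i ω ∧ Avoids A T ω) := by
  simp only [prob, ← expect_add]
  refine congrArg _ (funext fun ω => ?_)
  have hinsert : Avoids A (insert i T) ω ↔ ¬A i ω ∧ Avoids A T ω := forall_mem_insert ..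
  by_cases hi : A i ω <;> by_cases hT : Avoids A T ω <;> simp [hinsert, hi, hT]

namespace IsProbFamily

variable (hμ : IsProbFamily μ)

include hμ

lemma prob_avoids_empty : prob μ (Avoids A ∅) = 1 :=
  hμ.prob_of_forall fun ω => by simp [Avoids]

lemma prob_avoids_filter_le (T : Finset I) (p : I → Prop) :
    prob μ (Avoids A (T.filter p)) ≤ prob μ (Avoids A T) +
      ∑ j ∈ T with ¬p j, prob μ (fun ω => A j ω ∧ Avoids A (T.filter p) ω) := by
  calc prob μ (Avoids A (T.filter p))
      ≤ prob μ (fun ω => Avoids A T ω ∨ ∃ j ∈ T.filter (¬p ·),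
          A j ω ∧ Avoids A (T.filter p) ω) := by
        refine hμ.prob_mono fun ω hω => ?_
        by_cases hex : ∃ j ∈ T.filter (¬p ·), A j ω
        · obtain ⟨j, hj, hA⟩ := hex
          exact Or.inr ⟨j, hj, hA, hω⟩
        · push Not at hex
          refine Or.inl fun j hj => ?_
          by_cases hp : p j
          · exact hω j (mem_filter.mpr ⟨hj, hp⟩)
          · exact hex j (mem_filter.mpr ⟨hj, hp⟩)
    _ ≤ _ := (hμ.prob_or_le _ _).trans (add_le_add_right (hμ.prob_exists_le _ _) _)

variable {S : I → Set ι} (hA : ∀ i, DependsOn (A i) (S i))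

include hA

lemma prob_and_avoids_of_disjoint {i : I} {T : Finset I} (hT : ∀ j ∈ T, Disjoint (S i) (S j)) :
    prob μ (fun ω => A i ω ∧ Avoids A T ω) = prob μ (A i) * prob μ (Avoids A T) := by
  refine hμ.prob_and_of_dependsOn (T := ⋃ j ∈ T, S j) ?_ (hA i) fun ω ω' hω => ?_
  · simpa only [Set.disjoint_iUnion_right] using hT
  · refine propext (forall₂_congr fun j hj => not_congr (Eq.to_iff (hA j fun k hk => hω k ?_)))
    exact Set.mem_biUnion (Finset.mem_coe.mpr hj) hk

variable [Fintype I]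
  (hsum : ∀ i, ∑ j with j = i ∨ ¬Disjoint (S i) (S j), prob μ (A j) ≤ 1 / 4)

include hsum

lemma prob_and_avoids_le (T : Finset I) :
    ∀ i ∉ T, prob μ (fun ω => A i ω ∧ Avoids A T ω) ≤
      2 * prob μ (A i) * prob μ (Avoids A T) := by
  induction T using Finset.strongInduction with
  | H T ih =>
  intro i _
  set far := T.filter fun j => Disjoint (S i) (S j) with hfar
  have hfar_le : prob μ (Avoids A far) ≤ 2 * prob μ (Avoids A T) := by
    rcases (T.filter_subset fun j => Disjoint (S i) (S j)).eq_or_ssubset with heq | hss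
    · rw [hfar, heq]
      linarith [hμ.prob_nonneg (Avoids A T)]
    · have hcond : ∑ j ∈ T with ¬Disjoint (S i) (S j), prob μ (fun ω => A j ω ∧ Avoids A far ω) ≤
          ∑ j ∈ T with ¬Disjoint (S i) (S j), 2 * prob μ (A j) * prob μ (Avoids A far) :=
        sum_le_sum fun j hj => ih far hss j fun hj' =>
          (mem_filter.mp hj).2 (mem_filter.mp hj').2
      have hquarter : ∑ j ∈ T with ¬Disjoint (S i) (S j), prob μ (A j) ≤ 1 / 4 := by
        refine (sum_le_sum_of_subset_of_nonneg ?_ fun j _ _ => hμ.prob_nonneg _).trans (hsum i)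
        exact fun j hj => mem_filter.mpr ⟨mem_univ _, Or.inr (mem_filter.mp hj).2⟩
      rw [← sum_mul, ← mul_sum] at hcond
      have := hμ.prob_avoids_filter_le (A := A) T fun j => Disjoint (S i) (S j)
      nlinarith [hμ.prob_nonneg (Avoids A far)]
  calc prob μ (fun ω => A i ω ∧ Avoids A T ω)
      ≤ prob μ (fun ω => A i ω ∧ Avoids A far ω) :=
        hμ.prob_mono fun ω hω => ⟨hω.1, fun j hj => hω.2 j (mem_filter.mp hj).1⟩
    _ = prob μ (A i) * prob μ (Avoids A far) :=
        hμ.prob_and_avoids_of_disjoint hA fun j hj => (mem_filter.mp hj).2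
    _ ≤ prob μ (A i) * (2 * prob μ (Avoids A T)) :=
        mul_le_mul_of_nonneg_left hfar_le (hμ.prob_nonneg _)
    _ = 2 * prob μ (A i) * prob μ (Avoids A T) := by ring

lemma prob_avoids_pos (T : Finset I) : 0 < prob μ (Avoids A T) := by
  induction T using Finset.induction_on with
  | empty => simp only [hμ.prob_avoids_empty, zero_lt_one]
  | insert i T hi ih =>
    have hquarter : prob μ (A i) ≤ 1 / 4 :=
      (single_le_sum (f := fun j => prob μ (A j)) (fun j _ => hμ.prob_nonneg _)
        (by simp)).trans (hsum i)
    have hsplit := prob_avoids_eq_add (μ := μ) (A := A) T i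
    have hcond := hμ.prob_and_avoids_le hA hsum T i hi
    nlinarith

theorem local_lemma : ∃ ω, 0 < weight μ ω ∧ ∀ i, ¬A i ω := by
  by_contra! hcon
  refine (hμ.prob_avoids_pos hA hsum univ).not_ge (sum_nonpos fun ω _ => ?_)
  rcases (hμ.weight_nonneg ω).eq_or_lt with hzero | hpos
  · rw [← hzero, zero_mul]
  · obtain ⟨i, hi⟩ := hcon ω hpos
    have : ¬Avoids A univ ω := fun h => h i (mem_univ i) hi
    simp [this]

end IsProbFamily

end LocalLemma

section ConflictFreeChoice

variable {ι α : Type*} [Fintype ι] [Fintype α] {μ : ι → α → ℝ} {K : ι → α → ι → α → Prop}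

lemma sum_cross_le {P : ι × ι → ℝ} {η : ℝ} (hP : ∀ q, 0 ≤ P q) (hrow : ∀ i, ∑ j, P (i, j) ≤ η)
    (hcol : ∀ j, ∑ i, P (i, j) ≤ η) (T : Finset ι) :
    ∑ q ∈ T ×ˢ univ ∪ univ ×ˢ T, P q ≤ 2 * (T.card * η) := by
  calc ∑ q ∈ T ×ˢ univ ∪ univ ×ˢ T, P q
      ≤ ∑ q ∈ T ×ˢ univ, P q + ∑ q ∈ univ ×ˢ T, P q := by
        rw [← sum_union_inter]
        exact le_add_of_nonneg_right (sum_nonneg fun q _ => hP q)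
    _ ≤ T.card • η + T.card • η := by
        rw [sum_product, sum_product_right]
        exact add_le_add (sum_le_card_nsmul _ _ _ fun i _ => hrow i)
          (sum_le_card_nsmul _ _ _ fun j _ => hcol j)
    _ = 2 * (T.card * η) := by
        rw [nsmul_eq_mul]
        ring

namespace IsProbFamily

variable (hμ : IsProbFamily μ)

include hμ

lemma prob_coordinate_eq (i : ι) (a : α) : prob μ (fun ω => ω i = a) = μ i a := by
  simp [prob, hμ.expect_of_coordinate i fun b => if b = a then (1 : ℝ) else 0]

lemma prob_coordinates_clash_le (hne : ∀ i a j b, K i a j b → i ≠ j) (i j : ι) :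
    prob μ (fun ω => K i (ω i) j (ω j)) ≤
      ∑ q : α × α with K i q.1 j q.2, μ i q.1 * μ j q.2 := by
  refine (hμ.prob_mono (B := fun ω => ∃ q ∈ univ.filter fun q : α × α => K i q.1 j q.2,
    ω i = q.1 ∧ ω j = q.2) fun ω hω => ⟨(ω i, ω j), by simpa using hω, rfl, rfl⟩).trans
    ((hμ.prob_exists_le _ _).trans (sum_le_sum fun q hq => le_of_eq ?_))
  have hij : Disjoint ({i} : Set ι) {j} :=
    Set.disjoint_singleton.mpr (hne _ _ _ _ (mem_filter.mp hq).2)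
  rw [hμ.prob_and_of_dependsOn hij (fun ω ω' hω => by rw [hω i rfl])
    (fun ω ω' hω => by rw [hω j rfl]), hμ.prob_coordinate_eq, hμ.prob_coordinate_eq]

variable (hne : ∀ i a j b, K i a j b → i ≠ j) {η : ℝ}
  (hK : ∀ i a, ∑ q : ι × α with K i a q.1 q.2, μ q.1 q.2 ≤ η)

include hne hK

lemma sum_prob_coordinates_clash_le (i : ι) :
    ∑ j, prob μ (fun ω => K i (ω i) j (ω j)) ≤ η := by
  calc ∑ j, prob μ (fun ω => K i (ω i) j (ω j))
      ≤ ∑ j, ∑ q : α × α with K i q.1 j q.2, μ i q.1 * μ j q.2 :=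
        sum_le_sum fun j _ => hμ.prob_coordinates_clash_le hne i j
    _ = ∑ a, μ i a * ∑ q : ι × α with K i a q.1 q.2, μ q.1 q.2 := by
        simp only [sum_filter, Fintype.sum_prod_type, mul_sum, mul_ite, mul_zero]
        exact sum_comm
    _ ≤ ∑ a, μ i a * η :=
        sum_le_sum fun a _ => mul_le_mul_of_nonneg_left (hK i a) (hμ.nonneg i a)
    _ = η := by rw [← sum_mul, hμ.sum_eq_one, one_mul]

lemma exists_clashFree_choice (hsymm : ∀ i a j b, K i a j b → K j b i a) (hη : η ≤ 1 / 16) :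
    ∃ ω : ι → α, (∀ i, μ i (ω i) ≠ 0) ∧ ∀ i j, ¬K i (ω i) j (ω j) := by
  set A : ι × ι → (ι → α) → Prop := fun q ω => K q.1 (ω q.1) q.2 (ω q.2) with hA
  set S : ι × ι → Set ι := fun q => {q.1, q.2} with hS
  have hAS : ∀ q, DependsOn (A q) (S q) := fun q ω ω' hω => by
    simp only [hA, hω q.1 (by simp [hS]), hω q.2 (by simp [hS])]
  have hleft : ∀ i, ∑ j, prob μ (A (i, j)) ≤ η := hμ.sum_prob_coordinates_clash_le hne hK
  have hright : ∀ j, ∑ i, prob μ (A (i, j)) ≤ η := fun j => by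
    have hswap : ∀ i, A (i, j) = A (j, i) := fun i =>
      funext fun ω => propext ⟨hsymm _ _ _ _, hsymm _ _ _ _⟩
    simpa only [hswap] using hleft j
  have hη0 (q : ι × ι) : 0 ≤ η :=
    (sum_nonneg fun j _ => hμ.prob_nonneg _).trans (hleft q.1)
  obtain ⟨ω, hω, hfree⟩ := hμ.local_lemma hAS fun q => by
    have htwo : (({q.1, q.2} : Finset ι).card : ℝ) ≤ 2 := mod_cast card_le_two
    refine (sum_le_sum_of_subset_of_nonneg
      (t := {q.1, q.2} ×ˢ univ ∪ univ ×ˢ {q.1, q.2}) ?_ fun j _ _ => hμ.prob_nonneg _).trans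
      ((sum_cross_le (fun j => hμ.prob_nonneg (A j)) hleft hright {q.1, q.2}).trans ?_)
    · intro j hj
      simp only [hS, Set.disjoint_insert_left, Set.disjoint_singleton_left, mem_filter] at hj
      simp only [mem_union, mem_product, mem_insert, mem_singleton, mem_univ]
      grind
    · nlinarith [hη0 q]
  exact ⟨ω, fun i hi => hω.ne' (prod_eq_zero (mem_univ i) hi), fun i j => hfree (i, j)⟩

end IsProbFamily

end ConflictFreeChoice

/-! ### Fractional colourings -/

/-- A graph without parallel edges, with edges indexed by `E` and all degrees at most `h ^ 8`,
together with a sparse relation `Conflict` between (edge, colour) pairs. The number of colours of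
`e` in conflict with a given colour of `f` is at most `mult e f`. -/
structure EdgeSystem (V E C : Type*) [Fintype E] [Fintype C] (h : ℝ) where
  ends : E → Sym2 V
  ends_injective : Function.Injective ends
  Conflict : E → C → E → C → Prop
  conflict_symm : ∀ {e c f d}, Conflict e c f d → Conflict f d e c
  conflict_ne : ∀ {e c f d}, Conflict e c f d → e ≠ f
  mult : E → E → ℝ
  mult_nonneg : ∀ e f, 0 ≤ mult e f
  mult_symm : ∀ e f, mult e f = mult f e
  one_le : 1 ≤ h
  card_star_le : ∀ v, (#{e | v ∈ ends e} : ℝ) ≤ h ^ 8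
  card_conflict_le : ∀ e f d, (#{c | Conflict e c f d} : ℝ) ≤ mult e f
  sum_mult_le : ∀ e, ∑ f, mult e f ≤ 4 * h ^ 4
  card_conflicting_colors_le : ∀ f d, (#{c | ∃ e, Conflict e c f d} : ℝ) ≤ 3 * h ^ 2

namespace EdgeSystem

variable {V E C : Type*} [Fintype E] [Fintype C] {h : ℝ} (S : EdgeSystem V E C h)

/-- The edges at the vertex `v`. -/
noncomputable def star (v : V) : Finset E := {e | v ∈ S.ends e}

/-- Distinct edges with a common end. -/
def Adj (e f : E) : Prop := e ≠ f ∧ ∃ v, e ∈ S.star v ∧ f ∈ S.star v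

/-- The edges adjacent to `e`. -/
noncomputable def nbhd (e : E) : Finset E := {f | S.Adj e f}

/-- The edges adjacent to `e` which avoid `v`; for an edge `e` at `v` they meet `e` in its other
end. -/
noncomputable def far (v : V) (e : E) : Finset E := S.nbhd e \ S.star v

/-- The pairs `(e, c)` and `(f, d)` may not occur in the same colouring. -/
def Clash (e : E) (c : C) (f : E) (d : C) : Prop := (S.Adj e f ∧ c = d) ∨ S.Conflict e c f d

variable {S}

lemma mem_star {v : V} {e : E} : e ∈ S.star v ↔ v ∈ S.ends e := by simp [star]

lemma mem_nbhd {e f : E} : f ∈ S.nbhd e ↔ S.Adj e f := by simp [nbhd]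

lemma Adj.symm {e f : E} (hef : S.Adj e f) : S.Adj f e :=
  ⟨hef.1.symm, hef.2.imp fun _ => And.symm⟩

lemma Clash.symm {e f : E} {c d : C} : S.Clash e c f d → S.Clash f d e c :=
  Or.imp (And.imp Adj.symm Eq.symm) S.conflict_symm

lemma Clash.ne {e f : E} {c d : C} : S.Clash e c f d → e ≠ f :=
  Or.rec (fun hef => hef.1.1) S.conflict_ne

variable (S)

include S in
lemma pos : 0 < h := one_pos.trans_le S.one_le

lemma exists_ends_eq (e : E) : ∃ v w, S.ends e = s(v, w) :=
  Sym2.ind (f := fun z => ∃ v w, z = s(v, w)) (fun v w => ⟨v, w, rfl⟩) _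

lemma exists_mem_star (e : E) : ∃ v, e ∈ S.star v := by
  obtain ⟨v, w, hvw⟩ := S.exists_ends_eq e
  exact ⟨v, by simp [mem_star, hvw]⟩

lemma nbhd_eq_union {v : V} {e : E} (hv : e ∈ S.star v) :
    S.nbhd e = (S.star v).erase e ∪ S.far v e := by
  ext f
  simp only [far, mem_union, mem_erase, mem_sdiff, mem_nbhd]
  refine ⟨fun hf => ?_, ?_⟩
  · by_cases hfv : f ∈ S.star v
    · exact Or.inl ⟨hf.1.symm, hfv⟩
    · exact Or.inr ⟨hf, hfv⟩
  · rintro (⟨hne, hfv⟩ | ⟨hf, -⟩)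
    · exact ⟨hne.symm, v, hv, hfv⟩
    · exact hf

lemma disjoint_erase_star_far (v : V) (e : E) : Disjoint ((S.star v).erase e) (S.far v e) :=
  disjoint_sdiff.mono_left (erase_subset e _)

lemma exists_far_subset_star {v : V} {e : E} (hv : e ∈ S.star v) :
    ∃ w, S.far v e ⊆ S.star w := by
  obtain ⟨w, hw⟩ := mem_star.mp hv
  refine ⟨w, fun f hf => ?_⟩
  obtain ⟨hf, hfv⟩ := mem_sdiff.mp hf
  obtain ⟨-, u, heu, hfu⟩ := mem_nbhd.mp hf
  rw [mem_star, hw, Sym2.mem_iff] at heu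
  rcases heu with rfl | rfl
  · exact absurd hfu hfv
  · exact hfu

/-- Such an edge joins `v` to an end of `f`. -/
lemma card_filter_mem_far_le_two (v : V) (f : E) : #{e ∈ S.star v | f ∈ S.far v e} ≤ 2 := by
  obtain ⟨a, b, hab⟩ := S.exists_ends_eq f
  have hsub : {e ∈ S.star v | f ∈ S.far v e}.image S.ends ⊆ {s(v, a), s(v, b)} := by
    intro z hz
    obtain ⟨e, he, rfl⟩ := mem_image.mp hz
    obtain ⟨hev, hf⟩ := mem_filter.mp he
    obtain ⟨hef, hfv⟩ := mem_sdiff.mp hf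
    obtain ⟨-, u, heu, hfu⟩ := mem_nbhd.mp hef
    have huv : v ≠ u := fun huv => hfv (huv ▸ hfu)
    rw [mem_star] at hev heu hfu
    rw [(Sym2.mem_and_mem_iff huv).mp ⟨hev, heu⟩]
    rw [hab, Sym2.mem_iff] at hfu
    rcases hfu with rfl | rfl <;> simp
  calc #{e ∈ S.star v | f ∈ S.far v e}
      = #({e ∈ S.star v | f ∈ S.far v e}.image S.ends) :=
        (card_image_of_injective _ S.ends_injective).symm
    _ ≤ 2 := (card_le_card hsub).trans card_le_two

lemma card_conflict_pairs_le (e : E) (c : C) :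
    (#{q : E × C | S.Conflict e c q.1 q.2} : ℝ) ≤ 4 * h ^ 4 := by
  calc (#{q : E × C | S.Conflict e c q.1 q.2} : ℝ)
      = ∑ f, (#{d | S.Conflict e c f d} : ℝ) := by
        simp only [card_filter, Fintype.sum_prod_type, Nat.cast_sum]
    _ ≤ ∑ f, S.mult e f := by
        refine sum_le_sum fun f _ => ?_
        rw [S.mult_symm]
        refine le_trans (mod_cast card_le_card fun d hd => ?_) (S.card_conflict_le f e c)
        simpa using S.conflict_symm (mem_filter.mp hd).2
    _ ≤ 4 * h ^ 4 := S.sum_mult_le e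

end EdgeSystem

variable {V E C : Type*} [Fintype E] [Fintype C] {h : ℝ}

/-- The uncoloured edges are those in `U`; `x e` is a probability distribution on the colours
still available at `e ∈ U`, with masses of order `h⁻⁸`, and every colour has total weight at most
`r` at every vertex. -/
structure IsFractionalColoring (S : EdgeSystem V E C h) (N : ℝ) (U : Finset E) (x : E → C → ℝ)
    (r B : ℝ) : Prop where
  nonneg : ∀ e c, 0 ≤ x e c
  le : ∀ e c, x e c ≤ B / h ^ 8
  sum_eq_one : ∀ e ∈ U, ∑ c, x e c = 1
  eq_zero : ∀ e ∉ U, ∀ c, x e c = 0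
  card_support_le : ∀ e, (#{c | x e c ≠ 0} : ℝ) ≤ N * h ^ 8
  colorDegree_le : ∀ v c, ∑ e ∈ S.star v, x e c ≤ r

/-- The edges in `U` can be coloured from the supports of `x` without clashes. -/
def HasColoring (S : EdgeSystem V E C h) (U : Finset E) (x : E → C → ℝ) : Prop :=
  ∃ φ : U → C, (∀ e : U, x e (φ e) ≠ 0) ∧ ∀ e f : U, ¬S.Clash e (φ e) f (φ f)

namespace IsFractionalColoring

variable {S : EdgeSystem V E C h} {N r B : ℝ} {U : Finset E} {x : E → C → ℝ}
  (hx : IsFractionalColoring S N U x r B)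

include hx

lemma sum_le_one (e : E) : ∑ c, x e c ≤ 1 := by
  by_cases he : e ∈ U
  · exact (hx.sum_eq_one e he).le
  · simp [hx.eq_zero e he]

lemma le_one (e : E) (c : C) : x e c ≤ 1 :=
  (single_le_sum (fun c _ => hx.nonneg e c) (mem_univ c)).trans (hx.sum_le_one e)

lemma sum_le_of_subset_star {T : Finset E} {v : V} (hT : T ⊆ S.star v) (c : C) :
    ∑ f ∈ T, x f c ≤ r :=
  (sum_le_sum_of_subset_of_nonneg hT fun f _ _ => hx.nonneg f c).trans (hx.colorDegree_le v c)

lemma sum_far_le {v : V} {e : E} (hv : e ∈ S.star v) (c : C) : ∑ f ∈ S.far v e, x f c ≤ r :=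
  let ⟨_, hw⟩ := S.exists_far_subset_star hv
  hx.sum_le_of_subset_star hw c

lemma sum_nbhd_le (e : E) (c : C) : ∑ f ∈ S.nbhd e, x f c ≤ 2 * r := by
  obtain ⟨v, hv⟩ := S.exists_mem_star e
  rw [S.nbhd_eq_union hv, sum_union (S.disjoint_erase_star_far v e)]
  linarith [hx.sum_le_of_subset_star (erase_subset e (S.star v)) c, hx.sum_far_le hv c]

lemma sum_conflict_le (e : E) (c : C) :
    ∑ q : E × C with S.Conflict e c q.1 q.2, x q.1 q.2 ≤ 4 * B / h ^ 4 := by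
  have hpos := S.pos
  have hB : 0 ≤ B / h ^ 8 := (hx.nonneg e c).trans (hx.le e c)
  calc ∑ q : E × C with S.Conflict e c q.1 q.2, x q.1 q.2
      ≤ #{q : E × C | S.Conflict e c q.1 q.2} • (B / h ^ 8) :=
        sum_le_card_nsmul _ _ _ fun q _ => hx.le _ _
    _ ≤ 4 * h ^ 4 * (B / h ^ 8) := by
        rw [nsmul_eq_mul]
        exact mul_le_mul_of_nonneg_right (S.card_conflict_pairs_le e c) hB
    _ = 4 * B / h ^ 4 := by field_simp

lemma sum_clash_le (e : E) (c : C) :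
    ∑ q : E × C with S.Clash e c q.1 q.2, x q.1 q.2 ≤ 2 * r + 4 * B / h ^ 4 := by
  have hsub : (univ.filter fun q : E × C => S.Clash e c q.1 q.2) ⊆
      S.nbhd e ×ˢ {c} ∪ univ.filter fun q : E × C => S.Conflict e c q.1 q.2 := by
    intro q hq
    rw [mem_union, mem_product, mem_singleton, EdgeSystem.mem_nbhd, mem_filter_univ,
      eq_comm (a := q.2)]
    exact (mem_filter.mp hq).2
  calc ∑ q : E × C with S.Clash e c q.1 q.2, x q.1 q.2
      ≤ ∑ q ∈ S.nbhd e ×ˢ {c} ∪ univ.filter fun q : E × C => S.Conflict e c q.1 q.2, x q.1 q.2 :=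
        sum_le_sum_of_subset_of_nonneg hsub fun q _ _ => hx.nonneg _ _
    _ ≤ ∑ f ∈ S.nbhd e, x f c + ∑ q : E × C with S.Conflict e c q.1 q.2, x q.1 q.2 := by
        have hprod : ∑ q ∈ S.nbhd e ×ˢ {c}, x q.1 q.2 = ∑ f ∈ S.nbhd e, x f c := by
          simp only [sum_product, sum_singleton]
        rw [← hprod, ← sum_union_inter]
        exact le_add_of_nonneg_right (sum_nonneg fun q _ => hx.nonneg _ _)
    _ ≤ 2 * r + 4 * B / h ^ 4 := add_le_add (hx.sum_nbhd_le e c) (hx.sum_conflict_le e c)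

lemma hasColoring_of_le (hr : 2 * r + 4 * B / h ^ 4 ≤ 1 / 16) : HasColoring S U x := by
  have hμ : IsProbFamily fun e : U => x e :=
    ⟨fun e => hx.nonneg e, fun e => hx.sum_eq_one e e.2⟩
  refine hμ.exists_clashFree_choice (K := fun (e : U) c (f : U) d => S.Clash e c f d)
    (fun e c f d hef heq => hef.ne (congrArg Subtype.val heq)) (fun e c => ?_)
    (fun _ _ _ _ => EdgeSystem.Clash.symm) hr
  calc ∑ q : U × C with S.Clash e c q.1 q.2, x q.1 q.2
      = ∑ f ∈ U, ∑ d, if S.Clash e c f d then x f d else 0 := by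
        rw [sum_filter, Fintype.sum_prod_type, ← sum_coe_sort U]
    _ ≤ ∑ f, ∑ d, if S.Clash e c f d then x f d else 0 :=
        sum_le_univ_sum_of_nonneg fun f => sum_nonneg fun d _ => by
          split_ifs
          · exact hx.nonneg f d
          · exact le_rfl
    _ = ∑ q : E × C with S.Clash e c q.1 q.2, x q.1 q.2 := by
        rw [sum_filter, Fintype.sum_prod_type]
    _ ≤ 2 * r + 4 * B / h ^ 4 := hx.sum_clash_le e c

end IsFractionalColoring

/-! ### One round of random activation -/

lemma one_sub_sum_le_prod_one_sub {κ : Type*} (T : Finset κ) {a : κ → ℝ} (h0 : ∀ i ∈ T, 0 ≤ a i)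
    (h1 : ∀ i ∈ T, a i ≤ 1) : 1 - ∑ i ∈ T, a i ≤ ∏ i ∈ T, (1 - a i) := by
  induction T using Finset.induction_on with
  | empty => simp
  | insert k T hk ih =>
    rw [forall_mem_insert] at h0 h1
    rw [sum_insert hk, prod_insert hk]
    nlinarith [ih h0.2 h1.2, sum_nonneg h0.2, h0.1, h1.1]

section Activation

variable {V E C : Type*}

/-- The pair `(e, c)` is active with probability `p * x e c`. -/
noncomputable def activation (p : ℝ) (x : E → C → ℝ) : E × C → Bool → ℝ :=
  fun i b => if b then p * x i.1 i.2 else 1 - p * x i.1 i.2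

/-- The indicator that `(e, c)` is active. -/
noncomputable def active (ω : E × C → Bool) (e : E) (c : C) : ℝ := if ω (e, c) then 1 else 0

/-- The indicator that no edge in `T` is active with colour `c`. -/
noncomputable def clear (T : Finset E) (c : C) (ω : E × C → Bool) : ℝ := ∏ f ∈ T, (1 - active ω f c)

/-- The expectation of `clear T c`. -/
noncomputable def clearProb (p : ℝ) (x : E → C → ℝ) (T : Finset E) (c : C) : ℝ :=
  ∏ f ∈ T, (1 - p * x f c)

section Indicators

variable (ω : E × C → Bool) (e : E) (c : C) (T : Finset E)

lemma active_nonneg : 0 ≤ active ω e c := by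
  unfold active
  split_ifs <;> norm_num

lemma active_le_one : active ω e c ≤ 1 := by
  unfold active
  split_ifs <;> norm_num

lemma clear_nonneg : 0 ≤ clear T c ω :=
  prod_nonneg fun f _ => sub_nonneg.mpr (active_le_one ω f c)

lemma clear_le_one : clear T c ω ≤ 1 :=
  prod_le_one (fun f _ => sub_nonneg.mpr (active_le_one ω f c)) fun f _ =>
    sub_le_self _ (active_nonneg ω f c)

lemma clear_union {T T' : Finset E} (hT : Disjoint T T') :
    clear (T ∪ T') c ω = clear T c ω * clear T' c ω :=
  prod_union hT

lemma clearProb_union (p : ℝ) (x : E → C → ℝ) {T T' : Finset E} (hT : Disjoint T T') :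
    clearProb p x (T ∪ T') c = clearProb p x T c * clearProb p x T' c :=
  prod_union hT

variable {ω c T}

lemma clear_eq_zero {f : E} (hf : f ∈ T) (hω : ω (f, c)) : clear T c ω = 0 :=
  prod_eq_zero hf (by simp [active, hω])

variable (ω c T)

lemma dependsOn_active : DependsOn (fun ω => active ω e c) {(e, c)} := fun ω ω' hω => by
  simp only [active, hω (e, c) rfl]

lemma dependsOn_clear : DependsOn (clear T c) {i | i.1 ∈ T ∧ i.2 = c} := fun _ _ hω =>
  prod_congr rfl fun f hf => by simp only [active, hω (f, c) ⟨hf, rfl⟩]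

end Indicators

variable [Fintype E] [Fintype C] {h : ℝ}

/-- The indicator that `(e, c)` is active and no edge adjacent to `e` is active with colour `c`. -/
noncomputable def matched (S : EdgeSystem V E C h) (e : E) (c : C) (ω : E × C → Bool) : ℝ :=
  active ω e c * clear (S.nbhd e) c ω

/-- The weight of `c` at `e` after deleting the colours active on adjacent edges, normalised so
that its expectation is `x e c`. -/
noncomputable def clearedWeight (S : EdgeSystem V E C h) (p : ℝ) (x : E → C → ℝ) (e : E) (c : C)
    (ω : E × C → Bool) : ℝ :=
  x e c * (clear (S.nbhd e) c ω / clearProb p x (S.nbhd e) c)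

/-- The total weight left at `e`. -/
noncomputable def retainedWeight (S : EdgeSystem V E C h) (p : ℝ) (x : E → C → ℝ) (e : E)
    (ω : E × C → Bool) : ℝ :=
  ∑ c, clearedWeight S p x e c ω

section Matched

variable (ω : E × C → Bool) (e : E) (c : C) (S : EdgeSystem V E C h)

lemma matched_nonneg : 0 ≤ matched S e c ω :=
  mul_nonneg (active_nonneg ω e c) (clear_nonneg ω c _)

lemma matched_le_one : matched S e c ω ≤ 1 :=
  mul_le_one₀ (active_le_one ω e c) (clear_nonneg ω c _) (clear_le_one ω c _)

lemma dependsOn_matched : DependsOn (matched S e c) {i | (i.1 = e ∨ i.1 ∈ S.nbhd e) ∧ i.2 = c} := by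
  intro ω ω' hω
  unfold matched
  congr 1
  · exact dependsOn_active e c fun i hi => hω i (by simp_all)
  · exact dependsOn_clear c _ fun i hi => hω i ⟨Or.inr hi.1, hi.2⟩

variable {e c ω S}

lemma matched_ne_zero_iff :
    matched S e c ω ≠ 0 ↔ ω (e, c) ∧ ∀ f ∈ S.nbhd e, ¬ω (f, c) := by
  have one_sub_active_ne_zero : ∀ f, 1 - active ω f c ≠ 0 ↔ ¬ω (f, c) := fun f => by
    cases hω : ω (f, c) <;> simp [active, hω]
  rw [matched, clear, mul_ne_zero_iff, prod_ne_zero_iff]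
  simp only [one_sub_active_ne_zero]
  simp [active]

lemma eq_of_matched_ne_zero {v : V} {f : E} (he : e ∈ S.star v) (hf : f ∈ S.star v)
    (hmatched : matched S e c ω ≠ 0) (hf_matched : matched S f c ω ≠ 0) : e = f := by
  by_contra hne
  exact (matched_ne_zero_iff.mp hmatched).2 f (EdgeSystem.mem_nbhd.mpr ⟨hne, v, he, hf⟩)
    (matched_ne_zero_iff.mp hf_matched).1

variable (c ω S)

lemma sum_matched_le_one (v : V) : ∑ e ∈ S.star v, matched S e c ω ≤ 1 := by
  by_cases hex : ∃ e ∈ S.star v, matched S e c ω ≠ 0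
  · obtain ⟨e, he, hmatched⟩ := hex
    rw [sum_eq_single_of_mem e he fun f hf hfe => not_not.mp fun hne =>
      hfe (eq_of_matched_ne_zero hf he hne hmatched)]
    exact matched_le_one ω e c S
  · push Not at hex
    rw [sum_eq_zero hex]
    exact zero_le_one

end Matched

lemma retainedWeight_sub {S : EdgeSystem V E C h} {p : ℝ} {x : E → C → ℝ} {e : E} {c : C}
    {ω ω' : E × C → Bool}
    (hω : ∀ i : E × C, i.2 ≠ c → ω i = ω' i) :
    retainedWeight S p x e ω - retainedWeight S p x e ω' =
      clearedWeight S p x e c ω - clearedWeight S p x e c ω' := by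
  unfold retainedWeight
  rw [← sum_sub_distrib, sum_eq_single c _ (by simp)]
  intro d _ hd
  rw [clearedWeight, clearedWeight,
    dependsOn_clear d (S.nbhd e) fun i hi => hω i (hi.2.trans_ne hd), sub_self]

/-- A fractional colouring whose parameters allow a round of activation with probabilities
`p * x e c`. -/
structure IsNibble (S : EdgeSystem V E C h) (N : ℝ) (U : Finset E) (x : E → C → ℝ) (r B p : ℝ) :
    Prop extends IsFractionalColoring S N U x r B where
  p_nonneg : 0 ≤ p
  p_le : p ≤ 1 / 4
  r_nonneg : 0 ≤ r
  r_le_one : r ≤ 1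
  one_le_B : 1 ≤ B
  four_mul_B_le : 4 * B ≤ h

namespace IsNibble

variable {S : EdgeSystem V E C h} {N r B p : ℝ} {U : Finset E} {x : E → C → ℝ}
  (P : IsNibble S N U x r B p)

include P

lemma activation_nonneg (e : E) (c : C) : 0 ≤ p * x e c := mul_nonneg P.p_nonneg (P.nonneg e c)

lemma activation_le_one (e : E) (c : C) : p * x e c ≤ 1 := by
  nlinarith [P.p_nonneg, P.p_le, P.nonneg e c, P.le_one e c]

lemma isProbFamily : IsProbFamily (activation p x) where
  nonneg i b := by
    unfold activation
    split_ifs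
    · exact P.activation_nonneg _ _
    · exact sub_nonneg.mpr (P.activation_le_one _ _)
  sum_eq_one i := by simp [activation]

lemma half_le_one_sub : 1 / 2 ≤ 1 - p * r := by
  nlinarith [P.p_nonneg, P.p_le, P.r_nonneg, P.r_le_one]

lemma four_mul_B_div_pow_le_one {n : ℕ} (hn : n ≠ 0) : 4 * B / h ^ n ≤ 1 := by
  have hpos := S.pos
  rw [div_le_one (by positivity)]
  exact P.four_mul_B_le.trans (le_self_pow₀ S.one_le hn)

lemma one_sub_le_clearProb {T : Finset E} {c : C} {q : ℝ} (hT : ∑ f ∈ T, x f c ≤ q) :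
    1 - p * q ≤ clearProb p x T c := by
  refine le_trans ?_ (one_sub_sum_le_prod_one_sub T (fun f _ => P.activation_nonneg f c)
    fun f _ => P.activation_le_one f c)
  rw [← mul_sum]
  exact sub_le_sub_left (mul_le_mul_of_nonneg_left hT P.p_nonneg) 1

lemma half_le_clearProb_nbhd (e : E) (c : C) : 1 / 2 ≤ clearProb p x (S.nbhd e) c := by
  refine le_trans ?_ (P.one_sub_le_clearProb (P.sum_nbhd_le e c))
  nlinarith [P.p_nonneg, P.p_le, P.r_nonneg, P.r_le_one]

lemma half_le_clearProb_far {v : V} {e : E} (hv : e ∈ S.star v) (c : C) :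
    1 / 2 ≤ clearProb p x (S.far v e) c :=
  P.half_le_one_sub.trans (P.one_sub_le_clearProb (P.sum_far_le hv c))

lemma expect_active (e : E) (c : C) :
    expect (activation p x) (fun ω => active ω e c) = p * x e c := by
  simpa [active, activation] using
    P.isProbFamily.expect_of_coordinate (e, c) fun b => if b then (1 : ℝ) else 0

lemma expect_clear (T : Finset E) (c : C) :
    expect (activation p x) (clear T c) = clearProb p x T c := by
  refine (P.isProbFamily.expect_prod_of_dependsOn Prod.fst T (fun f ω => 1 - active ω f c)
    fun f _ ω ω' hω => ?_).trans (prod_congr rfl fun f _ => ?_)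
  · simp only [active, hω (f, c) rfl]
  · rw [expect_sub, P.isProbFamily.expect_const, P.expect_active]

lemma expect_matched (e : E) (c : C) :
    expect (activation p x) (matched S e c) = p * x e c * clearProb p x (S.nbhd e) c := by
  unfold matched
  rw [P.isProbFamily.expect_mul_of_dependsOn _ (dependsOn_active e c) (dependsOn_clear c _),
    P.expect_active, P.expect_clear]
  simp [EdgeSystem.mem_nbhd, EdgeSystem.Adj]

lemma clearedWeight_nonneg (e : E) (c : C) (ω : E × C → Bool) : 0 ≤ clearedWeight S p x e c ω :=
  mul_nonneg (P.nonneg e c) (div_nonneg (clear_nonneg ω c _)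
    (one_half_pos.le.trans (P.half_le_clearProb_nbhd e c)))

lemma clearedWeight_le_two_mul (e : E) (c : C) (ω : E × C → Bool) :
    clearedWeight S p x e c ω ≤ 2 * x e c := by
  have hhalf := P.half_le_clearProb_nbhd e c
  rw [mul_comm 2]
  refine mul_le_mul_of_nonneg_left ?_ (P.nonneg e c)
  rw [div_le_iff₀ (one_half_pos.trans_le hhalf)]
  linarith [clear_le_one ω c (S.nbhd e)]

lemma clearedWeight_le (e : E) (c : C) (ω : E × C → Bool) :
    clearedWeight S p x e c ω ≤ 2 * B / h ^ 8 := by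
  rw [mul_div_assoc]
  linarith [P.clearedWeight_le_two_mul e c ω, P.le e c]

lemma expect_retainedWeight {e : E} (he : e ∈ U) :
    expect (activation p x) (retainedWeight S p x e) = 1 := by
  unfold retainedWeight clearedWeight
  rw [expect_sum, ← P.sum_eq_one e he]
  refine sum_congr rfl fun c _ => ?_
  have hhalf := P.half_le_clearProb_nbhd e c
  simp only [div_eq_mul_inv]
  rw [expect_const_mul, expect_mul_const, P.expect_clear, mul_inv_cancel₀ (by linarith), mul_one]

/-- The contributions of the different colours are independent. -/
lemma blockBounded_retainedWeight (e : E) :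
    BlockBounded (activation p x) Prod.snd (retainedWeight S p x e) (fun _ _ => True)
      (fun c => 2 * x e c) (fun _ => 1) where
  abs_sub_le c ω ω' hω := by
    rw [retainedWeight_sub hω]
    exact abs_sub_le_of_nonneg_of_le (P.clearedWeight_nonneg e c ω)
      (P.clearedWeight_le_two_mul e c ω) (P.clearedWeight_nonneg e c ω')
      (P.clearedWeight_le_two_mul e c ω')
  eq_of_not _ _ _ _ hfalse := (hfalse trivial).elim
  dependsOn _ _ _ _ := rfl
  prob_le _ := (P.isProbFamily.prob_of_forall fun _ => trivial).le

lemma sum_sq_le (e : E) : ∑ c, (2 * x e c) ^ 2 ≤ 4 * B / h ^ 8 := by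
  have hpos := S.pos
  have hB := P.one_le_B
  calc ∑ c, (2 * x e c) ^ 2 ≤ ∑ c, 4 * B / h ^ 8 * x e c := by
        refine sum_le_sum fun c _ => ?_
        rw [mul_div_assoc]
        nlinarith [P.le e c, P.nonneg e c]
    _ = 4 * B / h ^ 8 * ∑ c, x e c := by rw [mul_sum]
    _ ≤ 4 * B / h ^ 8 := mul_le_of_le_one_right (by positivity) (P.sum_le_one e)

lemma prob_retainedWeight_lt_le {e : E} (he : e ∈ U) (δ : ℝ) :
    prob (activation p x) (fun ω => retainedWeight S p x e ω < 1 - δ) ≤ Real.exp (1 - h * δ) := by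
  have hpos := S.pos
  refine (P.isProbFamily.prob_mono fun ω hω => ?_).trans
    ((P.blockBounded_retainedWeight e).neg.prob_expect_add_lt_le P.isProbFamily (lam := δ) (K := 1)
      hpos.le (fun c => ?_) ?_)
  · rw [expect_neg, P.expect_retainedWeight he]
    linarith
  · calc h * (2 * x e c) ≤ h * (2 * (B / h ^ 8)) := by
          gcongr
          exact P.le e c
      _ = 4 * B / h ^ 7 / 2 := by
          field_simp
          ring
      _ ≤ 1 := by linarith [P.four_mul_B_div_pow_le_one (n := 7) (by norm_num)]
  · simp only [mul_one]
    calc h ^ 2 * ∑ c, (2 * x e c) ^ 2 ≤ h ^ 2 * (4 * B / h ^ 8) :=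
          mul_le_mul_of_nonneg_left (P.sum_sq_le e) (sq_nonneg h)
      _ = 4 * B / h ^ 6 := by field_simp
      _ ≤ 1 := P.four_mul_B_div_pow_le_one (by norm_num)

end IsNibble

end Activation

/-! ### Concentration of the surviving colour degrees -/

lemma prod_one_sub_le {κ : Type*} (T : Finset κ) {a : κ → ℝ} (h0 : ∀ i ∈ T, 0 ≤ a i)
    (h1 : ∑ i ∈ T, a i ≤ 1) : ∏ i ∈ T, (1 - a i) ≤ 1 - ∑ i ∈ T, a i + (∑ i ∈ T, a i) ^ 2 := by
  have hsum := sum_nonneg h0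
  have hexp := abs_le.mp (Real.abs_exp_sub_one_sub_id_le (x := -∑ i ∈ T, a i)
    (by rwa [abs_neg, abs_of_nonneg hsum]))
  calc ∏ i ∈ T, (1 - a i) ≤ ∏ i ∈ T, Real.exp (-a i) :=
        prod_le_prod (fun i hi => sub_nonneg.mpr ((single_le_sum h0 hi).trans h1))
          fun i _ => Real.one_sub_le_exp_neg (a i)
    _ = Real.exp (-∑ i ∈ T, a i) := by rw [← Real.exp_sum, sum_neg_distrib]
    _ ≤ _ := by linarith [hexp.2, neg_sq (∑ i ∈ T, a i)]

section SurvivingDegree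

variable {V E C : Type*}

/-- The blocks used for `survivingDegree S p x v c`: single pairs `(f, c)`, and all pairs of
another colour. -/
noncomputable def blockLabel (c : C) (i : E × C) : E ⊕ C := if i.2 = c then .inl i.1 else .inr i.2

lemma blockLabel_ne_inl {c : C} {f : E} {i : E × C} (hi : i ≠ (f, c)) :
    blockLabel c i ≠ .inl f := by
  unfold blockLabel
  split_ifs with hic
  · exact fun heq => hi (Prod.ext (Sum.inl_injective heq) hic)
  · exact Sum.inr_ne_inl

lemma blockLabel_ne_inr {c d : C} {i : E × C} (hi : d ≠ c → i.2 ≠ d) :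
    blockLabel c i ≠ .inr d := by
  unfold blockLabel
  split_ifs with hic
  · exact Sum.inl_ne_inr
  · exact fun heq => hi (Sum.inr_injective heq ▸ hic) (Sum.inr_injective heq)

variable [Fintype E] [Fintype C] {h : ℝ}

/-- For an edge `e` at `v`: the indicator that `c` is not active on the edges meeting `e` in its
other end and that `e` is not matched to a colour other than `c`. -/
noncomputable def survival (S : EdgeSystem V E C h) (v : V) (e : E) (c : C)
    (ω : E × C → Bool) : ℝ :=
  clear (S.far v e) c ω * ∏ d ∈ univ.erase c, (1 - matched S e d ω)

/-- The total weight of the colour `c` at `v` that survives the round, when `c` itself is not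
active at `v`. -/
noncomputable def survivingDegree (S : EdgeSystem V E C h) (p : ℝ) (x : E → C → ℝ) (v : V) (c : C)
    (ω : E × C → Bool) : ℝ :=
  ∑ e ∈ S.star v, x e c / clearProb p x (S.far v e) c * survival S v e c ω

section Survival

variable (S : EdgeSystem V E C h) (v : V) (e : E) (c : C)

lemma prod_one_sub_matched_mem_Icc (T : Finset C) (ω : E × C → Bool) :
    ∏ d ∈ T, (1 - matched S e d ω) ∈ Set.Icc 0 1 := by
  have h0 : ∀ d ∈ T, 0 ≤ 1 - matched S e d ω := fun d _ =>
    sub_nonneg.mpr (matched_le_one ω e d S)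
  exact ⟨prod_nonneg h0, prod_le_one h0 fun d _ => sub_le_self _ (matched_nonneg ω e d S)⟩

lemma clear_mul_prod_mem_Icc (T : Finset C) (ω : E × C → Bool) :
    clear (S.far v e) c ω * ∏ d ∈ T, (1 - matched S e d ω) ∈ Set.Icc 0 1 := by
  obtain ⟨h0, h1⟩ := prod_one_sub_matched_mem_Icc S e T ω
  exact ⟨mul_nonneg (clear_nonneg ω c _) h0, mul_le_one₀ (clear_le_one ω c _) h0 h1⟩

lemma dependsOn_survival :
    DependsOn (survival S v e c) {i | i.2 = c → i.1 ∈ S.far v e} := by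
  intro ω ω' hω
  unfold survival
  congr 1
  · exact dependsOn_clear c _ fun i hi => hω i fun _ => hi.1
  · refine prod_congr rfl fun d hd => ?_
    rw [dependsOn_matched e d S fun i hi => hω i fun hic =>
      absurd (hi.2.symm.trans hic) (ne_of_mem_erase hd)]

variable {c}

lemma abs_survival_sub_le {d : C} (hd : d ≠ c) {ω ω' : E × C → Bool}
    (hω : ∀ i : E × C, i.2 ≠ d → ω i = ω' i) :
    |survival S v e c ω - survival S v e c ω'| ≤ matched S e d ω + matched S e d ω' := by
  have hfactor : ∀ ω, survival S v e c ω = (clear (S.far v e) c ω *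
      ∏ b ∈ (univ.erase c).erase d, (1 - matched S e b ω)) * (1 - matched S e d ω) := by
    intro ω
    rw [survival, ← mul_prod_erase _ _ (mem_erase.mpr ⟨hd, mem_univ d⟩)]
    ring
  have hrest : clear (S.far v e) c ω * ∏ b ∈ (univ.erase c).erase d, (1 - matched S e b ω) =
      clear (S.far v e) c ω' * ∏ b ∈ (univ.erase c).erase d, (1 - matched S e b ω') := by
    congr 1
    · exact dependsOn_clear c _ fun i hi => hω i (hi.2.trans_ne hd.symm)
    · refine prod_congr rfl fun b hb => ?_
      rw [dependsOn_matched e b S fun i hi => hω i (hi.2.trans_ne (ne_of_mem_erase hb))]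
  obtain ⟨hrest0, hrest1⟩ := clear_mul_prod_mem_Icc S v e c ((univ.erase c).erase d) ω'
  rw [hfactor ω, hfactor ω', hrest, ← mul_sub, abs_mul, abs_of_nonneg hrest0]
  refine (mul_le_of_le_one_left (abs_nonneg _) hrest1).trans ?_
  rw [sub_sub_sub_cancel_left, add_comm]
  refine (abs_sub _ _).trans ?_
  rw [abs_of_nonneg (matched_nonneg ω e d S), abs_of_nonneg (matched_nonneg ω' e d S)]

end Survival

namespace IsNibble

variable {S : EdgeSystem V E C h} {N r B p : ℝ} {U : Finset E} {x : E → C → ℝ}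
  (P : IsNibble S N U x r B p)

include P

lemma clearProb_mem_Icc_nbhd (e : E) (c : C) :
    clearProb p x (S.nbhd e) c ∈ Set.Icc (1 - 2 * p) 1 := by
  refine ⟨le_trans ?_ (P.one_sub_le_clearProb (P.sum_nbhd_le e c)), prod_le_one
    (fun f _ => sub_nonneg.mpr (P.activation_le_one f c)) fun f _ =>
      sub_le_self _ (P.activation_nonneg f c)⟩
  nlinarith [P.p_nonneg, P.r_le_one]

lemma expect_survival (v : V) (e : E) (c : C) :
    expect (activation p x) (survival S v e c) = clearProb p x (S.far v e) c *
      ∏ d ∈ univ.erase c, (1 - p * x e d * clearProb p x (S.nbhd e) d) := by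
  have hfactor := P.isProbFamily.expect_prod_of_dependsOn Prod.snd (univ.erase c)
    (fun d ω => 1 - matched S e d ω) fun d _ ω ω' hω => by
      simp only [dependsOn_matched e d S fun i hi => hω i hi.2]
  unfold survival
  rw [P.isProbFamily.expect_mul_of_dependsOn (T := {i | i.2 ≠ c}) _ (dependsOn_clear c _) _,
    P.expect_clear, hfactor]
  · simp only [expect_sub, P.isProbFamily.expect_const, P.expect_matched]
  · exact Set.disjoint_left.mpr fun i hi hic => hic hi.2
  · exact fun ω ω' hω => prod_congr rfl fun d hd => by
      rw [dependsOn_matched e d S fun i hi => hω i (hi.2.trans_ne (ne_of_mem_erase hd))]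

lemma prod_one_sub_expect_matched_le {e : E} (he : e ∈ U) (c : C) :
    ∏ d ∈ univ.erase c, (1 - p * x e d * clearProb p x (S.nbhd e) d) ≤
      1 - p + 3 * p ^ 2 + B / h ^ 8 := by
  set a : C → ℝ := fun d => p * x e d * clearProb p x (S.nbhd e) d
  have hp := P.p_nonneg
  have hp_le := P.p_le
  have hx := P.nonneg e c
  have hsum : ∑ d ∈ univ.erase c, p * x e d = p * (1 - x e c) := by
    rw [← mul_sum, ← P.sum_eq_one e he, ← add_sum_erase univ _ (mem_univ c), add_sub_cancel_left]
  have a_nonneg : ∀ d ∈ univ.erase c, 0 ≤ a d := fun d _ =>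
    mul_nonneg (P.activation_nonneg e d) (one_half_pos.le.trans (P.half_le_clearProb_nbhd e d))
  have sum_a_le : ∑ d ∈ univ.erase c, a d ≤ p * (1 - x e c) :=
    hsum ▸ sum_le_sum fun d _ =>
      mul_le_of_le_one_right (P.activation_nonneg e d) (P.clearProb_mem_Icc_nbhd e d).2
  have le_sum_a : p * (1 - x e c) * (1 - 2 * p) ≤ ∑ d ∈ univ.erase c, a d := by
    rw [← hsum, sum_mul]
    exact sum_le_sum fun d _ =>
      mul_le_mul_of_nonneg_left (P.clearProb_mem_Icc_nbhd e d).1 (P.activation_nonneg e d)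
  have sum_a_le_p : ∑ d ∈ univ.erase c, a d ≤ p := sum_a_le.trans (by nlinarith)
  have sq_le : (∑ d ∈ univ.erase c, a d) ^ 2 ≤ p ^ 2 :=
    pow_le_pow_left₀ (sum_nonneg a_nonneg) sum_a_le_p 2
  have lower_order : p * x e c * (1 - 2 * p) ≤ x e c := by nlinarith
  linarith [prod_one_sub_le _ a_nonneg (sum_a_le_p.trans (by linarith)), P.le e c]

lemma expect_survivingDegree_le (v : V) (c : C) :
    expect (activation p x) (survivingDegree S p x v c) ≤
      r * (1 - p + 3 * p ^ 2 + B / h ^ 8) := by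
  have hpos := S.pos
  have hB := P.one_le_B
  have hfactor : 0 ≤ 1 - p + 3 * p ^ 2 + B / h ^ 8 := by
    have : 0 ≤ 1 - p := by linarith [P.p_le]
    positivity
  calc expect (activation p x) (survivingDegree S p x v c)
      = ∑ e ∈ S.star v,
          x e c * ∏ d ∈ univ.erase c, (1 - p * x e d * clearProb p x (S.nbhd e) d) := by
        unfold survivingDegree
        rw [expect_sum]
        refine sum_congr rfl fun e he => ?_
        rw [expect_const_mul, P.expect_survival, ← mul_assoc,
          div_mul_cancel₀ _ (one_half_pos.trans_le (P.half_le_clearProb_far he c)).ne']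
    _ ≤ ∑ e ∈ S.star v, x e c * (1 - p + 3 * p ^ 2 + B / h ^ 8) := by
        refine sum_le_sum fun e _ => ?_
        by_cases he : e ∈ U
        · exact mul_le_mul_of_nonneg_left (P.prod_one_sub_expect_matched_le he c) (P.nonneg e c)
        · simp only [P.eq_zero e he, zero_mul, le_rfl]
    _ ≤ r * (1 - p + 3 * p ^ 2 + B / h ^ 8) := by
        rw [← sum_mul]
        exact mul_le_mul_of_nonneg_right (P.colorDegree_le v c) hfactor

lemma abs_survivingDegree_sub_le (v : V) (c : C) (ω ω' : E × C → Bool) :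
    |survivingDegree S p x v c ω - survivingDegree S p x v c ω'| ≤
      2 * B / h ^ 8 * ∑ e ∈ S.star v, |survival S v e c ω - survival S v e c ω'| := by
  unfold survivingDegree
  rw [← sum_sub_distrib, mul_sum]
  refine (abs_sum_le_sum_abs _ _).trans (sum_le_sum fun e he => ?_)
  have hhalf := P.half_le_clearProb_far he c
  rw [← mul_sub, abs_mul, abs_of_nonneg (div_nonneg (P.nonneg e c) (by linarith))]
  refine mul_le_mul_of_nonneg_right ?_ (abs_nonneg _)
  rw [div_le_iff₀ (by linarith), mul_div_assoc]
  nlinarith [P.le e c, P.nonneg e c]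

lemma abs_survivingDegree_sub_le_of_edge (v : V) {c : C} {f : E} {ω ω' : E × C → Bool}
    (hω : ∀ i, i ≠ (f, c) → ω i = ω' i) :
    |survivingDegree S p x v c ω - survivingDegree S p x v c ω'| ≤
      2 * B / h ^ 8 * #{e ∈ S.star v | f ∈ S.far v e} := by
  have hpos := S.pos
  have hB := P.one_le_B
  refine (P.abs_survivingDegree_sub_le v c ω ω').trans
    (mul_le_mul_of_nonneg_left ?_ (by positivity))
  rw [card_filter, Nat.cast_sum]
  refine sum_le_sum fun e _ => ?_
  split_ifs with hf
  · obtain ⟨h0, h1⟩ := clear_mul_prod_mem_Icc S v e c (univ.erase c) ω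
    obtain ⟨h0', h1'⟩ := clear_mul_prod_mem_Icc S v e c (univ.erase c) ω'
    rw [Nat.cast_one]
    exact abs_sub_le_of_nonneg_of_le h0 h1 h0' h1'
  · rw [dependsOn_survival S v e c fun i hi => hω i ?_, sub_self, abs_zero, Nat.cast_zero]
    rintro rfl
    exact hf (hi rfl)

lemma abs_survivingDegree_sub_le_of_color (v : V) {c d : C} {ω ω' : E × C → Bool}
    (hω : ∀ i : E × C, (d ≠ c → i.2 ≠ d) → ω i = ω' i) :
    |survivingDegree S p x v c ω - survivingDegree S p x v c ω'| ≤
      2 * B / h ^ 8 * (∑ e ∈ S.star v, matched S e d ω + ∑ e ∈ S.star v, matched S e d ω') := by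
  have hpos := S.pos
  have hB := P.one_le_B
  have hnonneg := fun ω => sum_nonneg fun e (_ : e ∈ S.star v) => matched_nonneg ω e d S
  rcases eq_or_ne d c with rfl | hd
  · rw [funext fun i => hω i fun hne => absurd rfl hne, sub_self, abs_zero]
    have := hnonneg ω'
    positivity
  · refine (P.abs_survivingDegree_sub_le v c ω ω').trans
      (mul_le_mul_of_nonneg_left ?_ (by positivity))
    rw [← sum_add_distrib]
    exact sum_le_sum fun e _ => abs_survival_sub_le S v e hd fun i hi => hω i fun _ => hi

lemma prob_active (e : E) (c : C) : prob (activation p x) (fun ω => ω (e, c)) = p * x e c := by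
  rw [← P.expect_active]
  unfold prob active
  congr!

lemma prob_exists_active_le (v : V) (c : C) :
    prob (activation p x) (fun ω => ∃ e ∈ S.star v, ω (e, c)) ≤ ∑ e ∈ S.star v, p * x e c :=
  (P.isProbFamily.prob_exists_le _ _).trans_eq (sum_congr rfl fun e _ => P.prob_active e c)

lemma blockBounded_survivingDegree (v : V) (c : C) :
    BlockBounded (activation p x) (blockLabel c) (survivingDegree S p x v c)
      (Sum.elim (fun f ω => ω (f, c)) fun d ω => d ≠ c ∧ ∃ e ∈ S.star v, ω (e, d))
      (Sum.elim (fun f => 2 * B / h ^ 8 * #{e ∈ S.star v | f ∈ S.far v e}) fun _ => 4 * B / h ^ 8)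
      (Sum.elim (fun f => p * x f c) fun d => ∑ e ∈ S.star v, p * x e d) where
  abs_sub_le := by
    have hpos := S.pos
    have hB := P.one_le_B
    rintro (f | d) ω ω' hω
    · exact P.abs_survivingDegree_sub_le_of_edge v fun i hi => hω i (blockLabel_ne_inl hi)
    · refine (P.abs_survivingDegree_sub_le_of_color v fun i hi =>
        hω i (blockLabel_ne_inr hi)).trans ?_
      calc _ ≤ 2 * B / h ^ 8 * (1 + 1) := by
            gcongr <;> exact sum_matched_le_one _ d S v
        _ = 4 * B / h ^ 8 := by ring
  eq_of_not := by
    rintro (f | d) ω ω' hω hinactive hinactive'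
    · refine congrArg _ (funext fun i => ?_)
      by_cases hi : i = (f, c)
      · simp_all
      · exact hω i (blockLabel_ne_inl hi)
    · rcases eq_or_ne d c with rfl | hd
      · exact congrArg _ (funext fun i => hω i (blockLabel_ne_inr fun hne => absurd rfl hne))
      · have hmatched : ∀ ω : E × C → Bool, ¬(d ≠ c ∧ ∃ e ∈ S.star v, ω (e, d)) →
            ∑ e ∈ S.star v, matched S e d ω = 0 := fun ω hinactive =>
          sum_eq_zero fun e he => not_not.mp fun hne =>
            hinactive ⟨hd, e, he, (matched_ne_zero_iff.mp hne).1⟩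
        have hle := P.abs_survivingDegree_sub_le_of_color v fun i hi => hω i (blockLabel_ne_inr hi)
        rw [hmatched ω hinactive, hmatched ω' hinactive', add_zero, mul_zero] at hle
        exact sub_eq_zero.mp (abs_nonpos_iff.mp hle)
  dependsOn := by
    rintro (f | d) ω ω' hω
    · simp only [Sum.elim_inl, hω (f, c) (by simp [blockLabel])]
    · refine propext (and_congr_right fun hd => exists_congr fun e => ?_)
      rw [hω (e, d) (by simp [blockLabel, hd])]
  prob_le := by
    rintro (f | d)
    · exact (P.prob_active f c).le
    · exact (P.isProbFamily.prob_mono fun ω hω => hω.2).trans (P.prob_exists_active_le v d)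

lemma sum_card_far_mul_le (v : V) (c : C) :
    ∑ f, (#{e ∈ S.star v | f ∈ S.far v e} : ℝ) * x f c ≤ h ^ 8 := by
  calc ∑ f, (#{e ∈ S.star v | f ∈ S.far v e} : ℝ) * x f c
      = ∑ e ∈ S.star v, ∑ f ∈ S.far v e, x f c := by
        simp only [card_filter, Nat.cast_sum, sum_mul]
        rw [sum_comm]
        refine sum_congr rfl fun e _ => ?_
        simp only [Nat.cast_ite, Nat.cast_one, Nat.cast_zero, ite_mul, one_mul, zero_mul,
          sum_ite_mem, univ_inter]
    _ ≤ #(S.star v) • (1 : ℝ) :=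
        sum_le_card_nsmul _ _ _ fun e he => (P.sum_far_le he c).trans P.r_le_one
    _ ≤ h ^ 8 := by
        rw [nsmul_one]
        exact S.card_star_le v

lemma sum_activation_le_one (e : E) : ∑ c, p * x e c ≤ 1 := by
  rw [← mul_sum]
  exact mul_le_one₀ (P.p_le.trans (by norm_num)) (sum_nonneg fun c _ => P.nonneg e c)
    (P.sum_le_one e)

lemma sum_activation_star_le (v : V) : ∑ e ∈ S.star v, ∑ c, p * x e c ≤ h ^ 8 := by
  calc ∑ e ∈ S.star v, ∑ c, p * x e c ≤ #(S.star v) • (1 : ℝ) :=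
        sum_le_card_nsmul _ _ _ fun e _ => P.sum_activation_le_one e
    _ ≤ h ^ 8 := by
        rw [nsmul_one]
        exact S.card_star_le v

lemma sum_sq_edge_block_le (v : V) (c : C) :
    ∑ f, (2 * B / h ^ 8 * #{e ∈ S.star v | f ∈ S.far v e}) ^ 2 * (p * x f c) ≤
      8 * B ^ 2 / h ^ 8 := by
  have hpos := S.pos
  calc ∑ f, (2 * B / h ^ 8 * #{e ∈ S.star v | f ∈ S.far v e}) ^ 2 * (p * x f c)
      ≤ ∑ f, 8 * B ^ 2 / h ^ 16 * ((#{e ∈ S.star v | f ∈ S.far v e} : ℝ) * x f c) := by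
        refine sum_le_sum fun f _ => ?_
        set n := (#{e ∈ S.star v | f ∈ S.far v e} : ℝ)
        have hn0 : 0 ≤ n := Nat.cast_nonneg _
        have hn2 : n ≤ 2 := Nat.cast_le_ofNat.mpr (S.card_filter_mem_far_le_two v f)
        have hnp : n * p ≤ 2 := by nlinarith [P.p_nonneg, P.p_le]
        calc (2 * B / h ^ 8 * n) ^ 2 * (p * x f c)
            = 4 * B ^ 2 / h ^ 16 * (n * p * (n * x f c)) := by ring
          _ ≤ 4 * B ^ 2 / h ^ 16 * (2 * (n * x f c)) := by
              have := P.nonneg f c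
              gcongr
          _ = 8 * B ^ 2 / h ^ 16 * (n * x f c) := by ring
    _ ≤ 8 * B ^ 2 / h ^ 16 * h ^ 8 := by
        rw [← mul_sum]
        exact mul_le_mul_of_nonneg_left (P.sum_card_far_mul_le v c) (by positivity)
    _ = 8 * B ^ 2 / h ^ 8 := by field_simp

lemma sum_sq_color_block_le (v : V) :
    ∑ d, (4 * B / h ^ 8) ^ 2 * ∑ e ∈ S.star v, p * x e d ≤ 16 * B ^ 2 / h ^ 8 := by
  have hpos := S.pos
  calc ∑ d, (4 * B / h ^ 8) ^ 2 * ∑ e ∈ S.star v, p * x e d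
      ≤ (4 * B / h ^ 8) ^ 2 * h ^ 8 := by
        rw [← mul_sum, sum_comm]
        exact mul_le_mul_of_nonneg_left (P.sum_activation_star_le v) (by positivity)
    _ = 16 * B ^ 2 / h ^ 8 := by
        field_simp
        ring

lemma prob_lt_survivingDegree_le (v : V) (c : C) (δ : ℝ) :
    prob (activation p x)
        (fun ω => r * (1 - p + 3 * p ^ 2 + B / h ^ 8) + δ < survivingDegree S p x v c ω) ≤
      Real.exp (2 - h * δ) := by
  have hpos := S.pos
  have hB := P.one_le_B
  refine (P.isProbFamily.prob_mono fun ω hω => ?_).trans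
    ((P.blockBounded_survivingDegree v c).prob_expect_add_lt_le P.isProbFamily (lam := δ) (K := 2)
      hpos.le ?_ ?_)
  · linarith [P.expect_survivingDegree_le v c]
  · have hcolor : h * (4 * B / h ^ 8) ≤ 1 := by
      calc h * (4 * B / h ^ 8) = 4 * B / h ^ 7 := by field_simp
        _ ≤ 1 := P.four_mul_B_div_pow_le_one (by norm_num)
    rintro (f | _)
    · have hcard : (#{e ∈ S.star v | f ∈ S.far v e} : ℝ) ≤ 2 :=
        mod_cast S.card_filter_mem_far_le_two v f
      calc h * (2 * B / h ^ 8 * #{e ∈ S.star v | f ∈ S.far v e})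
          ≤ h * (2 * B / h ^ 8 * 2) := by gcongr
        _ = h * (4 * B / h ^ 8) := by ring
        _ ≤ 1 := hcolor
    · exact hcolor
  · rw [Fintype.sum_sum_type]
    calc _ ≤ h ^ 2 * (8 * B ^ 2 / h ^ 8 + 16 * B ^ 2 / h ^ 8) :=
          mul_le_mul_of_nonneg_left (add_le_add (P.sum_sq_edge_block_le v c)
            (P.sum_sq_color_block_le v)) (sq_nonneg h)
      _ = 3 / 2 * (4 * B / h ^ 3) ^ 2 := by
          field_simp
          ring
      _ ≤ 3 / 2 * 1 := by
          gcongr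
          exact pow_le_one₀ (by positivity) (P.four_mul_B_div_pow_le_one (by norm_num))
      _ ≤ 2 := by norm_num

end IsNibble

end SurvivingDegree

/-! ### Concentration of the number of spoiled colours -/

lemma abs_card_filter_sub_card_filter_le {κ : Type*} [Fintype κ] {T : Finset κ} {A A' : κ → Prop}
    (hA : ∀ k ∉ T, (A k ↔ A' k)) : |(#{k | A k} : ℝ) - #{k | A' k}| ≤ #T := by
  have card_le : ∀ {A A' : κ → Prop}, (∀ k ∉ T, (A k ↔ A' k)) →
      (#{k | A k} : ℝ) ≤ #{k | A' k} + #T := by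
    intro A A' hA
    have hsub : ({k | A k} : Finset κ) ⊆ univ.filter A' ∪ T := fun k hk => by
      by_cases hkT : k ∈ T
      · exact mem_union_right _ hkT
      · exact mem_union_left _ (by simpa [← hA k hkT] using hk)
    exact_mod_cast (card_le_card hsub).trans (card_union_le _ _)
  rw [abs_sub_le_iff, sub_le_iff_le_add', sub_le_iff_le_add']
  exact ⟨card_le hA, card_le fun k hk => (hA k hk).symm⟩

section Spoiled

variable {V E C : Type*} [Fintype E] [Fintype C] {h : ℝ}

/-- The colour `c` is active on an edge at `v` while a conflicting pair is active. -/
def Spoiled (S : EdgeSystem V E C h) (v : V) (c : C) (ω : E × C → Bool) : Prop :=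
  ∃ e ∈ S.star v, ω (e, c) ∧ ∃ q : E × C, S.Conflict e c q.1 q.2 ∧ ω q

/-- The number of colours spoiled at `v`, in units of the degree bound `h ^ 8`. -/
noncomputable def spoiledDensity (S : EdgeSystem V E C h) (v : V) (ω : E × C → Bool) : ℝ :=
  #{c | Spoiled S v c ω} / h ^ 8

/-- The colours that the pair `q` can take part in spoiling at `v`. -/
noncomputable def spoilable (S : EdgeSystem V E C h) (v : V) (q : E × C) : Finset C :=
  {c | (q.1 ∈ S.star v ∧ c = q.2) ∨ ∃ e ∈ S.star v, S.Conflict e c q.1 q.2}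

section

variable (S : EdgeSystem V E C h) (v : V)

lemma spoiled_of_notMem_spoilable {q : E × C} {c : C} (hc : c ∉ spoilable S v q)
    {ω ω' : E × C → Bool} (hω : ∀ i, i ≠ q → ω i = ω' i) (hspoiled : Spoiled S v c ω) :
    Spoiled S v c ω' := by
  simp only [spoilable, mem_filter_univ, not_or, not_and, not_exists] at hc
  obtain ⟨e, he, hactive, q', hconflict, hactive'⟩ := hspoiled
  refine ⟨e, he, ?_, q', hconflict, ?_⟩
  · rwa [← hω (e, c) fun heq => hc.1 (heq ▸ he) (heq ▸ rfl)]
  · rwa [← hω q' fun heq => hc.2 e he (heq ▸ hconflict)]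

lemma card_spoilable_le (q : E × C) : (#(spoilable S v q) : ℝ) ≤ 4 * h ^ 2 := by
  have hsub : spoilable S v q ⊆ {q.2} ∪ univ.filter fun c => ∃ e, S.Conflict e c q.1 q.2 := by
    intro c hc
    simp only [spoilable, mem_filter_univ] at hc
    rw [mem_union, mem_singleton, mem_filter_univ]
    exact hc.imp And.right fun ⟨e, _, hconflict⟩ => ⟨e, hconflict⟩
  have hcard : (#(spoilable S v q) : ℝ) ≤ 1 + #{c | ∃ e, S.Conflict e c q.1 q.2} :=
    mod_cast (card_le_card hsub).trans (card_union_le _ _)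
  linarith [S.card_conflicting_colors_le q.1 q.2, one_le_pow₀ S.one_le (n := 2)]

lemma card_spoilable_le_sum (q : E × C) : (#(spoilable S v q) : ℝ) ≤
    (if q.1 ∈ S.star v then 1 else 0) + ∑ e ∈ S.star v, S.mult e q.1 := by
  have hsub : spoilable S v q ⊆ (if q.1 ∈ S.star v then {q.2} else ∅) ∪
      (S.star v).biUnion fun e => {c | S.Conflict e c q.1 q.2} := by
    intro c hc
    simp only [spoilable, mem_filter_univ] at hc
    simp only [mem_union, mem_biUnion, mem_filter_univ]
    exact hc.imp_left fun ⟨hq, hc⟩ => by simp [hq, hc]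
  calc (#(spoilable S v q) : ℝ)
      ≤ #(if q.1 ∈ S.star v then {q.2} else ∅ : Finset C) +
          ∑ e ∈ S.star v, (#{c | S.Conflict e c q.1 q.2} : ℝ) :=
        mod_cast ((card_le_card hsub).trans (card_union_le _ _)).trans
          (Nat.add_le_add_left card_biUnion_le _)
    _ ≤ _ := by
        refine add_le_add (by split_ifs <;> simp) ?_
        exact sum_le_sum fun e _ => S.card_conflict_le e q.1 q.2

end

namespace IsNibble

variable {S : EdgeSystem V E C h} {N r B p : ℝ} {U : Finset E} {x : E → C → ℝ}
  (P : IsNibble S N U x r B p)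

include P

lemma blockBounded_spoiledDensity (v : V) :
    BlockBounded (activation p x) id (spoiledDensity S v) (fun q ω => ω q)
      (fun q => #(spoilable S v q) / h ^ 8) (fun q => p * x q.1 q.2) where
  abs_sub_le q ω ω' hω := by
    have hpos := S.pos
    rw [spoiledDensity, spoiledDensity, ← sub_div, abs_div, abs_of_pos (pow_pos hpos 8)]
    refine div_le_div_of_nonneg_right ?_ (by positivity)
    exact abs_card_filter_sub_card_filter_le fun c hc =>
      ⟨spoiled_of_notMem_spoilable S v hc hω,
        spoiled_of_notMem_spoilable S v hc fun i hi => (hω i hi).symm⟩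
  eq_of_not q ω ω' hω hinactive hinactive' := by
    refine congrArg _ (funext fun i => ?_)
    by_cases hi : i = q
    · simp_all
    · exact hω i hi
  dependsOn q ω ω' hω := by simp only [hω q rfl]
  prob_le q := (P.prob_active q.1 q.2).le

lemma prob_active_and_active_le {e : E} {c : C} {q : E × C} (hq : S.Conflict e c q.1 q.2) :
    prob (activation p x) (fun ω => ω (e, c) ∧ ω q) ≤ x e c * x q.1 q.2 := by
  have activation_le : ∀ e c, p * x e c ≤ x e c := fun e c =>
    mul_le_of_le_one_left (P.nonneg e c) (P.p_le.trans (by norm_num))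
  have hne : (e, c) ≠ q := fun heq => S.conflict_ne hq (congrArg Prod.fst heq)
  rw [P.isProbFamily.prob_and_of_dependsOn (S := {(e, c)}) (T := {q})
    (Set.disjoint_singleton.mpr hne) (fun ω ω' hω => by rw [hω _ rfl])
    (fun ω ω' hω => by rw [hω _ rfl]), P.prob_active, P.prob_active q.1 q.2]
  exact mul_le_mul (activation_le e c) (activation_le q.1 q.2) (P.activation_nonneg q.1 q.2)
    (P.nonneg e c)

lemma prob_spoiled_le (v : V) (c : C) :
    prob (activation p x) (Spoiled S v c) ≤ ∑ e ∈ S.star v, x e c * (4 * B / h ^ 4) := by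
  calc prob (activation p x) (Spoiled S v c)
      ≤ prob (activation p x) fun ω => ∃ e ∈ S.star v,
          ∃ q ∈ univ.filter fun q : E × C => S.Conflict e c q.1 q.2, ω (e, c) ∧ ω q := by
        refine P.isProbFamily.prob_mono ?_
        rintro ω ⟨e, he, hactive, q, hq, hactive'⟩
        exact ⟨e, he, q, mem_filter.mpr ⟨mem_univ q, hq⟩, hactive, hactive'⟩
    _ ≤ ∑ e ∈ S.star v, ∑ q : E × C with S.Conflict e c q.1 q.2,
          prob (activation p x) fun ω => ω (e, c) ∧ ω q :=
        (P.isProbFamily.prob_exists_le _ _).trans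
          (sum_le_sum fun e _ => P.isProbFamily.prob_exists_le _ _)
    _ ≤ ∑ e ∈ S.star v, x e c * (4 * B / h ^ 4) := by
        refine sum_le_sum fun e _ => ?_
        calc _ ≤ ∑ q : E × C with S.Conflict e c q.1 q.2, x e c * x q.1 q.2 :=
              sum_le_sum fun q hq => P.prob_active_and_active_le (mem_filter.mp hq).2
          _ ≤ x e c * (4 * B / h ^ 4) := by
              rw [← mul_sum]
              exact mul_le_mul_of_nonneg_left (P.sum_conflict_le e c) (P.nonneg e c)

lemma expect_spoiledDensity_le (v : V) :
    expect (activation p x) (spoiledDensity S v) ≤ 4 * B / h ^ 4 := by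
  have hpos := S.pos
  have hB := P.one_le_B
  have hexpect : expect (activation p x) (spoiledDensity S v) =
      (∑ c, prob (activation p x) (Spoiled S v c)) * (h ^ 8)⁻¹ := by
    unfold spoiledDensity
    simp only [div_eq_mul_inv, card_filter, Nat.cast_sum, Nat.cast_ite,
      Nat.cast_one, Nat.cast_zero, expect_mul_const, expect_sum, prob]
  have hsum : ∑ c, prob (activation p x) (Spoiled S v c) ≤ h ^ 8 * (4 * B / h ^ 4) := by
    calc ∑ c, prob (activation p x) (Spoiled S v c)
        ≤ ∑ c, ∑ e ∈ S.star v, x e c * (4 * B / h ^ 4) :=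
          sum_le_sum fun c _ => P.prob_spoiled_le v c
      _ = ∑ e ∈ S.star v, (∑ c, x e c) * (4 * B / h ^ 4) := by
          rw [sum_comm]
          simp only [sum_mul]
      _ ≤ #(S.star v) • (4 * B / h ^ 4) := sum_le_card_nsmul _ _ _ fun e _ =>
          mul_le_of_le_one_left (by positivity) (P.sum_le_one e)
      _ ≤ h ^ 8 * (4 * B / h ^ 4) := by
          rw [nsmul_eq_mul]
          exact mul_le_mul_of_nonneg_right (S.card_star_le v) (by positivity)
  rw [hexpect, ← div_eq_mul_inv, div_le_iff₀ (by positivity)]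
  linarith

lemma sum_card_spoilable_mul_le (v : V) :
    ∑ q : E × C, (#(spoilable S v q) : ℝ) * (p * x q.1 q.2) ≤ 5 * h ^ 12 := by
  have hpos := S.pos
  calc ∑ q : E × C, (#(spoilable S v q) : ℝ) * (p * x q.1 q.2)
      ≤ ∑ q : E × C, ((if q.1 ∈ S.star v then 1 else 0) + ∑ e ∈ S.star v, S.mult e q.1) *
          (p * x q.1 q.2) :=
        sum_le_sum fun q _ => mul_le_mul_of_nonneg_right (card_spoilable_le_sum S v q)
          (P.activation_nonneg q.1 q.2)
    _ = ∑ f, ((if f ∈ S.star v then 1 else 0) + ∑ e ∈ S.star v, S.mult e f) * ∑ c, p * x f c := by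
        simp only [Fintype.sum_prod_type, mul_sum]
    _ ≤ ∑ f, ((if f ∈ S.star v then 1 else 0) + ∑ e ∈ S.star v, S.mult e f) := by
        refine sum_le_sum fun f _ => mul_le_of_le_one_right (add_nonneg ?_ ?_)
          (P.sum_activation_le_one f)
        · split_ifs <;> norm_num
        · exact sum_nonneg fun e _ => S.mult_nonneg e f
    _ = #(S.star v) + ∑ e ∈ S.star v, ∑ f, S.mult e f := by
        rw [sum_add_distrib, sum_comm (s := univ), sum_ite_mem, univ_inter, sum_const, nsmul_one]
    _ ≤ h ^ 8 + h ^ 8 * (4 * h ^ 4) := by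
        refine add_le_add (S.card_star_le v) ((sum_le_card_nsmul _ _ _ fun e _ =>
          S.sum_mult_le e).trans ?_)
        rw [nsmul_eq_mul]
        exact mul_le_mul_of_nonneg_right (S.card_star_le v) (by positivity)
    _ ≤ 5 * h ^ 12 := by linarith [pow_le_pow_right₀ S.one_le (show 8 ≤ 12 by norm_num)]

lemma sum_sq_card_spoilable_le (v : V) :
    ∑ q : E × C, (#(spoilable S v q) / h ^ 8) ^ 2 * (p * x q.1 q.2) ≤ 20 / h ^ 2 := by
  have hpos := S.pos
  calc ∑ q : E × C, (#(spoilable S v q) / h ^ 8) ^ 2 * (p * x q.1 q.2)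
      ≤ ∑ q : E × C, 4 * h ^ 2 / h ^ 16 * (#(spoilable S v q) * (p * x q.1 q.2)) := by
        refine sum_le_sum fun q _ => ?_
        have := P.activation_nonneg q.1 q.2
        calc (#(spoilable S v q) / h ^ 8) ^ 2 * (p * x q.1 q.2)
            = #(spoilable S v q) / h ^ 16 * (#(spoilable S v q) * (p * x q.1 q.2)) := by ring
          _ ≤ 4 * h ^ 2 / h ^ 16 * (#(spoilable S v q) * (p * x q.1 q.2)) := by
              gcongr
              exact card_spoilable_le S v q
    _ ≤ 4 * h ^ 2 / h ^ 16 * (5 * h ^ 12) := by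
        rw [← mul_sum]
        exact mul_le_mul_of_nonneg_left (P.sum_card_spoilable_mul_le v) (by positivity)
    _ = 20 / h ^ 2 := by
        field_simp
        norm_num

lemma prob_lt_spoiledDensity_le (v : V) (δ : ℝ) :
    prob (activation p x) (fun ω => 4 * B / h ^ 4 + δ < spoiledDensity S v ω) ≤
      Real.exp (20 - h * δ) := by
  have hpos := S.pos
  have four_le : 4 ≤ h := by linarith [P.one_le_B, P.four_mul_B_le]
  refine (P.isProbFamily.prob_mono fun ω hω => ?_).trans
    ((P.blockBounded_spoiledDensity v).prob_expect_add_lt_le P.isProbFamily (lam := δ) (K := 20)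
      hpos.le (fun q => ?_) ?_)
  · linarith [P.expect_spoiledDensity_le v]
  · rw [← mul_div_assoc, div_le_one (by positivity)]
    calc h * #(spoilable S v q) ≤ h * (4 * h ^ 2) := by
          gcongr
          exact card_spoilable_le S v q
      _ ≤ h * (h * h ^ 2) := by gcongr
      _ = h ^ 4 := by ring
      _ ≤ h ^ 8 := pow_le_pow_right₀ S.one_le (by norm_num)
  · calc _ ≤ h ^ 2 * (20 / h ^ 2) :=
          mul_le_mul_of_nonneg_left (P.sum_sq_card_spoilable_le v) (sq_nonneg h)
      _ = 20 := by field_simp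

end IsNibble

end Spoiled

/-! ### A typical outcome of a round -/

lemma card_biUnion_le_mul {X Y : Type*} {s : Finset X} {f : X → Finset Y} {a b : ℝ} (hb : 0 ≤ b)
    (hs : (#s : ℝ) ≤ a) (hf : ∀ i ∈ s, (#(f i) : ℝ) ≤ b) : (#(s.biUnion f) : ℝ) ≤ a * b := by
  calc (#(s.biUnion f) : ℝ) ≤ ∑ i ∈ s, (#(f i) : ℝ) := mod_cast card_biUnion_le
    _ ≤ #s * b := by
        rw [← nsmul_eq_mul]
        exact sum_le_card_nsmul _ _ _ hf
    _ ≤ a * b := mul_le_mul_of_nonneg_right hs hb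

namespace EdgeSystem

variable {V E C : Type*} [Fintype E] [Fintype C] {h : ℝ} (S : EdgeSystem V E C h)

/-- The edges are equal or some of their colours may clash. -/
def Close (e f : E) : Prop := e = f ∨ S.Adj e f ∨ ∃ c d, S.Conflict e c f d

/-- The (edge, colour) pairs whose activation matters for the outcome of a round at `v`. -/
def influence (v : V) : Set (E × C) := {i | ∃ e ∈ S.star v, S.Close e i.1}

variable {S}

lemma Close.symm {e f : E} : S.Close e f → S.Close f e :=
  Or.imp Eq.symm (Or.imp Adj.symm fun ⟨c, d, hconflict⟩ => ⟨d, c, S.conflict_symm hconflict⟩)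

lemma mem_influence {v : V} {e f : E} (he : e ∈ S.star v) (hef : S.Close e f) (c : C) :
    (f, c) ∈ S.influence v :=
  ⟨e, he, hef⟩

lemma mem_influence_of_mem_nbhd {v : V} {e f : E} (he : e ∈ S.star v) (hf : f ∈ S.nbhd e) (c : C) :
    (f, c) ∈ S.influence v :=
  mem_influence he (Or.inr (Or.inl (mem_nbhd.mp hf))) c

lemma mem_influence_self {v : V} {e : E} (he : e ∈ S.star v) (c : C) : (e, c) ∈ S.influence v :=
  mem_influence he (Or.inl rfl) c

variable (S)

lemma card_nbhd_le (e : E) : (#(S.nbhd e) : ℝ) ≤ 2 * h ^ 8 := by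
  obtain ⟨v, hv⟩ := S.exists_mem_star e
  obtain ⟨w, hw⟩ := S.exists_far_subset_star hv
  have hsub : S.nbhd e ⊆ S.star v ∪ S.star w :=
    S.nbhd_eq_union hv ▸ union_subset_union (erase_subset _ _) hw
  calc (#(S.nbhd e) : ℝ) ≤ #(S.star v) + #(S.star w) :=
        mod_cast (card_le_card hsub).trans (card_union_le _ _)
    _ ≤ 2 * h ^ 8 := by
        rw [two_mul]
        exact add_le_add (S.card_star_le v) (S.card_star_le w)

lemma card_conflicting_edges_le (e : E) : (#{f | ∃ c d, S.Conflict e c f d} : ℝ) ≤ 4 * h ^ 4 := by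
  calc (#{f | ∃ c d, S.Conflict e c f d} : ℝ)
      = ∑ f with ∃ c d, S.Conflict e c f d, (1 : ℝ) := by simp
    _ ≤ ∑ f with ∃ c d, S.Conflict e c f d, S.mult e f := by
        refine sum_le_sum fun f hf => ?_
        obtain ⟨c, d, hconflict⟩ := (mem_filter.mp hf).2
        refine le_trans ?_ (S.card_conflict_le e f d)
        exact_mod_cast card_pos.mpr ⟨c, mem_filter.mpr ⟨mem_univ c, hconflict⟩⟩
    _ ≤ ∑ f, S.mult e f := sum_le_univ_sum_of_nonneg fun f => S.mult_nonneg e f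
    _ ≤ 4 * h ^ 4 := S.sum_mult_le e

lemma card_close_le (e : E) : (#{f | S.Close e f} : ℝ) ≤ 7 * h ^ 8 := by
  have hsub : univ.filter (S.Close e) ⊆
      {e} ∪ (S.nbhd e ∪ univ.filter fun f => ∃ c d, S.Conflict e c f d) := by
    intro f hf
    simp only [mem_union, mem_singleton, mem_nbhd, mem_filter_univ, eq_comm (a := f)]
    exact (mem_filter.mp hf).2
  have hcard : (#{f | S.Close e f} : ℝ) ≤
      1 + (#(S.nbhd e) + #{f | ∃ c d, S.Conflict e c f d}) :=
    mod_cast (card_le_card hsub).trans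
      ((card_union_le _ _).trans (Nat.add_le_add_left (card_union_le _ _) _))
  linarith [S.card_nbhd_le e, S.card_conflicting_edges_le e, one_le_pow₀ S.one_le (n := 8),
    pow_le_pow_right₀ S.one_le (show 4 ≤ 8 by norm_num)]

variable [Fintype V]

lemma card_ends_le_two (e : E) : (#{v | e ∈ S.star v} : ℝ) ≤ 2 := by
  obtain ⟨a, b, hab⟩ := S.exists_ends_eq e
  have hsub : (univ.filter fun v => e ∈ S.star v) ⊆ {a, b} := fun v hv => by
    simpa [mem_star, hab] using hv
  exact_mod_cast (card_le_card hsub).trans card_le_two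

lemma card_not_disjoint_influence_le (v : V) :
    (#{w | w = v ∨ ¬Disjoint (S.influence v) (S.influence w)} : ℝ) ≤ 99 * h ^ 24 := by
  have hpos := S.pos
  let closeEdges := (S.star v).biUnion fun e => {f | S.Close e f}
  let reached := (closeEdges.biUnion fun e => {f | S.Close e f}).biUnion fun e => {w | e ∈ S.star w}
  have hsub : (univ.filter fun w => w = v ∨ ¬Disjoint (S.influence v) (S.influence w)) ⊆
      {v} ∪ reached := by
    intro w hw
    rw [mem_union, mem_singleton]
    refine (mem_filter.mp hw).2.imp_right fun hmeet => ?_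
    obtain ⟨i, ⟨e, he, hei⟩, f, hf, hfi⟩ := Set.not_disjoint_iff.mp hmeet
    simp only [reached, closeEdges, mem_biUnion, mem_filter_univ]
    exact ⟨f, ⟨i.1, ⟨e, he, hei⟩, hfi.symm⟩, hf⟩
  have hreached : (#reached : ℝ) ≤ h ^ 8 * (7 * h ^ 8) * (7 * h ^ 8) * 2 :=
    card_biUnion_le_mul zero_le_two (card_biUnion_le_mul (by positivity)
      (card_biUnion_le_mul (by positivity) (S.card_star_le v) fun e _ => S.card_close_le e)
      fun e _ => S.card_close_le e) fun e _ => S.card_ends_le_two e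
  calc _ ≤ (1 + #reached : ℝ) := mod_cast (card_le_card hsub).trans (card_union_le _ _)
    _ ≤ h ^ 24 + h ^ 8 * (7 * h ^ 8) * (7 * h ^ 8) * 2 :=
        add_le_add (one_le_pow₀ S.one_le) hreached
    _ = 99 * h ^ 24 := by ring

end EdgeSystem

section Locality

variable {V E C : Type*} [Fintype E] [Fintype C] {h : ℝ} (S : EdgeSystem V E C h)
  (p : ℝ) (x : E → C → ℝ)

lemma dependsOn_retainedWeight {v : V} {e : E} (he : e ∈ S.star v) :
    DependsOn (retainedWeight S p x e) (S.influence v) := fun _ _ hω =>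
  sum_congr rfl fun c _ => by
    rw [clearedWeight, clearedWeight, dependsOn_clear c _ fun i hi =>
      hω i (EdgeSystem.mem_influence_of_mem_nbhd he hi.1 i.2)]

lemma dependsOn_survivingDegree (v : V) (c : C) :
    DependsOn (survivingDegree S p x v c) (S.influence v) := by
  refine fun _ _ hω => sum_congr rfl fun e he => ?_
  congr 1
  unfold survival
  congr 1
  · exact dependsOn_clear c _ fun i hi =>
      hω i (EdgeSystem.mem_influence_of_mem_nbhd he (mem_sdiff.mp hi.1).1 i.2)
  · refine prod_congr rfl fun d _ => ?_
    rw [dependsOn_matched e d S fun i hi => hω i ?_]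
    rcases hi.1 with heq | hmem
    · exact EdgeSystem.mem_influence he (Or.inl heq.symm) i.2
    · exact EdgeSystem.mem_influence_of_mem_nbhd he hmem i.2

lemma dependsOn_spoiledDensity (v : V) : DependsOn (spoiledDensity S v) (S.influence v) := by
  intro ω ω' hω
  have spoiled_iff : ∀ c, Spoiled S v c ω ↔ Spoiled S v c ω' := by
    intro c
    refine exists_congr fun e => and_congr_right fun he => ?_
    rw [hω _ (EdgeSystem.mem_influence_self he c)]
    refine and_congr_right fun _ => exists_congr fun q => and_congr_right fun hconflict => ?_
    rw [hω q (EdgeSystem.mem_influence he (Or.inr (Or.inr ⟨c, q.2, hconflict⟩)) q.2)]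
  simp only [spoiledDensity, spoiled_iff]

end Locality

section Typical

variable {V E C : Type*} [Fintype E] [Fintype C] {h : ℝ} {S : EdgeSystem V E C h} {N r B p δ : ℝ}
  {U : Finset E} {x : E → C → ℝ}

/-- Some statistic of the round deviates at `v` by more than `δ`. -/
def DeviatesAt (S : EdgeSystem V E C h) (U : Finset E) (x : E → C → ℝ) (r B p δ : ℝ) (v : V)
    (ω : E × C → Bool) : Prop :=
  (∃ e ∈ S.star v ∩ U, retainedWeight S p x e ω < 1 - δ) ∨
    (∃ c ∈ (S.star v).biUnion fun e => {c | x e c ≠ 0},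
      r * (1 - p + 3 * p ^ 2 + B / h ^ 8) + δ < survivingDegree S p x v c ω) ∨
    4 * B / h ^ 4 + δ < spoiledDensity S v ω

/-- An outcome of the round in which only pairs of positive weight are active and every statistic
is within `δ` of its expected bound. -/
structure IsTypical (S : EdgeSystem V E C h) (U : Finset E) (x : E → C → ℝ) (r B p δ : ℝ)
    (ω : E × C → Bool) : Prop where
  ne_zero_of_active : ∀ e c, ω (e, c) → x e c ≠ 0
  le_retainedWeight : ∀ e ∈ U, 1 - δ ≤ retainedWeight S p x e ω
  survivingDegree_le : ∀ v c,
    survivingDegree S p x v c ω ≤ r * (1 - p + 3 * p ^ 2 + B / h ^ 8) + δ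
  spoiledDensity_le : ∀ v, spoiledDensity S v ω ≤ 4 * B / h ^ 4 + δ

lemma dependsOn_deviatesAt (v : V) :
    DependsOn (DeviatesAt S U x r B p δ v) (S.influence v) := by
  intro ω ω' hω
  have hretained : ∀ e ∈ S.star v ∩ U,
      retainedWeight S p x e ω = retainedWeight S p x e ω' := fun e he =>
    dependsOn_retainedWeight S p x (mem_inter.mp he).1 hω
  simp only [DeviatesAt, dependsOn_survivingDegree S p x v _ hω, dependsOn_spoiledDensity S v hω,
    eq_iff_iff]
  refine or_congr_left (exists_congr fun e => and_congr_right fun he => ?_)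
  rw [hretained e he]

lemma ne_zero_of_weight_activation_pos {ω : E × C → Bool} (hω : 0 < weight (activation p x) ω)
    {e : E} {c : C} (hactive : ω (e, c)) : x e c ≠ 0 := by
  intro hzero
  refine hω.ne' (prod_eq_zero (mem_univ (e, c)) ?_)
  simp [activation, hactive, hzero]

namespace IsNibble

variable (P : IsNibble S N U x r B p)

include P

lemma prob_deviatesAt_le (hN : 0 ≤ N) (v : V) :
    prob (activation p x) (DeviatesAt S U x r B p δ v) ≤
      (N + 2) * h ^ 16 * Real.exp (20 - h * δ) := by
  have hpos := S.pos
  have hμ := P.isProbFamily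
  have hcolors : (#((S.star v).biUnion fun e => {c | x e c ≠ 0}) : ℝ) ≤ h ^ 8 * (N * h ^ 8) :=
    card_biUnion_le_mul (by positivity) (S.card_star_le v) fun e _ => P.card_support_le e
  have hedges : (#(S.star v ∩ U) : ℝ) ≤ h ^ 8 :=
    le_trans (mod_cast card_le_card inter_subset_left) (S.card_star_le v)
  calc prob (activation p x) (DeviatesAt S U x r B p δ v)
      ≤ #(S.star v ∩ U) * Real.exp (20 - h * δ) +
          (#((S.star v).biUnion fun e => {c | x e c ≠ 0}) * Real.exp (20 - h * δ) +
            Real.exp (20 - h * δ)) := by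
        refine (hμ.prob_or_le _ _).trans (add_le_add ((hμ.prob_exists_le _ _).trans ?_)
          ((hμ.prob_or_le _ _).trans (add_le_add ((hμ.prob_exists_le _ _).trans ?_)
            (P.prob_lt_spoiledDensity_le v δ))))
        · rw [← nsmul_eq_mul]
          refine sum_le_card_nsmul _ _ _ fun e he =>
            (P.prob_retainedWeight_lt_le (mem_inter.mp he).2 δ).trans ?_
          gcongr
          norm_num
        · rw [← nsmul_eq_mul]
          refine sum_le_card_nsmul _ _ _ fun c _ => (P.prob_lt_survivingDegree_le v c δ).trans ?_
          gcongr
          norm_num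
    _ ≤ (h ^ 8 + (h ^ 8 * (N * h ^ 8) + 1)) * Real.exp (20 - h * δ) := by
        rw [add_mul, add_mul, one_mul]
        gcongr
    _ ≤ (N + 2) * h ^ 16 * Real.exp (20 - h * δ) := by
        gcongr
        linarith [one_le_pow₀ S.one_le (n := 16),
          pow_le_pow_right₀ S.one_le (show 8 ≤ 16 by norm_num)]

lemma isTypical_of_not_deviatesAt (hδ : 0 ≤ δ) {ω : E × C → Bool}
    (hω : 0 < weight (activation p x) ω) (hdev : ∀ v, ¬DeviatesAt S U x r B p δ v ω) :
    IsTypical S U x r B p δ ω where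
  ne_zero_of_active _ _ := ne_zero_of_weight_activation_pos hω
  le_retainedWeight e he := by
    obtain ⟨v, hv⟩ := S.exists_mem_star e
    by_contra! hlt
    exact hdev v (Or.inl ⟨e, mem_inter.mpr ⟨hv, he⟩, hlt⟩)
  survivingDegree_le v c := by
    by_contra! hlt
    refine hdev v (Or.inr (Or.inl ⟨c, ?_, hlt⟩))
    by_contra hc
    simp only [mem_biUnion, mem_filter_univ, not_exists, not_and, not_not] at hc
    have hzero : survivingDegree S p x v c ω = 0 := sum_eq_zero fun e he => by simp [hc e he]
    have hpos := S.pos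
    have hbound : 0 ≤ r * (1 - p + 3 * p ^ 2 + B / h ^ 8) := by
      have := P.one_le_B
      have := P.p_le
      refine mul_nonneg P.r_nonneg (add_nonneg ?_ (by positivity))
      nlinarith
    linarith
  spoiledDensity_le v := by
    by_contra! hlt
    exact hdev v (Or.inr (Or.inr hlt))

lemma exists_isTypical [Finite V] (hN : 0 ≤ N) (hδ : 0 ≤ δ)
    (hbig : 400 * (N + 2) * h ^ 40 * Real.exp (20 - h * δ) ≤ 1) :
    ∃ ω, IsTypical S U x r B p δ ω := by
  have hpos := S.pos
  have := Fintype.ofFinite V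
  obtain ⟨ω, hω, hdev⟩ := P.isProbFamily.local_lemma
    (A := DeviatesAt S U x r B p δ) (S := S.influence) dependsOn_deviatesAt fun v => by
      calc _ ≤ ∑ w with w = v ∨ ¬Disjoint (S.influence v) (S.influence w),
            (N + 2) * h ^ 16 * Real.exp (20 - h * δ) := by
            refine (sum_le_sum fun w _ => P.prob_deviatesAt_le hN w).trans (le_of_eq ?_)
            congr!
        _ ≤ 99 * h ^ 24 * ((N + 2) * h ^ 16 * Real.exp (20 - h * δ)) := by
            rw [sum_const, nsmul_eq_mul]
            gcongr
            exact S.card_not_disjoint_influence_le v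
        _ ≤ 100 * (N + 2) * h ^ 40 * Real.exp (20 - h * δ) := by
            have hnonneg : 0 ≤ (N + 2) * h ^ 40 * Real.exp (20 - h * δ) := by positivity
            linarith
        _ ≤ 1 / 4 := by linarith
  exact ⟨ω, P.isTypical_of_not_deviatesAt hδ hω hdev⟩

end IsNibble

end Typical

/-! ### The fractional colouring after a round -/

section Round

variable {V E C : Type*} [Fintype E] [Fintype C] {h : ℝ}

/-- The pair `(e, c)` is active and clashes with no other active pair. -/
def Accepted (S : EdgeSystem V E C h) (ω : E × C → Bool) (e : E) (c : C) : Prop :=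
  matched S e c ω ≠ 0 ∧ ∀ q : E × C, S.Conflict e c q.1 q.2 → ¬ω q

/-- The edges which receive a colour in the round. -/
noncomputable def colored (S : EdgeSystem V E C h) (ω : E × C → Bool) : Finset E :=
  {e | ∃ c, Accepted S ω e c}

/-- The colour received by a coloured edge: one of its accepted colours. -/
noncomputable def chosenColor (S : EdgeSystem V E C h) (ω : E × C → Bool) (e : colored S ω) : C :=
  (mem_filter.mp e.2).2.choose

/-- The colour `c` is no longer available at `e` because of a conflict with a coloured edge. -/
def Removed (S : EdgeSystem V E C h) (ω : E × C → Bool) (e : E) (c : C) : Prop :=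
  ∃ f : colored S ω, S.Conflict e c f (chosenColor S ω f)

/-- The edge `e` wins a colour against its adjacent edges but loses it again to a conflict. -/
def Foiled (S : EdgeSystem V E C h) (ω : E × C → Bool) (e : E) : Prop :=
  e ∉ colored S ω ∧ ∃ c, matched S e c ω ≠ 0

/-- The weights left on the available colours of the edges still uncoloured after the round. -/
noncomputable def reducedWeight (S : EdgeSystem V E C h) (U : Finset E) (p : ℝ) (x : E → C → ℝ)
    (ω : E × C → Bool) (e : E) (c : C) : ℝ :=
  if e ∈ U \ colored S ω ∧ ¬Removed S ω e c then clearedWeight S p x e c ω else 0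

/-- The reduced weights, scaled to a probability distribution at every edge. -/
noncomputable def nextWeight (S : EdgeSystem V E C h) (U : Finset E) (p : ℝ) (x : E → C → ℝ)
    (ω : E × C → Bool) (e : E) (c : C) : ℝ :=
  reducedWeight S U p x ω e c / ∑ d, reducedWeight S U p x ω e d

variable {S : EdgeSystem V E C h} {N r B p δ : ℝ} {U : Finset E} {x : E → C → ℝ}
  {ω : E × C → Bool}

lemma accepted_chosenColor (e : colored S ω) : Accepted S ω e (chosenColor S ω e) :=
  (mem_filter.mp e.2).2.choose_spec

lemma active_chosenColor (e : colored S ω) : ω (e, chosenColor S ω e) :=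
  (matched_ne_zero_iff.mp (accepted_chosenColor e).1).1

lemma Accepted.not_active_of_clash {e f : E} {c d : C} (he : Accepted S ω e c)
    (hclash : S.Clash e c f d) : ¬ω (f, d) := by
  rcases hclash with ⟨hadj, rfl⟩ | hconflict
  · exact (matched_ne_zero_iff.mp he.1).2 f (EdgeSystem.mem_nbhd.mpr hadj)
  · exact he.2 (f, d) hconflict

lemma reducedWeight_eq_zero {e : E} (he : e ∉ U \ colored S ω) (c : C) :
    reducedWeight S U p x ω e c = 0 :=
  if_neg fun hmem => he hmem.1

lemma ne_zero_of_reducedWeight_ne_zero {e : E} {c : C} (hne : reducedWeight S U p x ω e c ≠ 0) :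
    x e c ≠ 0 ∧ ¬Removed S ω e c ∧ clear (S.nbhd e) c ω ≠ 0 := by
  unfold reducedWeight clearedWeight at hne
  rw [ite_ne_right_iff, mul_ne_zero_iff, div_ne_zero_iff] at hne
  exact ⟨hne.2.1, hne.1.2, hne.2.2.1⟩

lemma reducedWeight_ne_zero_of_nextWeight_ne_zero {e : E} {c : C}
    (hne : nextWeight S U p x ω e c ≠ 0) : reducedWeight S U p x ω e c ≠ 0 :=
  (div_ne_zero_iff.mp hne).1

lemma not_clash_chosenColor {e : E} {c : C} (hne : reducedWeight S U p x ω e c ≠ 0)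
    (f : colored S ω) : ¬S.Clash e c f (chosenColor S ω f) := by
  obtain ⟨-, hremoved, hclear⟩ := ne_zero_of_reducedWeight_ne_zero hne
  rintro (⟨hadj, rfl⟩ | hconflict)
  · exact hclear (clear_eq_zero (EdgeSystem.mem_nbhd.mpr hadj) (active_chosenColor f))
  · exact hremoved ⟨f, hconflict⟩

lemma HasColoring.of_round (hω : ∀ e c, ω (e, c) → x e c ≠ 0)
    (hcol : HasColoring S (U \ colored S ω) (nextWeight S U p x ω)) : HasColoring S U x := by
  obtain ⟨φ, hφ, hclash⟩ := hcol
  have hreduced : ∀ e : ↥(U \ colored S ω), reducedWeight S U p x ω e (φ e) ≠ 0 := fun e =>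
    reducedWeight_ne_zero_of_nextWeight_ne_zero (hφ e)
  let rest (e : U) (he : (e : E) ∉ colored S ω) : ↥(U \ colored S ω) :=
    ⟨e, mem_sdiff.mpr ⟨e.2, he⟩⟩
  refine ⟨fun e => if he : (e : E) ∈ colored S ω then chosenColor S ω ⟨e, he⟩ else
    φ (rest e he), fun e => ?_, fun e f hef => ?_⟩
  · dsimp only
    split_ifs with he
    · exact hω _ _ (active_chosenColor (⟨e, he⟩ : colored S ω))
    · exact (ne_zero_of_reducedWeight_ne_zero (hreduced (rest e he))).1
  · dsimp only at hef
    split_ifs at hef with he hf hf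
    · exact (accepted_chosenColor (⟨e, he⟩ : colored S ω)).not_active_of_clash hef
        (active_chosenColor (⟨f, hf⟩ : colored S ω))
    · exact not_clash_chosenColor (hreduced (rest f hf)) ⟨e, he⟩ hef.symm
    · exact not_clash_chosenColor (hreduced (rest e he)) ⟨f, hf⟩ hef
    · exact hclash (rest e he) (rest f hf) hef

variable (S ω)

lemma card_removed_le (e : E) : (#{c | Removed S ω e c} : ℝ) ≤ 4 * h ^ 4 := by
  have hsub : univ.filter (Removed S ω e) ⊆ (univ : Finset (colored S ω)).biUnion fun f =>
      {c | S.Conflict e c f (chosenColor S ω f)} := by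
    intro c hc
    simpa [Removed] using hc
  calc (#{c | Removed S ω e c} : ℝ)
      ≤ ∑ f : colored S ω, (#{c | S.Conflict e c f (chosenColor S ω f)} : ℝ) :=
        mod_cast (card_le_card hsub).trans card_biUnion_le
    _ ≤ ∑ f : colored S ω, S.mult e f := sum_le_sum fun f _ => S.card_conflict_le _ _ _
    _ = ∑ f ∈ colored S ω, S.mult e f := sum_coe_sort _ _
    _ ≤ ∑ f, S.mult e f := sum_le_univ_sum_of_nonneg fun f => S.mult_nonneg e f
    _ ≤ 4 * h ^ 4 := S.sum_mult_le e

/-- A foiled edge spoils a colour it has won, and no two edges at `v` win the same colour. -/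
lemma card_foiled_le (v : V) :
    (#{e ∈ S.star v | Foiled S ω e} : ℝ) ≤ spoiledDensity S v ω * h ^ 8 := by
  have hpos := S.pos
  rw [spoiledDensity, div_mul_cancel₀ _ (by positivity), Nat.cast_le]
  refine card_le_card_of_forall_subsingleton (fun e c => matched S e c ω ≠ 0) ?_ ?_
  · intro e he
    obtain ⟨hv, hcolored, c, hmatched⟩ := mem_filter.mp he
    refine ⟨c, mem_filter.mpr ⟨mem_univ c, e, hv, (matched_ne_zero_iff.mp hmatched).1, ?_⟩,
      hmatched⟩
    by_contra! hcon
    exact hcolored (mem_filter.mpr ⟨mem_univ e, c, hmatched, fun q hq => by simpa using hcon q hq⟩)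
  · rintro c - e ⟨he, he_matched⟩ f ⟨hf, hf_matched⟩
    exact eq_of_matched_ne_zero (mem_filter.mp he).1 (mem_filter.mp hf).1 he_matched hf_matched

namespace IsNibble

variable {S} (P : IsNibble S N U x r B p)

include P

lemma reducedWeight_nonneg (e : E) (c : C) : 0 ≤ reducedWeight S U p x ω e c := by
  unfold reducedWeight
  split_ifs
  · exact P.clearedWeight_nonneg e c ω
  · exact le_rfl

lemma reducedWeight_le_clearedWeight (e : E) (c : C) :
    reducedWeight S U p x ω e c ≤ clearedWeight S p x e c ω := by
  unfold reducedWeight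
  split_ifs
  · exact le_rfl
  · exact P.clearedWeight_nonneg e c ω

lemma one_sub_le_sum_reducedWeight {e : E} (he : e ∈ U \ colored S ω)
    (hretained : 1 - δ ≤ retainedWeight S p x e ω) (hδ : 8 * B / h ^ 4 ≤ δ) :
    1 - 2 * δ ≤ ∑ c, reducedWeight S U p x ω e c := by
  have hpos := S.pos
  have hB := P.one_le_B
  have clearedWeight_le_add : ∀ c, clearedWeight S p x e c ω ≤
      reducedWeight S U p x ω e c + if Removed S ω e c then 2 * B / h ^ 8 else 0 := by
    intro c
    by_cases hremoved : Removed S ω e c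
    · rw [if_pos hremoved]
      linarith [P.reducedWeight_nonneg ω e c, P.clearedWeight_le e c ω]
    · rw [if_neg hremoved, add_zero, reducedWeight, if_pos ⟨he, hremoved⟩]
  have hremoved : ∑ c, (if Removed S ω e c then 2 * B / h ^ 8 else 0) ≤ δ := by
    calc ∑ c, (if Removed S ω e c then 2 * B / h ^ 8 else 0)
        = #{c | Removed S ω e c} * (2 * B / h ^ 8) := by
          rw [← sum_filter, sum_const, nsmul_eq_mul]
      _ ≤ 4 * h ^ 4 * (2 * B / h ^ 8) :=
          mul_le_mul_of_nonneg_right (card_removed_le S ω e) (by positivity)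
      _ = 8 * B / h ^ 4 := by
          field_simp
          ring
      _ ≤ δ := hδ
  have hsum := sum_le_sum fun c (_ : c ∈ univ) => clearedWeight_le_add c
  rw [sum_add_distrib] at hsum
  unfold retainedWeight at hretained
  linarith

/-- On an edge without a matched colour, survival only requires the edges away from `v` to be
clear; dropping the edges at `v` costs the factor `1 - p * r`. -/
lemma clearedWeight_le_survival {v : V} {e : E} (hv : e ∈ S.star v)
    (hmatched : ∀ d, matched S e d ω = 0) (c : C) :
    clearedWeight S p x e c ω ≤
      x e c / clearProb p x (S.far v e) c * survival S v e c ω / (1 - p * r) := by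
  have hhalf := P.half_le_one_sub
  have hfar := P.half_le_clearProb_far hv c
  have hnear : 1 - p * r ≤ clearProb p x ((S.star v).erase e) c :=
    P.one_sub_le_clearProb (P.sum_le_of_subset_star (erase_subset _ _) c)
  have hclear := clear_nonneg ω c (S.far v e)
  have hclear_le : clear ((S.star v).erase e) c ω * clear (S.far v e) c ω ≤
      clear (S.far v e) c ω := mul_le_of_le_one_left hclear (clear_le_one ω c _)
  have hsurvival : survival S v e c ω = clear (S.far v e) c ω := by simp [survival, hmatched]
  calc clearedWeight S p x e c ω
      = x e c * ((clear ((S.star v).erase e) c ω * clear (S.far v e) c ω) /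
          (clearProb p x ((S.star v).erase e) c * clearProb p x (S.far v e) c)) := by
        rw [clearedWeight, S.nbhd_eq_union hv, clear_union _ _ (S.disjoint_erase_star_far v e),
          clearProb_union _ _ _ (S.disjoint_erase_star_far v e)]
    _ ≤ x e c * (clear (S.far v e) c ω / ((1 - p * r) * clearProb p x (S.far v e) c)) := by
        have := P.nonneg e c
        gcongr
    _ = x e c / clearProb p x (S.far v e) c * survival S v e c ω / (1 - p * r) := by
        rw [hsurvival]
        field_simp

lemma reducedWeight_le_survival_add {v : V} {e : E} (hv : e ∈ S.star v) (c : C) :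
    reducedWeight S U p x ω e c ≤
      x e c / clearProb p x (S.far v e) c * survival S v e c ω / (1 - p * r) +
        if Foiled S ω e then 2 * B / h ^ 8 else 0 := by
  have hhalf := P.half_le_one_sub
  have hfar := P.half_le_clearProb_far hv c
  have hnonneg : 0 ≤ x e c / clearProb p x (S.far v e) c * survival S v e c ω / (1 - p * r) :=
    div_nonneg (mul_nonneg (div_nonneg (P.nonneg e c) (by linarith))
      (clear_mul_prod_mem_Icc S v e c _ ω).1) (by linarith)
  by_cases hfoiled : Foiled S ω e
  · rw [if_pos hfoiled]
    linarith [P.reducedWeight_le_clearedWeight ω e c, P.clearedWeight_le e c ω]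
  rw [if_neg hfoiled, add_zero]
  by_cases he : e ∈ U \ colored S ω
  · have hmatched : ∀ d, matched S e d ω = 0 := fun d => by
      by_contra hne
      exact hfoiled ⟨(mem_sdiff.mp he).2, d, hne⟩
    exact (P.reducedWeight_le_clearedWeight ω e c).trans
      (P.clearedWeight_le_survival ω hv hmatched c)
  · rwa [reducedWeight_eq_zero he]

lemma sum_star_reducedWeight_le (v : V) (c : C) :
    ∑ e ∈ S.star v, reducedWeight S U p x ω e c ≤
      survivingDegree S p x v c ω / (1 - p * r) + 2 * B * spoiledDensity S v ω := by
  have hpos := S.pos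
  have hB := P.one_le_B
  refine (sum_le_sum fun e he => P.reducedWeight_le_survival_add ω he c).trans ?_
  rw [sum_add_distrib, ← sum_div]
  refine add_le_add le_rfl ?_
  calc ∑ e ∈ S.star v, (if Foiled S ω e then 2 * B / h ^ 8 else 0)
      = #{e ∈ S.star v | Foiled S ω e} * (2 * B / h ^ 8) := by
        rw [← sum_filter, sum_const, nsmul_eq_mul]
    _ ≤ spoiledDensity S v ω * h ^ 8 * (2 * B / h ^ 8) :=
        mul_le_mul_of_nonneg_right (card_foiled_le S ω v) (by positivity)
    _ = 2 * B * spoiledDensity S v ω := by field_simp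

variable {ω} (hω : IsTypical S U x r B p δ ω) (hδ_le : δ ≤ 1 / 4) (hδ : 8 * B / h ^ 4 ≤ δ)

include hω hδ_le hδ

lemma nextWeight_le_div (e : E) (c : C) :
    nextWeight S U p x ω e c ≤ reducedWeight S U p x ω e c / (1 - 2 * δ) := by
  by_cases he : e ∈ U \ colored S ω
  · exact div_le_div_of_nonneg_left (P.reducedWeight_nonneg ω e c) (by linarith)
      (P.one_sub_le_sum_reducedWeight ω he (hω.le_retainedWeight e (mem_sdiff.mp he).1) hδ)
  · rw [nextWeight, reducedWeight_eq_zero he, zero_div, zero_div]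

lemma isFractionalColoring_nextWeight {r' : ℝ}
    (hr' : (r * (1 - p + 3 * p ^ 2 + B / h ^ 8) + δ) / (1 - p * r) +
      2 * B * (4 * B / h ^ 4 + δ) ≤ (1 - 2 * δ) * r') :
    IsFractionalColoring S N (U \ colored S ω) (nextWeight S U p x ω) r' (4 * B) where
  nonneg e c :=
    div_nonneg (P.reducedWeight_nonneg ω e c) (sum_nonneg fun d _ => P.reducedWeight_nonneg ω e d)
  le e c := by
    have hpos := S.pos
    have hB := P.one_le_B
    have hbound : 0 ≤ 2 * B / h ^ 8 := by positivity
    refine (P.nextWeight_le_div hω hδ_le hδ e c).trans ?_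
    rw [div_le_iff₀ (by linarith), show 4 * B / h ^ 8 = 2 * (2 * B / h ^ 8) by ring]
    nlinarith [P.reducedWeight_le_clearedWeight ω e c, P.clearedWeight_le e c ω]
  sum_eq_one e he := by
    have := P.one_sub_le_sum_reducedWeight ω he (hω.le_retainedWeight e (mem_sdiff.mp he).1) hδ
    unfold nextWeight
    rw [← sum_div]
    exact div_self (by linarith)
  eq_zero e he c := by rw [nextWeight, reducedWeight_eq_zero he, zero_div]
  card_support_le e := by
    refine le_trans (mod_cast card_le_card fun c hc => ?_) (P.card_support_le e)
    rw [mem_filter_univ] at hc ⊢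
    exact (ne_zero_of_reducedWeight_ne_zero (reducedWeight_ne_zero_of_nextWeight_ne_zero hc)).1
  colorDegree_le v c := by
    refine (sum_le_sum fun e _ => P.nextWeight_le_div hω hδ_le hδ e c).trans ?_
    rw [← sum_div, div_le_iff₀ (by linarith), mul_comm r']
    refine (P.sum_star_reducedWeight_le ω v c).trans (le_trans (add_le_add ?_ ?_) hr')
    · exact div_le_div_of_nonneg_right (hω.survivingDegree_le v c)
        (one_half_pos.le.trans P.half_le_one_sub)
    · exact mul_le_mul_of_nonneg_left (hω.spoiledDensity_le v) (by linarith [P.one_le_B])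

end IsNibble

variable {S}

lemma IsNibble.exists_next [Finite V] (P : IsNibble S N U x r B p) (hN : 0 ≤ N)
    (hδ_nonneg : 0 ≤ δ) (hδ_le : δ ≤ 1 / 4) (hδ : 8 * B / h ^ 4 ≤ δ)
    (hbig : 400 * (N + 2) * h ^ 40 * Real.exp (20 - h * δ) ≤ 1) {r' : ℝ}
    (hr' : (r * (1 - p + 3 * p ^ 2 + B / h ^ 8) + δ) / (1 - p * r) +
      2 * B * (4 * B / h ^ 4 + δ) ≤ (1 - 2 * δ) * r') :
    ∃ U' x', IsFractionalColoring S N U' x' r' (4 * B) ∧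
      (HasColoring S U' x' → HasColoring S U x) := by
  obtain ⟨ω, hω⟩ := P.exists_isTypical hN hδ_nonneg hbig
  exact ⟨_, _, P.isFractionalColoring_nextWeight hω hδ_le hδ hr',
    HasColoring.of_round hω.ne_zero_of_active⟩

end Round

/-! ### Iterating the rounds -/

open Filter

section Parameters

variable {r p γ δ B h : ℝ}

lemma survivingDegree_bound_div_le {b : ℝ} (hp : 0 ≤ p) (hp_le : p ≤ 1 / 4) (hr : 0 ≤ r)
    (hr_le : r ≤ 1) (hb : 0 ≤ b) (hbδ : b ≤ δ) (hγ : 0 ≤ γ)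
    (hγ_le : 3 * γ ≤ r * p * (1 - r - 3 * p)) :
    (r * (1 - p + 3 * p ^ 2 + b) + δ) / (1 - p * r) ≤ r - 3 * γ + 4 * δ := by
  have hpr : 0 ≤ p * r := mul_nonneg hp hr
  have hpr_le : p * r ≤ 1 / 4 := (mul_le_of_le_one_right hp hr_le).trans hp_le
  have hrb : r * b ≤ δ := (mul_le_of_le_one_left hb hr_le).trans hbδ
  have hδ_gain : 2 * δ ≤ 4 * δ * (1 - p * r) := by nlinarith
  have hγ_loss : 3 * γ * (1 - p * r) ≤ 3 * γ := mul_le_of_le_one_right (by linarith) (by linarith)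
  rw [div_le_iff₀ (by linarith)]
  linarith

lemma nextDegree_bound_le (hp : 0 ≤ p) (hp_le : p ≤ 1 / 4) (hr : 0 ≤ r) (hr_le : r ≤ 1)
    (hB : 1 ≤ B) (hh : 1 ≤ h) (hδ : 0 ≤ δ) (hBδ : 8 * B / h ^ 4 ≤ δ) (hγ : 5 * (B * δ) = γ)
    (hγ_le : 3 * γ ≤ r * p * (1 - r - 3 * p)) :
    (r * (1 - p + 3 * p ^ 2 + B / h ^ 8) + δ) / (1 - p * r) + 2 * B * (4 * B / h ^ 4 + δ) ≤
      (1 - 2 * δ) * (r - γ) := by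
  have hB_div : B / h ^ 8 ≤ δ := by
    refine le_trans ?_ hBδ
    gcongr
    · linarith
    · norm_num
  have hγ_nonneg : 0 ≤ γ := hγ ▸ by positivity
  have hdegree := survivingDegree_bound_div_le hp hp_le hr hr_le (by positivity) hB_div hγ_nonneg
    hγ_le
  have hspoiled : 2 * B * (4 * B / h ^ 4 + δ) ≤ 3 * (B * δ) := by
    rw [show 4 * B / h ^ 4 = 8 * B / h ^ 4 / 2 by ring]
    nlinarith
  have hscale : 2 * δ * (r - γ) ≤ 2 * δ := mul_le_of_le_one_right (by linarith) (by linarith)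
  nlinarith

end Parameters

lemma eventually_pow_mul_exp_le (K δ : ℝ) (hδ : 0 < δ) (n : ℕ) :
    ∀ᶠ h : ℝ in atTop, K * h ^ n * Real.exp (20 - h * δ) ≤ 1 := by
  have htendsto := (((Real.tendsto_pow_mul_exp_neg_atTop_nhds_zero n).comp
    (tendsto_id.atTop_mul_const hδ)).const_mul (K / δ ^ n * Real.exp 20))
  rw [mul_zero] at htendsto
  filter_upwards [htendsto.eventually_le_const one_pos] with h hle
  calc K * h ^ n * Real.exp (20 - h * δ)
      = K / δ ^ n * Real.exp 20 * ((h * δ) ^ n * Real.exp (-(h * δ))) := by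
        rw [sub_eq_add_neg, Real.exp_add, mul_pow]
        field_simp
    _ ≤ 1 := hle

lemma eventually_div_pow_le (a : ℝ) {b : ℝ} (hb : 0 < b) {n : ℕ} (hn : n ≠ 0) :
    ∀ᶠ h : ℝ in atTop, a / h ^ n ≤ b :=
  ((tendsto_pow_atTop hn).const_div_atTop a).eventually_le_const hb

/-- As long as `1 / 100 < r ≤ 1 - η`, a round with `p = η / 12` lowers `r` by `η ^ 2 / 4800`. -/
lemma eventually_hasColoring_of_le_add (N η : ℝ) (hN : 0 ≤ N) (hη : 0 < η) (hη_le : η ≤ 1) (k : ℕ) :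
    ∀ B : ℝ, 1 ≤ B → ∀ᶠ h : ℝ in atTop, ∀ (V E C : Type*) [Finite V] [Fintype E] [Fintype C]
      (S : EdgeSystem V E C h) (U : Finset E) (x : E → C → ℝ) (r : ℝ), r ≤ 1 - η →
      r ≤ 1 / 100 + k * (η ^ 2 / 4800) → IsFractionalColoring S N U x r B → HasColoring S U x := by
  induction k with
  | zero =>
    intro B _
    filter_upwards [eventually_div_pow_le (4 * B) (b := 1 / 100) (by norm_num) four_ne_zero]
      with h hB V E C _ _ _ S U x r _ hr hx
    refine hx.hasColoring_of_le ?_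
    norm_num at hr
    linarith
  | succ k ih =>
    intro B hB
    obtain ⟨δ, hδ⟩ : ∃ δ, 5 * (B * δ) = η ^ 2 / 4800 := ⟨η ^ 2 / 4800 / 5 / B, by field_simp⟩
    have hδ_pos : 0 < δ := by
      by_contra! hle
      nlinarith [sq_pos_of_pos hη]
    have hδ_le : δ ≤ 1 / 4 := by nlinarith
    filter_upwards [eventually_div_pow_le (4 * B) (b := 1 / 100) (by norm_num) four_ne_zero,
      eventually_div_pow_le (8 * B) hδ_pos four_ne_zero,
      eventually_pow_mul_exp_le (400 * (N + 2)) δ hδ_pos 40, eventually_ge_atTop (4 * B),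
      ih (4 * B) (by linarith)] with h hB_div hBδ hbig hBh ih V E C _ _ _ S U x r hrη hr hx
    rcases le_or_gt r (1 / 100) with hr_small | hr_large
    · exact hx.hasColoring_of_le (by linarith)
    have hdrop : 3 * (η ^ 2 / 4800) ≤ r * (η / 12) * (1 - r - 3 * (η / 12)) := by
      calc 3 * (η ^ 2 / 4800) = 1 / 100 * (η / 12) * (3 / 4 * η) := by ring
        _ ≤ r * (η / 12) * (1 - r - 3 * (η / 12)) := by
            gcongr
            linarith
    have P : IsNibble S N U x r B (η / 12) :=
      ⟨hx, by positivity, by linarith, by linarith, by linarith, hB, hBh⟩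
    obtain ⟨U', x', hx', himp⟩ := P.exists_next hN hδ_pos.le hδ_le hBδ hbig
      (nextDegree_bound_le P.p_nonneg P.p_le P.r_nonneg P.r_le_one hB S.one_le hδ_pos.le hBδ hδ
        hdrop)
    refine himp (ih V E C S U' x' _ ?_ ?_ hx')
    · linarith [sq_nonneg η]
    · push_cast at hr
      linarith

theorem eventually_hasColoring (N η B : ℝ) (hN : 0 ≤ N) (hη : 0 < η) (hη_le : η ≤ 1)
    (hB : 1 ≤ B) :
    ∀ᶠ h : ℝ in atTop, ∀ (V E C : Type*) [Finite V] [Fintype E] [Fintype C]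
      (S : EdgeSystem V E C h) (U : Finset E) (x : E → C → ℝ),
      IsFractionalColoring S N U x (1 - η) B → HasColoring S U x := by
  obtain ⟨k, hk⟩ := exists_nat_ge (1 / (η ^ 2 / 4800))
  rw [div_le_iff₀ (by positivity)] at hk
  filter_upwards [eventually_hasColoring_of_le_add N η hN hη hη_le k B hB] with h hcol
  intro V E C _ _ _ S U x
  exact hcol V E C S U x (1 - η) le_rfl (by linarith)

/-! ### Lists on the edges of a graph -/

lemma card_abs_sub_lt_le (Z : Finset ℤ) (a : ℤ) {t : ℝ} (ht : 1 ≤ t) :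
    (#{c : Z | |((c : ℤ) : ℝ) - a| < t} : ℝ) ≤ 3 * t := by
  have hfloor : 0 ≤ ⌊t⌋ := Int.floor_nonneg.mpr (by linarith)
  have hcard : #{c : Z | |((c : ℤ) : ℝ) - a| < t} ≤ #(Icc (a - ⌊t⌋) (a + ⌊t⌋)) := by
    refine card_le_card_of_injOn Subtype.val (fun c hc => ?_) Subtype.val_injective.injOn
    have hdist : |(c : ℤ) - a| ≤ ⌊t⌋ := Int.le_floor.mpr (mod_cast (mem_filter.mp hc).2.le)
    rw [abs_le] at hdist
    exact mem_Icc.mpr ⟨by linarith, by linarith⟩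
  rw [Int.card_Icc] at hcard
  have hcard' : (#{c : Z | |((c : ℤ) : ℝ) - a| < t} : ℤ) ≤ 2 * ⌊t⌋ + 1 := by omega
  calc (#{c : Z | |((c : ℤ) : ℝ) - a| < t} : ℝ) ≤ 2 * ⌊t⌋ + 1 := mod_cast hcard'
    _ ≤ 3 * t := by linarith [Int.floor_le t]

section ListConflict

variable {α : Type*}

lemma card_subtype_adj_le_degree (J : SimpleGraph α) (s : Set α) [Fintype s] (a : α)
    [Fintype (J.neighborSet a)] : #{b : s | J.Adj a b} ≤ J.degree a := by
  rw [← J.card_neighborFinset_eq_degree]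
  exact card_le_card_of_injOn Subtype.val
    (fun b hb => mem_coe.mpr ((J.mem_neighborFinset a b).mpr (mem_filter.mp hb).2))
    Subtype.val_injective.injOn

/-- Integer colours conflict at `J₁`-adjacent points if they are equal and at `J₂`-adjacent points
if their distance is less than `t`. -/
def ListConflict (J₁ J₂ : SimpleGraph α) (t : ℝ) (e : α) (c : ℤ) (f : α) (d : ℤ) : Prop :=
  (J₁.Adj e f ∧ c = d) ∨ (J₂.Adj e f ∧ |(c : ℝ) - d| < t)

/-- An upper bound for the number of colours at `e` in conflict with a given colour at `f`. -/
noncomputable def conflictMult (J₁ J₂ : SimpleGraph α) (t : ℝ) (e f : α) : ℝ :=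
  (if J₁.Adj e f then 1 else 0) + if J₂.Adj e f then 3 * t else 0

variable {J₁ J₂ : SimpleGraph α} {t : ℝ} {e f : α} {c d : ℤ}

lemma ListConflict.symm (hconflict : ListConflict J₁ J₂ t e c f d) :
    ListConflict J₁ J₂ t f d e c :=
  hconflict.imp (And.imp .symm .symm) (And.imp .symm fun hlt => by rwa [abs_sub_comm])

lemma ListConflict.ne (hconflict : ListConflict J₁ J₂ t e c f d) : e ≠ f :=
  hconflict.elim (fun hJ => hJ.1.ne) fun hJ => hJ.1.ne

lemma ListConflict.abs_sub_lt (ht : 1 ≤ t) (hconflict : ListConflict J₁ J₂ t e c f d) :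
    |(c : ℝ) - d| < t := by
  rcases hconflict with ⟨-, rfl⟩ | ⟨-, hlt⟩
  · rw [sub_self, abs_zero]
    linarith
  · exact hlt

lemma card_listConflict_le (ht : 1 ≤ t) (Z : Finset ℤ) (e f : α) (d : ℤ) :
    (#{c : Z | ListConflict J₁ J₂ t e c f d} : ℝ) ≤ conflictMult J₁ J₂ t e f := by
  unfold conflictMult
  by_cases h₂ : J₂.Adj e f
  · have hmono : #{c : Z | ListConflict J₁ J₂ t e c f d} ≤ #{c : Z | |((c : ℤ) : ℝ) - d| < t} :=
      card_le_card (monotone_filter_right _ fun _ _ hc => hc.abs_sub_lt ht)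
    rw [if_pos h₂]
    calc (#{c : Z | ListConflict J₁ J₂ t e c f d} : ℝ)
        ≤ 3 * t := le_trans (mod_cast hmono) (card_abs_sub_lt_le Z d ht)
      _ ≤ (if J₁.Adj e f then 1 else 0) + 3 * t := le_add_of_nonneg_left (by positivity)
  · by_cases h₁ : J₁.Adj e f
    · rw [if_pos h₁, if_neg h₂, add_zero, Nat.cast_le_one, card_le_one]
      simp only [mem_filter_univ, ListConflict, h₂, false_and, or_false]
      exact fun a ha b hb => Subtype.ext (ha.2.trans hb.2.symm)
    · simp [ListConflict, h₁, h₂]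

lemma sum_conflictMult_le (s : Set α) [Fintype s] [Fintype (J₁.neighborSet e)]
    [Fintype (J₂.neighborSet e)] (ht : 0 ≤ t) (h₁ : (J₁.degree e : ℝ) ≤ t ^ 2)
    (h₂ : (J₂.degree e : ℝ) ≤ t) :
    ∑ f : s, conflictMult J₁ J₂ t e f ≤ 4 * t ^ 2 := by
  have hJ₁ : (#{f : s | J₁.Adj e f} : ℝ) ≤ t ^ 2 :=
    le_trans (mod_cast card_subtype_adj_le_degree J₁ s e) h₁
  have hJ₂ : (#{f : s | J₂.Adj e f} : ℝ) ≤ t :=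
    le_trans (mod_cast card_subtype_adj_le_degree J₂ s e) h₂
  simp only [conflictMult, sum_add_distrib, ← sum_filter, sum_const, nsmul_eq_mul, mul_one]
  nlinarith

end ListConflict

section UniformWeight

variable {α : Type*} {L Z : Finset α}

/-- The uniform distribution on `L`, as a function on a superset `Z` of `L`. -/
noncomputable def uniformWeight (L Z : Finset α) (c : Z) : ℝ := if (c : α) ∈ L then 1 / #L else 0

lemma uniformWeight_nonneg (c : Z) : 0 ≤ uniformWeight L Z c := by
  unfold uniformWeight
  positivity

lemma mem_of_uniformWeight_ne_zero {c : Z} (hne : uniformWeight L Z c ≠ 0) : (c : α) ∈ L :=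
  (ite_ne_right_iff.mp hne).1

lemma uniformWeight_le {m : ℝ} (hm : 0 < m) (hL : m ≤ #L) (c : Z) :
    uniformWeight L Z c ≤ 1 / m := by
  unfold uniformWeight
  split_ifs
  · exact one_div_le_one_div_of_le hm hL
  · positivity

lemma sum_uniformWeight (hZ : L ⊆ Z) (hL : L.Nonempty) : ∑ c, uniformWeight L Z c = 1 := by
  have hcard : (#L : ℝ) ≠ 0 := Nat.cast_ne_zero.mpr hL.card_ne_zero
  calc ∑ c, uniformWeight L Z c = ∑ c ∈ Z, if c ∈ L then 1 / (#L : ℝ) else 0 :=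
        sum_coe_sort Z fun c => if c ∈ L then 1 / (#L : ℝ) else 0
    _ = ∑ c ∈ L, 1 / (#L : ℝ) := by rw [← sum_filter, filter_mem_eq_inter, inter_eq_right.mpr hZ]
    _ = 1 := by rw [sum_const, nsmul_eq_mul, mul_one_div_cancel hcard]

lemma card_support_uniformWeight_le : #{c : Z | uniformWeight L Z c ≠ 0} ≤ #L :=
  card_le_card_of_injOn Subtype.val
    (fun _ hc => mem_of_uniformWeight_ne_zero (mem_filter.mp hc).2) Subtype.val_injective.injOn

end UniformWeight

section ListSystem

variable {V : Type*} (H : SimpleGraph V) [Fintype H.edgeSet] [H.LocallyFinite]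

lemma card_edges_at_le_degree (v : V) : #{e : H.edgeSet | v ∈ (e : Sym2 V)} ≤ H.degree v := by
  rw [← H.card_incidenceFinset_eq_degree]
  exact card_le_card_of_injOn Subtype.val
    (fun e he => mem_coe.mpr ((H.mem_incidenceFinset v e).mpr ⟨e.2, (mem_filter.mp he).2⟩))
    Subtype.val_injective.injOn

variable {J₁ J₂ : SimpleGraph (Sym2 V)} [J₁.LocallyFinite] [J₂.LocallyFinite]

/-- The edges of `H`, with colours from `Z` and the conflicts given by `J₁` and `J₂`. -/
noncomputable def listSystem (Z : Finset ℤ) {h : ℝ} (hh : 1 ≤ h)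
    (hH : ∀ v, (H.degree v : ℝ) ≤ h ^ 8) (h₁ : ∀ e, (J₁.degree e : ℝ) ≤ h ^ 4)
    (h₂ : ∀ e, (J₂.degree e : ℝ) ≤ h ^ 2) : EdgeSystem V H.edgeSet Z h where
  ends := Subtype.val
  ends_injective := Subtype.val_injective
  Conflict e c f d := ListConflict J₁ J₂ (h ^ 2) (e : Sym2 V) c f d
  conflict_symm := ListConflict.symm
  conflict_ne hconflict := Subtype.coe_ne_coe.mp hconflict.ne
  mult e f := conflictMult J₁ J₂ (h ^ 2) (e : Sym2 V) f
  mult_nonneg e f := by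
    unfold conflictMult
    positivity
  mult_symm e f := by
    unfold conflictMult
    rw [J₁.adj_comm, J₂.adj_comm]
  one_le := hh
  card_star_le v := le_trans (mod_cast card_edges_at_le_degree H v) (hH v)
  card_conflict_le e f d := card_listConflict_le (one_le_pow₀ hh) Z (e : Sym2 V) f d
  sum_mult_le e := by
    rw [show h ^ 4 = (h ^ 2) ^ 2 by ring]
    exact sum_conflictMult_le H.edgeSet (by positivity) ((h₁ e).trans_eq (by ring)) (h₂ e)
  card_conflicting_colors_le f d := by
    refine le_trans ?_ (card_abs_sub_lt_le Z d (one_le_pow₀ hh))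
    rw [Nat.cast_le]
    exact card_le_card (monotone_filter_right _ fun c _ ⟨e, he⟩ =>
      he.abs_sub_lt (one_le_pow₀ hh))

variable {H} {L : Sym2 V → Finset ℤ} {Z : Finset ℤ} {h N ε : ℝ}

/-- At most `H.degree v` edges at `v` have weight at most `1 / (H.degree v + ε * D)` each. -/
lemma sum_uniformWeight_at_le {D : ℝ} (hD : 0 < D) (hε : 0 < ε) {v : V}
    (hv : (H.degree v : ℝ) ≤ D)
    (hL : ∀ e ∈ H.edgeSet, v ∈ e → (H.degree v : ℝ) + ε * D ≤ #(L e)) (c : Z) :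
    ∑ e ∈ ({e | v ∈ (e : Sym2 V)} : Finset H.edgeSet), uniformWeight (L e) Z c ≤
      1 - ε / (1 + ε) := by
  calc ∑ e ∈ ({e | v ∈ (e : Sym2 V)} : Finset H.edgeSet), uniformWeight (L e) Z c
      ≤ #{e : H.edgeSet | v ∈ (e : Sym2 V)} • (1 / (H.degree v + ε * D)) :=
        sum_le_card_nsmul _ _ _ fun e he =>
          uniformWeight_le (by positivity) (hL e e.2 (mem_filter.mp he).2) c
    _ ≤ H.degree v * (1 / (H.degree v + ε * D)) := by
        rw [nsmul_eq_mul]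
        gcongr
        exact card_edges_at_le_degree H v
    _ ≤ 1 - ε / (1 + ε) := by
        rw [mul_one_div, one_sub_div (by positivity), add_sub_cancel_right,
          div_le_div_iff₀ (by positivity) (by positivity)]
        nlinarith

variable {hh : 1 ≤ h} {hH : ∀ v, (H.degree v : ℝ) ≤ h ^ 8} {h₁ : ∀ e, (J₁.degree e : ℝ) ≤ h ^ 4}
  {h₂ : ∀ e, (J₂.degree e : ℝ) ≤ h ^ 2}

lemma isFractionalColoring_uniformWeight (hε : 0 < ε) (hZ : ∀ e ∈ H.edgeSet, L e ⊆ Z)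
    (hL : ∀ e ∈ H.edgeSet, ∀ v ∈ e, (H.degree v : ℝ) + ε * h ^ 8 ≤ #(L e))
    (hN : ∀ e ∈ H.edgeSet, (#(L e) : ℝ) ≤ N * h ^ 8) :
    IsFractionalColoring (listSystem H Z hh hH h₁ h₂) N univ (fun e => uniformWeight (L e) Z)
      (1 - ε / (1 + ε)) (1 / ε + 1) := by
  have hpos : 0 < h ^ 8 := pow_pos (by linarith) 8
  have hcard : ∀ e : H.edgeSet, ε * h ^ 8 ≤ #(L e) := fun e =>
    (le_add_of_nonneg_left (Nat.cast_nonneg _)).trans (hL e e.2 _ (Sym2.out_fst_mem _))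
  exact {
    nonneg := fun _ => uniformWeight_nonneg
    le := fun e c => calc
      uniformWeight (L e) Z c ≤ 1 / (ε * h ^ 8) := uniformWeight_le (mul_pos hε hpos) (hcard e) c
      _ = 1 / ε / h ^ 8 := (div_div _ _ _).symm
      _ ≤ (1 / ε + 1) / h ^ 8 := by gcongr; linarith
    sum_eq_one := fun e _ => sum_uniformWeight (hZ e e.2)
      (card_pos.mp (Nat.cast_pos.mp ((mul_pos hε hpos).trans_le (hcard e))))
    eq_zero := fun e he => absurd (mem_univ e) he
    card_support_le := fun e => le_trans (mod_cast card_support_uniformWeight_le) (hN e e.2)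
    colorDegree_le := fun v c =>
      sum_uniformWeight_at_le hpos hε (hH v) (fun e he hv => hL e he v hv) c }

lemma HasColoring.exists_listColoring
    (hcol : HasColoring (listSystem H Z hh hH h₁ h₂) univ (fun e => uniformWeight (L e) Z)) :
    ∃ c : Sym2 V → ℤ, (∀ e ∈ H.edgeSet, c e ∈ L e) ∧
      (∀ e ∈ H.edgeSet, ∀ f ∈ H.edgeSet, e ≠ f → (∃ v, v ∈ e ∧ v ∈ f) → c e ≠ c f) ∧
      ∀ e ∈ H.edgeSet, ∀ f ∈ H.edgeSet, ¬ListConflict J₁ J₂ (h ^ 2) e (c e) f (c f) := by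
  obtain ⟨φ, hφ, hclash⟩ := hcol
  let ψ (e : H.edgeSet) : Z := φ ⟨e, mem_univ e⟩
  have hψ (e f : H.edgeSet) : ¬(listSystem H Z hh hH h₁ h₂).Clash e (ψ e) f (ψ f) :=
    hclash ⟨e, mem_univ e⟩ ⟨f, mem_univ f⟩
  obtain ⟨c, hc⟩ : ∃ c : Sym2 V → ℤ, ∀ e : H.edgeSet, c e = ψ e :=
    ⟨fun e => if he : e ∈ H.edgeSet then ψ ⟨e, he⟩ else 0, fun e => dif_pos e.2⟩
  refine ⟨c, fun e he => ?_, ?_, fun e he f hf hconflict => ?_⟩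
  · rw [hc ⟨e, he⟩]
    exact mem_of_uniformWeight_ne_zero (hφ ⟨⟨e, he⟩, mem_univ _⟩)
  · rintro e he f hf hne ⟨v, hve, hvf⟩ heq
    rw [hc ⟨e, he⟩, hc ⟨f, hf⟩] at heq
    exact hψ ⟨e, he⟩ ⟨f, hf⟩ (.inl ⟨⟨Subtype.coe_ne_coe.mp hne, v,
      EdgeSystem.mem_star.mpr hve, EdgeSystem.mem_star.mpr hvf⟩, Subtype.ext heq⟩)
  · rw [hc ⟨e, he⟩, hc ⟨f, hf⟩] at hconflict
    exact hψ ⟨e, he⟩ ⟨f, hf⟩ (.inr hconflict)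

end ListSystem

theorem eventually_exists_listColoring (ε : ℝ) (hε : 0 < ε) :
    ∀ᶠ h : ℝ in atTop, ∀ (V : Type*) [Finite V] (H : SimpleGraph V) [Fintype H.edgeSet]
      [H.LocallyFinite] (L : Sym2 V → Finset ℤ) (J₁ J₂ : SimpleGraph (Sym2 V)) [J₁.LocallyFinite]
      [J₂.LocallyFinite], (∀ v, (H.degree v : ℝ) ≤ h ^ 8) →
      (∀ e ∈ H.edgeSet, ∀ v ∈ e, (H.degree v : ℝ) + ε * h ^ 8 ≤ #(L e)) →
      (∀ e, (J₁.degree e : ℝ) ≤ h ^ 4) → (∀ e, (J₂.degree e : ℝ) ≤ h ^ 2) →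
      ∃ c : Sym2 V → ℤ, (∀ e ∈ H.edgeSet, c e ∈ L e) ∧
        (∀ e ∈ H.edgeSet, ∀ f ∈ H.edgeSet, e ≠ f → (∃ v, v ∈ e ∧ v ∈ f) → c e ≠ c f) ∧
        ∀ e ∈ H.edgeSet, ∀ f ∈ H.edgeSet, ¬ListConflict J₁ J₂ (h ^ 2) e (c e) f (c f) := by
  have hη : ε / (1 + ε) ≤ 1 := (div_le_one (by positivity)).mpr (by linarith)
  have hB : 1 ≤ 1 / ε + 1 := le_add_of_nonneg_left (by positivity)
  filter_upwards [eventually_ge_atTop 1,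
    eventually_hasColoring (2 + ε) _ _ (by positivity) (by positivity) hη hB]
    with h hh hcol V _ H _ _ L J₁ J₂ _ _ hH hL h₁ h₂
  choose L' hL'_sub hL'_card using fun e =>
    exists_subset_card_eq (min_le_left #(L e) ⌈(1 + ε) * h ^ 8⌉₊)
  have hceil := Nat.le_ceil ((1 + ε) * h ^ 8)
  have hceil_lt := Nat.ceil_lt_add_one (show 0 ≤ (1 + ε) * h ^ 8 by positivity)
  have hx : IsFractionalColoring
      (listSystem H (H.edgeFinset.biUnion L') hh hH h₁ h₂) (2 + ε) univ
      (fun e => uniformWeight (L' e) (H.edgeFinset.biUnion L')) (1 - ε / (1 + ε)) (1 / ε + 1) := by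
    refine isFractionalColoring_uniformWeight hε
      (fun e he => subset_biUnion_of_mem L' (H.mem_edgeFinset.mpr he)) (fun e he v hv => ?_)
      fun e _ => ?_
    · rw [hL'_card, Nat.cast_min]
      exact le_min (hL e he v hv) (by linarith [hH v])
    · rw [hL'_card, Nat.cast_min]
      linarith [min_le_right (#(L e) : ℝ) ⌈(1 + ε) * h ^ 8⌉₊, one_le_pow₀ (n := 8) hh]
  obtain ⟨c, hc, hproper⟩ := (hcol _ _ _ _ _ _ hx).exists_listColoring
  exact ⟨c, fun e he => hL'_sub e (hc e he), hproper⟩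

lemma card_cut_singleton {V : Type*} [Fintype V] [DecidableEq V] (H : SimpleGraph V)
    [DecidableRel H.Adj] (v : V) :
    #{e ∈ H.edgeFinset | #{u ∈ ({v} : Finset V) | u ∈ e} = 1} = H.degree v := by
  rw [← H.card_incidenceFinset_eq_degree, H.incidenceFinset_eq_filter]
  simp [filter_singleton, apply_ite]

lemma eventually_rpow_half_le (K : ℝ) {b : ℝ} (hb : 0 < b) :
    ∀ᶠ n : ℕ in atTop, K * (n : ℝ) ^ ((1 : ℝ) / 2) ≤ b * n := by
  have htendsto : Tendsto (fun n : ℕ => b * (n : ℝ) ^ ((1 : ℝ) / 2)) atTop atTop :=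
    ((tendsto_rpow_atTop (by norm_num)).comp tendsto_natCast_atTop_atTop).const_mul_atTop hb
  filter_upwards [htendsto.eventually_ge_atTop K] with n hn
  calc K * (n : ℝ) ^ ((1 : ℝ) / 2)
      ≤ b * (n : ℝ) ^ ((1 : ℝ) / 2) * (n : ℝ) ^ ((1 : ℝ) / 2) := by gcongr
    _ = b * n := by rw [mul_assoc, ← Real.sqrt_eq_rpow, Real.mul_self_sqrt n.cast_nonneg]

end Nibble

theorem stmt_0_general (ε : ℝ) (hε : 0 < ε) :
    ∃ Δ₀ : ℕ, ∀ Δ : ℕ, Δ₀ ≤ Δ →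
    ∀ (V : Type*) [Fintype V] [DecidableEq V] (H : SimpleGraph V) [DecidableRel H.Adj],
    (∀ v, H.degree v ≤ Δ) →
    ∀ L : Sym2 V → Finset ℤ,
    (∀ e ∈ H.edgeSet, ∀ v ∈ e, (H.degree v : ℝ) + ε * (Δ : ℝ) ≤ ((L e).card : ℝ)) →
    ∀ (J₁ J₂ : SimpleGraph (Sym2 V)) [DecidableRel J₁.Adj] [DecidableRel J₂.Adj],
    (∀ e f, J₁.Adj e f → e ∈ H.edgeSet ∧ f ∈ H.edgeSet) →
    (∀ e f, J₂.Adj e f → e ∈ H.edgeSet ∧ f ∈ H.edgeSet) →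
    (∀ e, (J₁.degree e : ℝ) ≤ (Δ : ℝ) ^ ((1 : ℝ) / 2)) →
    (∀ e, (J₂.degree e : ℝ) ≤ (Δ : ℝ) ^ ((1 : ℝ) / 4)) →
    ∃ c : Sym2 V → ℤ,
      (∀ e ∈ H.edgeSet, c e ∈ L e) ∧
      (∀ e ∈ H.edgeSet, ∀ f ∈ H.edgeSet, e ≠ f → (∃ v, v ∈ e ∧ v ∈ f) → c e ≠ c f) ∧
      (∀ e f, J₁.Adj e f → c e ≠ c f) ∧
      (∀ e f, J₂.Adj e f → (Δ : ℝ) ^ ((1 : ℝ) / 4) ≤ |(c e : ℝ) - (c f : ℝ)|) := by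
  have htendsto : Filter.Tendsto (fun n : ℕ => (n : ℝ) ^ ((1 : ℝ) / 8)) Filter.atTop Filter.atTop :=
    (tendsto_rpow_atTop (by norm_num)).comp tendsto_natCast_atTop_atTop
  obtain ⟨Δ₀, hΔ₀⟩ := Filter.eventually_atTop.mp
    (htendsto.eventually (Nibble.eventually_exists_listColoring ε hε))
  refine ⟨Δ₀, fun Δ hΔ V _ _ H _ hH L hL J₁ J₂ _ _ hE₁ hE₂ hJ₁ hJ₂ => ?_⟩
  have hpow (n : ℕ) : ((Δ : ℝ) ^ ((1 : ℝ) / 8)) ^ n = (Δ : ℝ) ^ ((n : ℝ) / 8) := by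
    rw [← Real.rpow_natCast, ← Real.rpow_mul Δ.cast_nonneg, one_div_mul_eq_div]
  have hpow8 : ((Δ : ℝ) ^ ((1 : ℝ) / 8)) ^ 8 = Δ := by rw [hpow]; norm_num
  have hpow4 : ((Δ : ℝ) ^ ((1 : ℝ) / 8)) ^ 4 = (Δ : ℝ) ^ ((1 : ℝ) / 2) := by rw [hpow]; norm_num
  have hpow2 : ((Δ : ℝ) ^ ((1 : ℝ) / 8)) ^ 2 = (Δ : ℝ) ^ ((1 : ℝ) / 4) := by rw [hpow]; norm_num
  have hcol := hΔ₀ Δ hΔ V H L J₁ J₂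
  rw [hpow8, hpow4, hpow2] at hcol
  obtain ⟨c, hcL, hproper, hconflict⟩ := hcol (fun v => mod_cast hH v) hL hJ₁ hJ₂
  refine ⟨c, hcL, hproper, fun e f hef heq => ?_, fun e f hef => ?_⟩
  · exact hconflict e (hE₁ e f hef).1 f (hE₁ e f hef).2 (.inl ⟨hef, heq⟩)
  · by_contra! hlt
    exact hconflict e (hE₂ e f hef).1 f (hE₂ e f hef).2 (.inr ⟨hef, hlt⟩)

/-- Lemma (list edge-colouring with extra conflict graphs): given lists of the
prescribed sizes on the edges of `H`, conflict graphs `J₁`, `J₂` on the edges of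
small maximum degree, and the odd-set condition, there is a proper list
edge-colouring of `H` avoiding `J₁`-conflicts and keeping colours of
`J₂`-adjacent edges at distance at least `Δ^{1/4}`. -/
theorem stmt_0 (ε : ℝ) (hε : 0 < ε) :
    ∃ Δ₀ : ℕ, ∀ Δ : ℕ, Δ₀ ≤ Δ →
    ∀ (V : Type) [Fintype V] [DecidableEq V] (H : SimpleGraph V) [DecidableRel H.Adj],
    (∀ v, H.degree v ≤ Δ) →
    ∀ L : Sym2 V → Finset ℤ,
    (∀ v w, H.Adj v w → ((L s(v, w)).card : ℤ) =
      ⌈(3 / 2 + ε) * (Δ : ℝ) - ((Δ : ℝ) - (H.degree v : ℝ))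
        - ((Δ : ℝ) - (H.degree w : ℝ)) - 3 * (Δ : ℝ) ^ ((1 : ℝ) / 2)⌉) →
    ∀ (J₁ J₂ : SimpleGraph (Sym2 V)) [DecidableRel J₁.Adj] [DecidableRel J₂.Adj],
    (∀ e f, J₁.Adj e f → e ∈ H.edgeSet ∧ f ∈ H.edgeSet) →
    (∀ e f, J₂.Adj e f → e ∈ H.edgeSet ∧ f ∈ H.edgeSet) →
    (∀ e, (J₁.degree e : ℝ) ≤ (Δ : ℝ) ^ ((1 : ℝ) / 2)) →
    (∀ e, (J₂.degree e : ℝ) ≤ (Δ : ℝ) ^ ((1 : ℝ) / 4)) →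
    (∀ X : Finset V, Odd X.card →
      (∑ v ∈ X, ((Δ : ℝ) - (H.degree v : ℝ))) -
        ((H.edgeFinset.filter (fun e => (X.filter (fun v => v ∈ e)).card = 1)).card : ℝ)
        ≤ ε * (Δ : ℝ) * (X.card : ℝ) / 10) →
    ∃ c : Sym2 V → ℤ,
      (∀ e ∈ H.edgeSet, c e ∈ L e) ∧
      (∀ e ∈ H.edgeSet, ∀ f ∈ H.edgeSet, e ≠ f → (∃ v, v ∈ e ∧ v ∈ f) → c e ≠ c f) ∧
      (∀ e f, J₁.Adj e f → c e ≠ c f) ∧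
      (∀ e f, J₂.Adj e f → (Δ : ℝ) ^ ((1 : ℝ) / 4) ≤ |(c e : ℝ) - (c f : ℝ)|) := by
  obtain ⟨Δ₁, hcol⟩ := stmt_0_general (ε / 2) (half_pos hε)
  obtain ⟨Δ₂, hsqrt⟩ := Filter.eventually_atTop.mp
    (Nibble.eventually_rpow_half_le 3 (b := 9 / 20 * ε) (by positivity))
  refine ⟨max Δ₁ Δ₂, fun Δ hΔ V _ _ H _ hH L hL J₁ J₂ _ _ hE₁ hE₂ hJ₁ hJ₂ hodd =>
    hcol Δ (le_of_max_le_left hΔ) V H hH L ?_ J₁ J₂ hE₁ hE₂ hJ₁ hJ₂⟩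
  rintro e he v ⟨w, rfl⟩
  have hcard := Int.ceil_le.mp (hL v w he).ge
  have hdegree := hodd {w} (by simp)
  rw [Nibble.card_cut_singleton, Finset.sum_singleton, Finset.card_singleton] at hdegree
  push_cast at hcard hdegree
  linarith [hsqrt Δ (le_of_max_le_right hΔ)]
end

section
/- For every real ε with 0 < ε ≤ 1/4 there exists Δ_ε such that the following holds for every integer Δ ≥ Δ_ε. Let H be a finite simple graph with vertex set V and maximum degree at most Δ, and let each edge e be assigned a finite nonempty list L(e) of colours such that for every edge e with endpoints v and w, |L(e)| ≥ (3/2 + ε)Δ − (Δ − d(v)) − (Δ − d(w)) − 3Δ^{1/2}. Suppose that for every set X ⊆ V with |X| odd, ∑_{v∈X}(Δ − d(v)) − e(X, V∖X) ≤ εΔ|X|/10. For each edge e set x_e = (1 + ε/2)/|L(e)|. Then: (i) for every vertex v, the sum of x_e over all edges e incident to v is at most 1; and (ii) for every X ⊆ V with |X| odd and |X| ≥ 3, the sum of x_e over all edges e with both endpoints in X is at most (|X| − 1)/2. (By Edmonds' characterisation of the matching polytope, these two families of inequalities say exactly that the vector (x_e) lies in the matching polytope of H.) -/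
/-!
Singletons in the odd-set condition force `d(v) ≥ (1/2 - ε/20)Δ`, so every edge `vw` has
`|L(vw)| ≥ d(v) + (9/10)εΔ` once `3√Δ ≤ εΔ/20`. Hence the vertex sums of `x` are at most
`(1 + ε/2)/(1 + 9ε/10) = 1 - δ` for some `δ > 0`, while each single `x_e` is `O(1/Δ)`, thus at
most `δ` for large `Δ`.

In a simple graph these two facts give the inequality for every nonempty `X`. If `|X| = n`, let
`s` be the sum of `x` over the edges inside `X` at a vertex `v ∈ X`. Then `s ≤ 1 - δ`, and also
`s ≤ (n - 1)δ` because there are at most `n - 1` such edges, so `n s = (n - 1)s + s ≤ n - 1`.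
Summing over `v ∈ X` counts each edge inside `X` twice.
-/

open Filter

section EdgesWithin

variable {V : Type*} [DecidableEq V] (H : SimpleGraph V) [Fintype H.edgeSet]

/-- The edges of `H` with both endpoints in `X`, encoded as the edges that contain exactly two
vertices of `X`. -/
def edgesWithin (X : Finset V) : Finset (Sym2 V) :=
  H.edgeFinset.filter (fun e => (X.filter (fun v => v ∈ e)).card = 2)

variable {H}

lemma edgesWithin_subset_edgeFinset (X : Finset V) : edgesWithin H X ⊆ H.edgeFinset :=
  Finset.filter_subset _ _

lemma mem_edgeSet_of_mem_edgesWithin {X : Finset V} {e : Sym2 V} (he : e ∈ edgesWithin H X) :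
    e ∈ H.edgeSet :=
  SimpleGraph.mem_edgeFinset.mp (edgesWithin_subset_edgeFinset X he)

lemma mem_of_mk_mem_edgesWithin {X : Finset V} {v w : V} (h : s(v, w) ∈ edgesWithin H X) :
    w ∈ X := by
  have hcard : (X.filter (fun u => u ∈ s(v, w))).card = 2 := (Finset.mem_filter.mp h).2
  have hsub : X.filter (fun u => u ∈ s(v, w)) ⊆ {v, w} := fun u hu => by
    simpa using (Finset.mem_filter.mp hu).2
  have heq : X.filter (fun u => u ∈ s(v, w)) = {v, w} :=
    Finset.eq_of_subset_of_card_le hsub (hcard ▸ Finset.card_le_two)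
  have hw : w ∈ X.filter (fun u => u ∈ s(v, w)) := by rw [heq]; simp
  exact (Finset.mem_filter.mp hw).1

lemma card_edgesWithin_filter_mem_le {X : Finset V} {v : V} (hv : v ∈ X) :
    ((edgesWithin H X).filter (fun e => v ∈ e)).card ≤ X.card - 1 := by
  rw [← Finset.card_erase_of_mem hv]
  refine (Finset.card_le_card fun e he => ?_).trans
    (Finset.card_image_le (s := X.erase v) (f := fun w => s(v, w)))
  obtain ⟨he, w, rfl⟩ := Finset.mem_filter.mp he
  have hadj : H.Adj v w := mem_edgeSet_of_mem_edgesWithin he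
  exact Finset.mem_image_of_mem _
    (Finset.mem_erase.mpr ⟨hadj.ne', mem_of_mk_mem_edgesWithin he⟩)

lemma sum_sum_edgesWithin_filter_mem (X : Finset V) (x : Sym2 V → ℝ) :
    ∑ v ∈ X, ∑ e ∈ (edgesWithin H X).filter (fun e => v ∈ e), x e =
      2 * ∑ e ∈ edgesWithin H X, x e := by
  simp_rw [Finset.sum_filter]
  rw [Finset.sum_comm, Finset.mul_sum]
  refine Finset.sum_congr rfl fun e he => ?_
  rw [← Finset.sum_filter, Finset.sum_const, (Finset.mem_filter.mp he).2, nsmul_eq_mul,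
    Nat.cast_ofNat]

theorem sum_edgesWithin_le_of_sum_incident_le {x : Sym2 V → ℝ} {δ : ℝ} (hδ : 0 ≤ δ)
    (hx₀ : ∀ e ∈ H.edgeSet, 0 ≤ x e) (hxδ : ∀ e ∈ H.edgeSet, x e ≤ δ) {X : Finset V}
    (hx : ∀ v ∈ X, ∑ e ∈ H.edgeFinset.filter (fun e => v ∈ e), x e ≤ 1 - δ)
    (hX : X.Nonempty) :
    ∑ e ∈ edgesWithin H X, x e ≤ ((X.card : ℝ) - 1) / 2 := by
  have hn : (1 : ℝ) ≤ X.card := by exact_mod_cast hX.card_pos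
  have hvertex : ∀ v ∈ X, ∑ e ∈ (edgesWithin H X).filter (fun e => v ∈ e), x e ≤
      ((X.card : ℝ) - 1) / X.card := by
    intro v hv
    set s := ∑ e ∈ (edgesWithin H X).filter (fun e => v ∈ e), x e
    have hs_degree : s ≤ 1 - δ :=
      (Finset.sum_le_sum_of_subset_of_nonneg
        (Finset.filter_subset_filter _ (edgesWithin_subset_edgeFinset X)) fun e he _ =>
          hx₀ e (SimpleGraph.mem_edgeFinset.mp (Finset.mem_filter.mp he).1)).trans (hx v hv)
    have hs_card : s ≤ ((X.card : ℝ) - 1) * δ := by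
      calc s ≤ ((edgesWithin H X).filter (fun e => v ∈ e)).card • δ :=
            Finset.sum_le_card_nsmul _ _ _ fun e he =>
              hxδ e (mem_edgeSet_of_mem_edgesWithin (Finset.mem_filter.mp he).1)
        _ ≤ (X.card - 1) • δ := by gcongr; exact card_edgesWithin_filter_mem_le hv
        _ = ((X.card : ℝ) - 1) * δ := by rw [nsmul_eq_mul, Nat.cast_pred hX.card_pos]
    rw [le_div_iff₀ (by positivity)]
    linarith [mul_le_mul_of_nonneg_left hs_degree (sub_nonneg.mpr hn)]
  have htotal : 2 * ∑ e ∈ edgesWithin H X, x e ≤ (X.card : ℝ) - 1 := by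
    calc 2 * ∑ e ∈ edgesWithin H X, x e
        = ∑ v ∈ X, ∑ e ∈ (edgesWithin H X).filter (fun e => v ∈ e), x e :=
          (sum_sum_edgesWithin_filter_mem X x).symm
      _ ≤ X.card • (((X.card : ℝ) - 1) / X.card) := Finset.sum_le_card_nsmul _ _ _ hvertex
      _ = (X.card : ℝ) - 1 := by rw [nsmul_eq_mul, mul_div_cancel₀ _ (by positivity)]
  linarith

end EdgesWithin

section Degree

variable {V : Type*} [Fintype V] [DecidableEq V] {H : SimpleGraph V} [DecidableRel H.Adj]

lemma card_edgeFinset_filter_mem (v : V) :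
    (H.edgeFinset.filter (fun e => v ∈ e)).card = H.degree v := by
  rw [← H.incidenceFinset_eq_filter v, H.card_incidenceFinset_eq_degree]

lemma card_edgeFinset_filter_card_singleton_eq_one (v : V) :
    (H.edgeFinset.filter
      (fun e => (({v} : Finset V).filter (fun u => u ∈ e)).card = 1)).card = H.degree v := by
  rw [← card_edgeFinset_filter_mem]
  congr 1
  refine Finset.filter_congr fun e _ => ?_
  by_cases hve : v ∈ e <;> simp [Finset.filter_singleton, hve]

lemma sum_incident_div_le {ℓ : Sym2 V → ℝ} {a s D : ℝ} {v : V} (ha : 0 ≤ a) (hs : 0 < s)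
    (hdeg : H.degree v ≤ D) (hℓ : ∀ w, H.Adj v w → H.degree v + s ≤ ℓ s(v, w)) :
    ∑ e ∈ H.edgeFinset.filter (fun e => v ∈ e), a / ℓ e ≤ a * (D / (D + s)) := by
  have hedge : ∀ e ∈ H.edgeFinset.filter (fun e => v ∈ e),
      a / ℓ e ≤ a / (H.degree v + s) := by
    intro e he
    obtain ⟨he, w, rfl⟩ := Finset.mem_filter.mp he
    exact div_le_div_of_nonneg_left ha (by positivity)
      (hℓ w (SimpleGraph.mem_edgeFinset.mp he))
  calc ∑ e ∈ H.edgeFinset.filter (fun e => v ∈ e), a / ℓ e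
      ≤ H.degree v • (a / (H.degree v + s)) :=
        (Finset.sum_le_card_nsmul _ _ _ hedge).trans_eq (by rw [card_edgeFinset_filter_mem])
    _ = a * (H.degree v / (H.degree v + s)) := by rw [nsmul_eq_mul]; ring
    _ ≤ a * (D / (D + s)) := by
        have hD : 0 ≤ D := (Nat.cast_nonneg _).trans hdeg
        gcongr ?_ * ?_
        rw [div_le_div_iff₀ (by positivity) (by positivity)]
        linarith [mul_le_mul_of_nonneg_right hdeg hs.le]

end Degree

lemma eventually_rpow_le_mul {p c : ℝ} (hp : p < 1) (hc : 0 < c) :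
    ∀ᶠ x : ℝ in atTop, x ^ p ≤ c * x := by
  filter_upwards [(tendsto_rpow_atTop (sub_pos.mpr hp)).eventually_ge_atTop c⁻¹,
    eventually_gt_atTop 0] with x hx hx₀
  calc x ^ p = c * (x ^ p * c⁻¹) := by field_simp
    _ ≤ c * (x ^ p * x ^ (1 - p)) := by gcongr
    _ = c * x := by rw [← Real.rpow_add hx₀, add_sub_cancel, Real.rpow_one]

theorem stmt_2_general (ε : ℝ) (hε : 0 < ε) :
    ∃ Δ₀ : ℕ, ∀ Δ : ℕ, Δ₀ ≤ Δ →
    ∀ (V : Type*) [Fintype V] [DecidableEq V] (H : SimpleGraph V) [DecidableRel H.Adj],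
    (∀ v, H.degree v ≤ Δ) →
    (∀ v, (1 / 2 - ε / 20) * (Δ : ℝ) ≤ H.degree v) →
    ∀ ℓ : Sym2 V → ℝ,
    (∀ v w, H.Adj v w →
      (3 / 2 + ε) * (Δ : ℝ) - ((Δ : ℝ) - (H.degree v : ℝ))
        - ((Δ : ℝ) - (H.degree w : ℝ)) - 3 * (Δ : ℝ) ^ ((1 : ℝ) / 2) ≤ ℓ s(v, w)) →
    (∀ v : V, ∑ e ∈ H.edgeFinset.filter (fun e => v ∈ e), (1 + ε / 2) / ℓ e ≤ 1) ∧
    (∀ X : Finset V, X.Nonempty →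
      ∑ e ∈ edgesWithin H X, (1 + ε / 2) / ℓ e ≤ ((X.card : ℝ) - 1) / 2) := by
  set δ : ℝ := 4 * ε / (10 + 9 * ε) with hδ_def
  have hδ : 0 < δ := by positivity
  have hlarge : ∀ᶠ x : ℝ in atTop, x ^ ((1 : ℝ) / 2) ≤ ε / 60 * x ∧ 0 < x ∧
      (1 + ε / 2) / (9 / 10 * ε * δ) ≤ x :=
    (eventually_rpow_le_mul (by norm_num) (by positivity)).and
      ((eventually_gt_atTop 0).and (eventually_ge_atTop _))
  obtain ⟨Δ₀, hΔ₀⟩ := eventually_atTop.mp (tendsto_natCast_atTop_atTop.eventually hlarge)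
  refine ⟨Δ₀, fun Δ hΔ V _ _ H _ hmax hmin ℓ hℓ => ?_⟩
  obtain ⟨hsqrt, hΔ_pos, hΔ_ge⟩ := hΔ₀ Δ hΔ
  have hlist : ∀ v w, H.Adj v w → H.degree v + 9 / 10 * ε * Δ ≤ ℓ s(v, w) := fun v w hvw => by
    linarith [hℓ v w hvw, hmin w]
  have hvertex : ∀ v, ∑ e ∈ H.edgeFinset.filter (fun e => v ∈ e), (1 + ε / 2) / ℓ e ≤ 1 - δ := by
    intro v
    refine (sum_incident_div_le (by positivity) (by positivity)
      (Nat.cast_le.mpr (hmax v)) (hlist v)).trans_eq ?_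
    rw [hδ_def]
    field_simp
    ring
  have hedge : ∀ e ∈ H.edgeSet, 0 ≤ (1 + ε / 2) / ℓ e ∧ (1 + ε / 2) / ℓ e ≤ δ := by
    intro e he
    induction e using Sym2.ind with | _ v w =>
    have hℓ_ge : 9 / 10 * ε * Δ ≤ ℓ s(v, w) :=
      (le_add_of_nonneg_left (Nat.cast_nonneg _)).trans (hlist v w he)
    have hℓ_pos : 0 < ℓ s(v, w) := lt_of_lt_of_le (by positivity) hℓ_ge
    refine ⟨by positivity, (div_le_iff₀ hℓ_pos).mpr ?_⟩
    rw [div_le_iff₀ (by positivity)] at hΔ_ge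
    linarith [mul_le_mul_of_nonneg_left hℓ_ge hδ.le]
  exact ⟨fun v => (hvertex v).trans (by linarith), fun X hX =>
    sum_edgesWithin_le_of_sum_incident_le hδ.le (fun e he => (hedge e he).1)
      (fun e he => (hedge e he).2) (fun v _ => hvertex v) hX⟩

/-- Lemma: under the list-size and odd-set conditions, the vector
`x_e = (1 + ε/2)/|L(e)|` satisfies Edmonds' matching-polytope inequalities. -/
theorem stmt_2 (ε : ℝ) (hε : 0 < ε) (hε' : ε ≤ 1 / 4) :
    ∃ Δ₀ : ℕ, ∀ Δ : ℕ, Δ₀ ≤ Δ →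
    ∀ (V : Type) [Fintype V] [DecidableEq V] (H : SimpleGraph V) [DecidableRel H.Adj],
    (∀ v, H.degree v ≤ Δ) →
    ∀ L : Sym2 V → Finset ℤ,
    (∀ e ∈ H.edgeSet, (L e).Nonempty) →
    (∀ v w, H.Adj v w →
      (3 / 2 + ε) * (Δ : ℝ) - ((Δ : ℝ) - (H.degree v : ℝ))
        - ((Δ : ℝ) - (H.degree w : ℝ)) - 3 * (Δ : ℝ) ^ ((1 : ℝ) / 2)
        ≤ ((L s(v, w)).card : ℝ)) →
    (∀ X : Finset V, Odd X.card →
      (∑ v ∈ X, ((Δ : ℝ) - (H.degree v : ℝ))) -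
        ((H.edgeFinset.filter (fun e => (X.filter (fun v => v ∈ e)).card = 1)).card : ℝ)
        ≤ ε * (Δ : ℝ) * (X.card : ℝ) / 10) →
    (∀ v : V, ∑ e ∈ H.edgeFinset.filter (fun e => v ∈ e),
        (1 + ε / 2) / ((L e).card : ℝ) ≤ 1) ∧
    (∀ X : Finset V, Odd X.card → 3 ≤ X.card →
      ∑ e ∈ H.edgeFinset.filter (fun e => (X.filter (fun v => v ∈ e)).card = 2),
        (1 + ε / 2) / ((L e).card : ℝ) ≤ ((X.card : ℝ) - 1) / 2) := by
  obtain ⟨Δ₀, hΔ₀⟩ := stmt_2_general ε hε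
  refine ⟨Δ₀, fun Δ hΔ V _ _ H _ hmax L _ hlist hodd => ?_⟩
  have hmin : ∀ v, (1 / 2 - ε / 20) * (Δ : ℝ) ≤ H.degree v := by
    intro v
    have hsingleton := hodd {v} (by simp)
    rw [card_edgeFinset_filter_card_singleton_eq_one, Finset.sum_singleton,
      Finset.card_singleton, Nat.cast_one] at hsingleton
    linarith
  obtain ⟨hvertex, hset⟩ := hΔ₀ Δ hΔ V H hmax hmin (fun e => (L e).card) hlist
  exact ⟨hvertex, fun X hX _ => hset X (Finset.card_pos.mp hX.pos)⟩
end

section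
/- Let G be a finite simple graph, let p, q, k be positive integers, and set t = ⌈(p−1)/q⌉ + 1. Suppose that for every assignment of finite lists L̃(v) ⊆ ℤ with |L̃(v)| ≥ k to the vertices of G there exists an L(t,1)-labelling f̃ of G with f̃(v) ∈ L̃(v) for every vertex v. Then for every assignment of finite lists L(v) ⊆ ℤ with |L(v)| ≥ q·k to the vertices of G there exists a map f with f(v) ∈ L(v) for every vertex v such that |f(u) − f(v)| ≥ p whenever u and v are adjacent in G and f(u) ≠ f(v) whenever u and v are at distance exactly two in G (i.e., f is an L(p,1)-labelling of G chosen from the lists L). This is the content of the paper's Proposition that λ^l_{p,q}(G) ≤ q·λ^l_{t,1}(G): its proof, which compresses each list L(v) to {⌈c/q⌉ : c ∈ L(v)}, applies the hypothesis, and lifts the resulting labelling back, yields exactly the stated separation of at least p on adjacent pairs and distinct labels on distance-two pairs. -/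
/-!
Replace every label `c` by the quotient `c / q`. At most `q` integers share a quotient, so a list of
size `q * k` compresses to one of size at least `k`, from which a labelling with separation `t` can
be chosen. Any lift `f` of it satisfies `q * t ≤ q * |f u / q - f v / q| < |f u - f v| + q` on
edges, and `t = ⌈(p - 1) / q⌉ + 1` is large enough to turn this into `p ≤ |f u - f v|`. The paper
compresses with `⌈c / q⌉` instead of `⌊c / q⌋`; the argument is the same.
-/

/-- An `L(p,1)`-labelling of `G`: labels of adjacent vertices differ by at least `p`, and labels of
vertices at distance two are distinct. Vertices in different components have `G.dist` equal to `0`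
and are thus unconstrained. -/
def IsDistTwoLabelling {V : Type*} (G : SimpleGraph V) (p : ℕ) (f : V → ℤ) : Prop :=
  (∀ u v, G.Adj u v → (p : ℤ) ≤ |f u - f v|) ∧ ∀ u v, G.dist u v = 2 → f u ≠ f v

/-- `G` has an `L(p,1)`-labelling from every assignment of lists of at least `k` integers to its
vertices, i.e. `λ^l_{p,1}(G) ≤ k`. -/
def DistTwoChoosable {V : Type*} (G : SimpleGraph V) (p k : ℕ) : Prop :=
  ∀ L : V → Finset ℤ, (∀ v, k ≤ (L v).card) →
    ∃ f : V → ℤ, (∀ v, f v ∈ L v) ∧ IsDistTwoLabelling G p f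

theorem mul_ediv_sub_ediv_lt {q : ℤ} (hq : 0 < q) (a b : ℤ) :
    q * (a / q - b / q) < a - b + q := by
  have ha : q * (a / q) ≤ a := Int.mul_ediv_self_le hq.ne'
  have hb : b < q * (b / q) + q := Int.lt_mul_ediv_self_add hq
  linarith

theorem mul_abs_ediv_sub_ediv_lt {q : ℤ} (hq : 0 < q) (a b : ℤ) :
    q * |a / q - b / q| < |a - b| + q := by
  rcases abs_choice (a / q - b / q) with h | h <;> rw [h]
  · linarith [mul_ediv_sub_ediv_lt hq a b, le_abs_self (a - b)]
  · linarith [mul_ediv_sub_ediv_lt hq b a, neg_abs_le (a - b)]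

theorem card_filter_ediv_eq_le {q : ℕ} (hq : 0 < q) (s : Finset ℤ) (b : ℤ) :
    {x ∈ s | x / (q : ℤ) = b}.card ≤ q := by
  have hq' : (0 : ℤ) < q := mod_cast hq
  have fiber_subset : {x ∈ s | x / (q : ℤ) = b} ⊆ Finset.Ico (q * b) (q * b + q) := by
    intro x hx
    obtain ⟨-, rfl⟩ := Finset.mem_filter.mp hx
    exact Finset.mem_Ico.mpr ⟨Int.mul_ediv_self_le hq'.ne', Int.lt_mul_ediv_self_add hq'⟩
  simpa using Finset.card_le_card fiber_subset

theorem le_card_image_ediv {q k : ℕ} (hq : 0 < q) {s : Finset ℤ} (hs : q * k ≤ s.card) :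
    k ≤ (s.image (· / (q : ℤ))).card :=
  Nat.le_of_mul_le_mul_left
    (hs.trans (Finset.card_le_mul_card_image s q fun b _ ↦ card_filter_ediv_eq_le hq s b)) hq

theorem le_mul_ceil_div {q : ℤ} (hq : 0 < q) (a : ℤ) : a ≤ q * ⌈(a : ℚ) / q⌉ := by
  have hq' : (0 : ℚ) < q := mod_cast hq
  exact_mod_cast (div_le_iff₀' hq').mp (Int.le_ceil ((a : ℚ) / q))

section

variable {V : Type*} {G : SimpleGraph V} {p q k t : ℕ}

theorem IsDistTwoLabelling.of_ediv (hq : 0 < q) (hpt : p + q ≤ q * t + 1) {f : V → ℤ}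
    (h : IsDistTwoLabelling G t fun v ↦ f v / q) : IsDistTwoLabelling G p f := by
  have hq' : (0 : ℤ) < q := mod_cast hq
  refine ⟨fun u v huv ↦ ?_, fun u v huv heq ↦ h.2 u v huv (congrArg (· / (q : ℤ)) heq)⟩
  have separated : (q : ℤ) * t < |f u - f v| + q :=
    (mul_le_mul_of_nonneg_left (h.1 u v huv) hq'.le).trans_lt
      (mul_abs_ediv_sub_ediv_lt hq' (f u) (f v))
  linarith

theorem DistTwoChoosable.mul (hq : 0 < q) (hpt : p + q ≤ q * t + 1)
    (h : DistTwoChoosable G t k) : DistTwoChoosable G p (q * k) := by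
  intro L hL
  obtain ⟨g, hgL, hg⟩ :=
    h (fun v ↦ (L v).image (· / (q : ℤ))) fun v ↦ le_card_image_ediv hq (hL v)
  choose f hfL hfg using fun v ↦ Finset.mem_image.mp (hgL v)
  obtain rfl : (fun v ↦ f v / (q : ℤ)) = g := funext hfg
  exact ⟨f, hfL, hg.of_ediv hq hpt⟩

theorem stmt_3_general (hq : 0 < q) (ht : (t : ℤ) = ⌈((p : ℚ) - 1) / (q : ℚ)⌉ + 1)
    (h : DistTwoChoosable G t k) : DistTwoChoosable G p (q * k) := by
  have hceil : (p : ℤ) - 1 ≤ q * ⌈((p : ℚ) - 1) / (q : ℚ)⌉ := by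
    simpa using le_mul_ceil_div (mod_cast hq : (0 : ℤ) < q) ((p : ℤ) - 1)
  have hpt : (p : ℤ) + q ≤ q * t + 1 := by rw [ht]; linarith
  exact h.mul hq (mod_cast hpt)

end

/-- Proposition: `λ^l_{p,q}(G) ≤ q·λ^l_{t,1}(G)` where `t = ⌈(p-1)/q⌉ + 1`,
stated in expanded form for list `L(p,1)`-type labellings chosen from lists. -/
theorem stmt_3 {V : Type*} [Fintype V] (G : SimpleGraph V)
    (p q k : ℕ) (hp : 1 ≤ p) (hq : 1 ≤ q) (hpq : q ≤ p) (hk : 1 ≤ k)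
    (t : ℕ) (ht : (t : ℤ) = ⌈((p : ℚ) - 1) / (q : ℚ)⌉ + 1)
    (hyp : ∀ L' : V → Finset ℤ, (∀ v, k ≤ (L' v).card) →
      ∃ f : V → ℤ, (∀ v, f v ∈ L' v) ∧
        (∀ u v, G.Adj u v → (t : ℤ) ≤ |f u - f v|) ∧
        (∀ u v, G.dist u v = 2 → f u ≠ f v)) :
    ∀ L : V → Finset ℤ, (∀ v, q * k ≤ (L v).card) →
      ∃ f : V → ℤ, (∀ v, f v ∈ L v) ∧
        (∀ u v, G.Adj u v → (p : ℤ) ≤ |f u - f v|) ∧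
        (∀ u v, G.dist u v = 2 → f u ≠ f v) :=
  stmt_3_general hq ht hyp
end

section
/- For every integer k ≥ 1 define the graph G_k as follows: its vertices are x, y, z together with vertices u_1,…,u_k, v_1,…,v_k and w_1,…,w_{k−1}; each u_i is adjacent exactly to z and x, each v_i is adjacent exactly to z and y, each w_i is adjacent exactly to x and y, and in addition x and y are adjacent (there are no other edges). Then G_k has maximum degree exactly 2k, and the 3k+1 vertices other than z are pairwise at distance at most 2 in G_k; consequently the square G_k² contains a clique on 3k+1 = (3/2)·Δ(G_k) + 1 vertices, and hence χ(G_k²) ≥ (3/2)·Δ(G_k) + 1. -/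
open scoped Classical

/-- Wegner's example `G_k`: vertices `x = inl 0`, `y = inl 1`, `z = inl 2`,
`u_i`, `v_i` (`i < k`) and `w_i` (`i < k-1`); each `u_i` is adjacent exactly to
`z` and `x`, each `v_i` to `z` and `y`, each `w_i` to `x` and `y`, and `x` is
adjacent to `y`. -/
noncomputable def Gk (k : ℕ) :
    SimpleGraph (Fin 3 ⊕ Fin k ⊕ Fin k ⊕ Fin (k - 1)) :=
  SimpleGraph.fromRel (fun a b =>
    (a = Sum.inl 0 ∧ b = Sum.inl 1) ∨
    (∃ i : Fin k, a = Sum.inr (Sum.inl i) ∧ (b = Sum.inl 2 ∨ b = Sum.inl 0)) ∨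
    (∃ i : Fin k, a = Sum.inr (Sum.inr (Sum.inl i)) ∧ (b = Sum.inl 2 ∨ b = Sum.inl 1)) ∨
    (∃ i : Fin (k - 1), a = Sum.inr (Sum.inr (Sum.inr i)) ∧ (b = Sum.inl 0 ∨ b = Sum.inl 1)))

/-- The square of a graph: two distinct vertices are adjacent whenever they are
at distance at most two. -/
noncomputable def square {V : Type*} (G : SimpleGraph V) : SimpleGraph V :=
  SimpleGraph.fromRel (fun u v => G.Adj u v ∨ ∃ w, G.Adj u w ∧ G.Adj w v)

/-!
Every vertex of `Gk k` other than `z` lies in at least two of the three closed neighborhoods of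
`x`, `y` and `z`. By pigeonhole any two such vertices share one of these closed neighborhoods, and
a closed neighborhood is a clique in the square.
-/

section Square

variable {V : Type*} {G : SimpleGraph V}

lemma square_adj {a b : V} :
    (square G).Adj a b ↔ a ≠ b ∧ (G.Adj a b ∨ ∃ c, G.Adj a c ∧ G.Adj c b) := by
  simp only [square, SimpleGraph.fromRel_adj, G.adj_comm b, G.adj_comm _ a, and_comm, or_self]

lemma isClique_square_insert_neighborSet (G : SimpleGraph V) (c : V) :
    (square G).IsClique (insert c (G.neighborSet c)) := by
  rintro a (rfl | ha) b (rfl | hb) hab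
  · exact absurd rfl hab
  · exact square_adj.2 ⟨hab, .inl hb⟩
  · exact square_adj.2 ⟨hab, .inl ha.symm⟩
  · exact square_adj.2 ⟨hab, .inr ⟨c, ha.symm, hb⟩⟩

end Square

namespace Gk

open Finset

variable {k : ℕ}

lemma neighborFinset_x :
    (Gk k).neighborFinset (.inl 0) = disjSum {1} (disjSum univ (disjSum ∅ univ)) := by
  ext a
  rw [SimpleGraph.mem_neighborFinset]
  rcases a with c | i | i | i
  · fin_cases c <;> simp [Gk]
  all_goals simp [Gk]

lemma neighborFinset_y :
    (Gk k).neighborFinset (.inl 1) = disjSum {0} (disjSum ∅ (disjSum univ univ)) := by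
  ext a
  rw [SimpleGraph.mem_neighborFinset]
  rcases a with c | i | i | i
  · fin_cases c <;> simp [Gk]
  all_goals simp [Gk]

lemma neighborFinset_z :
    (Gk k).neighborFinset (.inl 2) = disjSum ∅ (disjSum univ (disjSum univ ∅)) := by
  ext a
  rw [SimpleGraph.mem_neighborFinset]
  rcases a with c | i | i | i
  · fin_cases c <;> simp [Gk]
  all_goals simp [Gk]

lemma neighborFinset_u (i : Fin k) :
    (Gk k).neighborFinset (.inr (.inl i)) = disjSum {2, 0} ∅ := by
  ext a
  rw [SimpleGraph.mem_neighborFinset]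
  rcases a with c | j | j | j <;> simp [Gk]

lemma neighborFinset_v (i : Fin k) :
    (Gk k).neighborFinset (.inr (.inr (.inl i))) = disjSum {2, 1} ∅ := by
  ext a
  rw [SimpleGraph.mem_neighborFinset]
  rcases a with c | j | j | j <;> simp [Gk]

lemma neighborFinset_w (i : Fin (k - 1)) :
    (Gk k).neighborFinset (.inr (.inr (.inr i))) = disjSum {0, 1} ∅ := by
  ext a
  rw [SimpleGraph.mem_neighborFinset]
  rcases a with c | j | j | j <;> simp [Gk]

lemma degree_inl (hk : 1 ≤ k) (c : Fin 3) : (Gk k).degree (.inl c) = 2 * k := by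
  have degree_x : (Gk k).degree (.inl 0) = 1 + (k + (k - 1)) := by
    simp [← SimpleGraph.card_neighborFinset_eq_degree, neighborFinset_x]
  have degree_y : (Gk k).degree (.inl 1) = 1 + (k + (k - 1)) := by
    simp [← SimpleGraph.card_neighborFinset_eq_degree, neighborFinset_y]
  have degree_z : (Gk k).degree (.inl 2) = k + k := by
    simp [← SimpleGraph.card_neighborFinset_eq_degree, neighborFinset_z]
  fin_cases c
  · exact degree_x.trans (by omega)
  · exact degree_y.trans (by omega)
  · exact degree_z.trans (two_mul k).symm

lemma degree_inr (p : Fin k ⊕ Fin k ⊕ Fin (k - 1)) : (Gk k).degree (.inr p) = 2 := by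
  rw [← SimpleGraph.card_neighborFinset_eq_degree]
  rcases p with i | i | i
  · simp [neighborFinset_u]
  · simp [neighborFinset_v]
  · simp [neighborFinset_w]

lemma maxDegree_eq (hk : 1 ≤ k) : (Gk k).maxDegree = 2 * k := by
  apply le_antisymm
  · apply SimpleGraph.maxDegree_le_of_forall_degree_le
    rintro (c | p)
    · exact (degree_inl hk c).le
    · rw [degree_inr]
      omega
  · exact degree_inl hk 0 ▸ (Gk k).degree_le_maxDegree (.inl 0)

lemma exists_forall_ne_mem_insert_neighborSet {a : Fin 3 ⊕ Fin k ⊕ Fin k ⊕ Fin (k - 1)}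
    (ha : a ≠ .inl 2) :
    ∃ c : Fin 3, ∀ d ≠ c, a ∈ insert (.inl d) ((Gk k).neighborSet (.inl d)) := by
  simp only [Set.mem_insert_iff, SimpleGraph.mem_neighborSet, ← SimpleGraph.mem_neighborFinset]
  rcases a with c | i | i | i
  · refine ⟨2, fun d hd ↦ ?_⟩
    fin_cases c <;> fin_cases d <;> simp_all [neighborFinset_x, neighborFinset_y]
  · refine ⟨1, fun d hd ↦ ?_⟩
    fin_cases d <;> simp_all [neighborFinset_x, neighborFinset_z]
  · refine ⟨0, fun d hd ↦ ?_⟩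
    fin_cases d <;> simp_all [neighborFinset_y, neighborFinset_z]
  · refine ⟨2, fun d hd ↦ ?_⟩
    fin_cases d <;> simp_all [neighborFinset_x, neighborFinset_y]

lemma isClique_square_ne_z : (square (Gk k)).IsClique {a | a ≠ .inl 2} := by
  intro a ha b hb hab
  obtain ⟨c, hc⟩ := exists_forall_ne_mem_insert_neighborSet ha
  obtain ⟨c', hc'⟩ := exists_forall_ne_mem_insert_neighborSet hb
  obtain ⟨d, hdc, hdc'⟩ : ∃ d, d ≠ c ∧ d ≠ c' :=
    Fin.exists_ne_and_ne_of_two_lt c c' (by simp)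
  exact isClique_square_insert_neighborSet (Gk k) (.inl d) (hc d hdc) (hc' d hdc') hab

lemma card_ne_z (hk : 1 ≤ k) :
    #{a : Fin 3 ⊕ Fin k ⊕ Fin k ⊕ Fin (k - 1) | a ≠ .inl 2} = 3 * k + 1 := by
  rw [filter_ne', card_erase_of_mem (mem_univ _), card_univ]
  simp only [Fintype.card_sum, Fintype.card_fin]
  omega

end Gk

theorem stmt_7 (k : ℕ) (hk : 1 ≤ k) :
    (Gk k).maxDegree = 2 * k ∧
    (square (Gk k)).IsClique {v | v ≠ Sum.inl 2} ∧
    (Finset.univ.filter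
      (fun v : Fin 3 ⊕ Fin k ⊕ Fin k ⊕ Fin (k - 1) => v ≠ Sum.inl 2)).card = 3 * k + 1 ∧
    ((3 * k + 1 : ℕ) : ℕ∞) ≤ (square (Gk k)).chromaticNumber := by
  refine ⟨Gk.maxDegree_eq hk, Gk.isClique_square_ne_z, Gk.card_ne_z hk, ?_⟩
  rw [← Gk.card_ne_z hk]
  apply SimpleGraph.IsClique.card_le_chromaticNumber
  simpa using Gk.isClique_square_ne_z
end

section
/- For an integer m ≥ 2 define the graph G_m as follows: its vertices are four pairwise disjoint sets V_1, V_2, V_3, V_4 of m vertices each, together with six further vertices x_{ij} for 1 ≤ i < j ≤ 4, and its edges are exactly those joining x_{ij} to every vertex of V_i ∪ V_j. Then G_m has maximum degree exactly 2m, and the 4m vertices of V_1 ∪ V_2 ∪ V_3 ∪ V_4 are pairwise at distance at most 2 in G_m; consequently the square G_m² contains a clique on 4m vertices and χ(G_m²) ≥ 4m = 2·Δ(G_m). -/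
open scoped Classical

/-- The graph `G_m`: four disjoint sets `V_i = {i} × Fin m` of `m` vertices and
six further vertices `x_{ij}` (`i < j`), with `x_{ij}` joined to every vertex of
`V_i ∪ V_j` and no other edges. -/
noncomputable def Gm (m : ℕ) :
    SimpleGraph ((Fin 4 × Fin m) ⊕ {p : Fin 4 × Fin 4 // p.1 < p.2}) :=
  SimpleGraph.fromRel (fun a b =>
    ∃ (i : Fin 4) (x : Fin m) (p : {p : Fin 4 × Fin 4 // p.1 < p.2}),
      a = Sum.inl (i, x) ∧ b = Sum.inr p ∧ (i = p.1.1 ∨ i = p.1.2))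

section Square

variable {V : Type*} {G : SimpleGraph V}

theorem square_adj_of_common_neighbor {u v w : V} (huv : u ≠ v) (huw : G.Adj u w)
    (hvw : G.Adj v w) : (square G).Adj u v :=
  (SimpleGraph.fromRel_adj _ _ _).2 ⟨huv, .inl (.inr ⟨w, huw, hvw.symm⟩)⟩

theorem isClique_square_of_common_neighbors {s : Set V}
    (h : ∀ u ∈ s, ∀ v ∈ s, ∃ w, G.Adj u w ∧ G.Adj v w) : (square G).IsClique s := by
  intro u hu v hv huv
  obtain ⟨w, huw, hvw⟩ := h u hu v hv
  exact square_adj_of_common_neighbor huv huw hvw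

end Square

theorem card_filter_isLeft (α β : Type*) [Fintype α] [Fintype β] :
    (Finset.univ.filter (fun v : α ⊕ β => v.isLeft = true)).card = Fintype.card α := by
  have filter_eq_map : Finset.univ.filter (fun v : α ⊕ β => v.isLeft = true) =
      Finset.univ.map Function.Embedding.inl := by
    ext (a | b) <;> simp
  rw [filter_eq_map, Finset.card_map, Finset.card_univ]

/-- The two-element subsets of a linear order, encoded as increasing pairs. They index the
vertices `x_{ij}` of `Gm`. -/
abbrev IncreasingPair (α : Type*) [LT α] := {p : α × α // p.1 < p.2}

namespace IncreasingPair

variable {α : Type*} [LinearOrder α]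

/-- The two-element set `{i, j}` encoded by the increasing pair `(i, j)`. -/
def ends (p : IncreasingPair α) : Finset α := {p.1.1, p.1.2}

/-- The increasing pair encoding the set `{i, j}`, for distinct `i` and `j` in either order. -/
def ofNe {i j : α} (h : i ≠ j) : IncreasingPair α := ⟨(min i j, max i j), min_lt_max.2 h⟩

theorem mem_ends {i : α} {p : IncreasingPair α} : i ∈ p.ends ↔ i = p.1.1 ∨ i = p.1.2 := by
  simp [ends]

theorem card_ends (p : IncreasingPair α) : p.ends.card = 2 :=
  Finset.card_pair p.2.ne

theorem mem_ends_ofNe {i j k : α} (h : i ≠ j) : k ∈ (ofNe h).ends ↔ k = i ∨ k = j := by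
  rcases h.lt_or_gt with hij | hji
  · simp [mem_ends, ofNe, hij.le]
  · simp [mem_ends, ofNe, hji.le, or_comm]

theorem eq_ofNe_of_mem_ends {i j : α} (h : i ≠ j) {p : IncreasingPair α} (hi : i ∈ p.ends)
    (hj : j ∈ p.ends) : p = ofNe h := by
  obtain ⟨⟨a, b⟩, hab⟩ := p
  rcases mem_ends.1 hi with rfl | rfl <;> rcases mem_ends.1 hj with rfl | rfl
  · exact absurd rfl h
  · simp [ofNe, le_of_lt hab]
  · simp [ofNe, le_of_lt hab]
  · exact absurd rfl h

theorem exists_mem_ends_and_mem_ends [Nontrivial α] (i j : α) :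
    ∃ p : IncreasingPair α, i ∈ p.ends ∧ j ∈ p.ends := by
  obtain rfl | hij := eq_or_ne i j
  · obtain ⟨k, hki⟩ := exists_ne i
    have hi : i ∈ (ofNe hki).ends := (mem_ends_ofNe hki).2 (.inr rfl)
    exact ⟨ofNe hki, hi, hi⟩
  · exact ⟨ofNe hij, (mem_ends_ofNe hij).2 (.inl rfl), (mem_ends_ofNe hij).2 (.inr rfl)⟩

theorem card_filter_mem_ends [Fintype α] (i : α) :
    (Finset.univ.filter (fun p : IncreasingPair α => i ∈ p.ends)).card =
      Fintype.card α - 1 := by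
  rw [← Finset.card_univ, ← Finset.card_erase_of_mem (Finset.mem_univ i)]
  symm
  refine Finset.card_bij (fun j hj => ofNe (Finset.ne_of_mem_erase hj).symm) ?_ ?_ ?_
  · intro j hj
    simp [mem_ends_ofNe]
  · intro j hj k hk heq
    have hj_mem : j ∈ (ofNe (Finset.ne_of_mem_erase hk).symm).ends := by
      rw [← heq, mem_ends_ofNe]
      exact .inr rfl
    exact ((mem_ends_ofNe _).1 hj_mem).resolve_left (Finset.ne_of_mem_erase hj)
  · intro p hp
    have hi : i ∈ p.ends := (Finset.mem_filter.1 hp).2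
    obtain ⟨j, hj, hji⟩ := Finset.exists_mem_ne (p.card_ends.symm ▸ one_lt_two) i
    exact ⟨j, Finset.mem_erase.2 ⟨hji, Finset.mem_univ j⟩,
      (eq_ofNe_of_mem_ends hji.symm hi hj).symm⟩

end IncreasingPair

namespace Gm

open IncreasingPair

variable {m : ℕ}

theorem adj_inl_inr (v : Fin 4 × Fin m) (p : IncreasingPair (Fin 4)) :
    (Gm m).Adj (.inl v) (.inr p) ↔ v.1 ∈ p.ends := by
  rw [mem_ends, Gm, SimpleGraph.fromRel_adj]
  constructor
  · rintro ⟨-, ⟨i, x, q, ⟨⟩, ⟨⟩, hv⟩ | ⟨i, x, q, ⟨⟩, -, -⟩⟩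
    exact hv
  · exact fun hv => ⟨Sum.inl_ne_inr, .inl ⟨v.1, v.2, p, rfl, rfl, hv⟩⟩

theorem not_adj_inl_inl (v w : Fin 4 × Fin m) : ¬ (Gm m).Adj (.inl v) (.inl w) := by
  simp [Gm]

theorem not_adj_inr_inr (p q : IncreasingPair (Fin 4)) : ¬ (Gm m).Adj (.inr p) (.inr q) := by
  simp [Gm]

theorem neighborFinset_inl (v : Fin 4 × Fin m) :
    (Gm m).neighborFinset (.inl v) =
      (Finset.univ.filter (fun p : IncreasingPair (Fin 4) => v.1 ∈ p.ends)).map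
        Function.Embedding.inr := by
  ext (w | p) <;> simp [not_adj_inl_inl, adj_inl_inr]

theorem neighborFinset_inr (p : IncreasingPair (Fin 4)) :
    (Gm m).neighborFinset (.inr p) =
      (p.ends ×ˢ (Finset.univ : Finset (Fin m))).map Function.Embedding.inl := by
  ext (v | q)
  · simp [SimpleGraph.adj_comm _ (Sum.inr p), adj_inl_inr]
  · simp [not_adj_inr_inr]

theorem degree_inl (v : Fin 4 × Fin m) : (Gm m).degree (.inl v) = 3 := by
  rw [← SimpleGraph.card_neighborFinset_eq_degree, neighborFinset_inl, Finset.card_map,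
    card_filter_mem_ends, Fintype.card_fin]

theorem degree_inr (p : IncreasingPair (Fin 4)) : (Gm m).degree (.inr p) = 2 * m := by
  rw [← SimpleGraph.card_neighborFinset_eq_degree, neighborFinset_inr, Finset.card_map,
    Finset.card_product, card_ends, Finset.card_fin]

theorem maxDegree_eq (hm : 2 ≤ m) : (Gm m).maxDegree = 2 * m := by
  apply le_antisymm
  · apply SimpleGraph.maxDegree_le_of_forall_degree_le
    rintro (v | p)
    · rw [degree_inl]
      lia
    · exact (degree_inr p).le
  · rw [← degree_inr (ofNe (zero_ne_one (α := Fin 4)))]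
    exact SimpleGraph.degree_le_maxDegree _ _

theorem isClique_square_isLeft (m : ℕ) : (square (Gm m)).IsClique {v | v.isLeft = true} := by
  apply isClique_square_of_common_neighbors
  intro u hu v hv
  obtain ⟨a, rfl⟩ := Sum.isLeft_iff.1 hu
  obtain ⟨b, rfl⟩ := Sum.isLeft_iff.1 hv
  obtain ⟨p, ha, hb⟩ := exists_mem_ends_and_mem_ends a.1 b.1
  exact ⟨.inr p, (adj_inl_inr a p).2 ha, (adj_inl_inr b p).2 hb⟩

end Gm

theorem stmt_8 (m : ℕ) (hm : 2 ≤ m) :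
    (Gm m).maxDegree = 2 * m ∧
    (square (Gm m)).IsClique {v | v.isLeft = true} ∧
    (Finset.univ.filter
      (fun v : (Fin 4 × Fin m) ⊕ {p : Fin 4 × Fin 4 // p.1 < p.2} =>
        v.isLeft = true)).card = 4 * m ∧
    ((4 * m : ℕ) : ℕ∞) ≤ (square (Gm m)).chromaticNumber := by
  have card_isLeft : (Finset.univ.filter
      (fun v : (Fin 4 × Fin m) ⊕ {p : Fin 4 × Fin 4 // p.1 < p.2} =>
        v.isLeft = true)).card = 4 * m := by
    rw [card_filter_isLeft, Fintype.card_prod, Fintype.card_fin, Fintype.card_fin]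
  refine ⟨Gm.maxDegree_eq hm, Gm.isClique_square_isLeft m, card_isLeft, ?_⟩
  rw [← card_isLeft]
  apply SimpleGraph.IsClique.card_le_chromaticNumber
  simpa only [Finset.coe_filter_univ] using Gm.isClique_square_isLeft m
end
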